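/- arXiv:2309.10636 — 2 statements merged into one kernel-verified Lean document; each statement's English description precedes it below -/
import Mathlib

section
/- For every finite coloring of the set of perfect squares {n² : n ∈ ℕ}: (1) there exist distinct squares x, y with the same color such that x + y is a perfect square; and (2) there exist distinct squares x, y with the same color such that x − y is a perfect square (in particular x − y > 0). -/
namespace SqCol

lemma gallai (r : ℕ) (F : Finset ℚ) (hF : F.Nonempty) : ∃ W : Finset ℚ, (0:ℚ) ∉ W ∧ ∀ C : ℚ → Fin r,
    ∃ (a d : ℚ) (i : Fin r), d ≠ 0 ∧ ∀ p ∈ F, a + d * p ∈ W ∧ C (a + d * p) = i := by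
  classical
  obtain ⟨ι, _inst, hι⟩ := Combinatorics.Line.exists_mono_in_high_dimension F (Fin r)
  let W0 : Finset ℚ := Finset.univ.image (fun v : ι → F => ∑ i, (v i : ℚ))
  obtain ⟨t, ht⟩ := Infinite.exists_notMem_finset (W0.image (fun w => -w))
  refine ⟨W0.image (fun w => t + w), ?_, ?_⟩
  · intro h
    obtain ⟨w, hw, h⟩ := Finset.mem_image.1 h
    apply ht
    refine Finset.mem_image.2 ⟨w, hw, by linarith⟩
  · intro C
    obtain ⟨l, i, hl⟩ := hι (fun v => C (t + ∑ i, (v i : ℚ)))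
    set s : Finset ι := {i | l.idxFun i = none} with hs
    let p0 : F := ⟨hF.choose, hF.choose_spec⟩
    have key : ∀ x : F, ∑ j, ((l x j : F) : ℚ)
        = (∑ j ∈ sᶜ, (((l.idxFun j).getD p0 : F) : ℚ)) + s.card * (x:ℚ) := by
      intro x
      rw [← Finset.sum_compl_add_sum s]
      congr 1
      · apply Finset.sum_congr rfl
        intro j hj
        have : l.idxFun j ≠ none := by simpa [hs] using hj
        obtain ⟨y, hy⟩ := Option.ne_none_iff_exists'.1 this
        rw [l.apply_some hy, hy]; rfl
      · rw [← nsmul_eq_mul]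
        apply Finset.sum_eq_card_nsmul
        intro j hj
        have : l.idxFun j = none := by simpa [hs] using hj
        rw [l.apply_none _ _ this]
    refine ⟨t + ∑ j ∈ sᶜ, (((l.idxFun j).getD p0 : F) : ℚ), s.card, i, ?_, ?_⟩
    · obtain ⟨j, hj⟩ := l.proper
      have : s.Nonempty := ⟨j, by simpa [hs] using hj⟩
      have := this.card_pos
      positivity
    · intro p hp
      have h1 := key ⟨p, hp⟩
      have h2 := hl ⟨p, hp⟩
      simp only at h1 h2
      rw [h1, ← add_assoc] at h2
      refine ⟨?_, h2⟩
      refine Finset.mem_image.2 ⟨_, Finset.mem_image.2 ⟨l ⟨p, hp⟩, Finset.mem_univ _, rfl⟩, ?_⟩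
      rw [h1]; ring

lemma thm1_aux {r : ℕ} (c : ℚ → Fin r)
    (hc : ∀ x y z : ℚ, 0 < x → 0 < y → 0 < z → x^2 + y^2 = z^2 → c x ≠ c y) (n : ℕ) :
    ∃ S : Finset ℚ, ∀ (ξ l : ℚ) (D : Finset (Fin r)), ξ ∉ S → l ≠ 0 → D.card ≤ n →
      (∀ p ∈ S, ∀ q ∈ S, p ≠ q → c |l * (ξ - p) * (ξ - q) / (p - q)| ∈ D) → False := by
  classical
  induction n with
  | zero =>
    refine ⟨{0,1}, ?_⟩
    intro ξ l D _ _ hD h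
    have := h 0 (by simp) 1 (by simp) (by norm_num)
    have h0 : D = ∅ := by simpa using hD
    simp [h0] at this
  | succ n ih =>
    obtain ⟨S, hS⟩ := ih
    obtain ⟨x0, hx0⟩ : S.Nonempty := by
      by_contra h
      rw [Finset.not_nonempty_iff_eq_empty] at h
      subst h
      exact hS 0 1 ∅ (by simp) (by simp) (by simp) (by simp)
    set F : Finset ℚ := S ∪ (S ×ˢ S).image (fun p => (p.1 + p.2)/2) with hF
    obtain ⟨W, hW0, hW⟩ := gallai r F ⟨x0, by simp [hF, hx0]⟩
    refine ⟨{0} ∪ W.image (fun w => 1/w), ?_⟩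
    intro ξ l D hξ hl hD h
    have hξ0 : ξ ≠ 0 := by rintro rfl; simp at hξ
    have hξW : ∀ w ∈ W, 1/ξ - w ≠ 0 := by
      intro w hw h
      apply hξ
      simp only [Finset.mem_union, Finset.mem_image]
      right; refine ⟨w, hw, ?_⟩
      rw [← sub_eq_zero.1 h]; simp
    have hWne : ∀ w ∈ W, w ≠ 0 := fun w hw h => hW0 (h ▸ hw)
    obtain ⟨a, d, i, hd, hadi⟩ := hW (fun w => c |l * ξ^2 * (1/ξ - w)|)
    have hFS : ∀ p ∈ S, p ∈ F := fun p hp => by simp [hF, hp]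
    have hFm : ∀ p ∈ S, ∀ q ∈ S, (p+q)/2 ∈ F := fun p hp q hq => by
      simp only [hF, Finset.mem_union, Finset.mem_image]
      right; exact ⟨(p,q), by simp [hp, hq], rfl⟩
    have hi : i ∈ D := by
      obtain ⟨h1, h2⟩ := hadi x0 (hFS x0 hx0)
      rw [← h2]
      have h3 := h 0 (by simp) (1/(a+d*x0)) (by
        simp only [Finset.mem_union, Finset.mem_image]; right; exact ⟨_, h1, rfl⟩) (by
        have := hWne _ h1
        intro h; apply this; simpa using h.symm)
      convert h3 using 2
      congr 1
      have := hWne _ h1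
      field_simp
      ring
    apply hS ((1/ξ - a)/d) (l * ξ^2 * d) (D.erase i)
    · intro h
      obtain ⟨h1, h2⟩ := hadi _ (hFS _ h)
      apply hξW _ h1
      field_simp
      ring
    · positivity
    · rw [Finset.card_erase_of_mem hi]; omega
    · intro p hp q hq hpq
      obtain ⟨h1, h2⟩ := hadi _ (hFS _ hp)
      obtain ⟨h3, h4⟩ := hadi _ (hFS _ hq)
      obtain ⟨h5, h6⟩ := hadi _ (hFm _ hp _ hq)
      have e1 := hξW _ h1
      have e3 := hξW _ h3
      have e5 := hξW _ h5
      have hpq' : p - q ≠ 0 := sub_ne_zero.2 hpq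
      have hk : d * (p - q) ≠ 0 := mul_ne_zero hd hpq'
      have eq1 : l * ξ^2 * d * ((1/ξ - a)/d - p) * ((1/ξ - a)/d - q) / (p - q)
         = l * ξ^2 * (1/ξ - (a+d*p)) * (1/ξ - (a+d*q)) / (d * (p - q)) := by
        field_simp
        ring
      rw [eq1]
      refine Finset.mem_erase.2 ⟨?_, ?_⟩
      · have h6' : c |l * ξ^2 * (1/ξ - (a + d * ((p+q)/2)))| = i := h6
        rw [← h6', ne_comm]
        refine hc _ _ |l * ξ^2 * ((1/ξ - (a + d * ((p+q)/2)))^2 + (d*(p-q)/2)^2) / (d * (p-q))| ?_ ?_ ?_ ?_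
        · rw [abs_pos]; positivity
        · rw [abs_pos]; positivity
        · rw [abs_pos]; positivity
        · rw [sq_abs, sq_abs, sq_abs]
          field_simp
          ring
      · have g1 := hWne _ h1
        have g3 := hWne _ h3
        have h7 := h (1/(a+d*p)) (by
          simp only [Finset.mem_union, Finset.mem_image]; right; exact ⟨_, h1, rfl⟩)
          (1/(a+d*q)) (by
          simp only [Finset.mem_union, Finset.mem_image]; right; exact ⟨_, h3, rfl⟩) (by
          intro h
          rw [div_eq_div_iff g1 g3] at h
          apply hk; linarith)
        convert h7 using 2
        rw [← abs_neg]
        congr 1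
        have : 1 / (a + d*p) - 1/(a+d*q) = - (d * (p-q)) / ((a+d*p)*(a+d*q)) := by
          field_simp; ring
        rw [this]
        field_simp
        ring

theorem thm1 {r : ℕ} (c : ℚ → Fin r) :
    ∃ x y z : ℚ, 0 < x ∧ 0 < y ∧ 0 < z ∧ x^2 + y^2 = z^2 ∧ c x = c y := by
  by_contra h
  push Not at h
  obtain ⟨S, hS⟩ := thm1_aux c h r
  obtain ⟨ξ, hξ⟩ := Infinite.exists_notMem_finset S
  exact hS ξ 1 Finset.univ hξ (by simp) (by simp) (by simp)

lemma reduce {r : ℕ} (C : ℕ → Fin r) : ∃ c : ℚ → Fin r, ∀ x y z : ℚ, 0 < x → 0 < y → 0 < z → c x = c y →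
    ∃ (N a b d : ℕ), 0 < N ∧ (a:ℚ) = N * x ∧ (b:ℚ) = N * y ∧ (d:ℚ) = N * z ∧ C (a^2) = C (b^2) := by
  classical
  have key : ∀ q : ℚ, ∃ i : Fin r, ∀ᶠ N in (Filter.hyperfilter ℕ : Filter ℕ),
      C (((N.factorial * q : ℚ).num.natAbs)^2) = i := by
    intro q
    have := (Ultrafilter.eventually_exists_iff (f := Filter.hyperfilter ℕ) (P := fun (i : Fin r) (N : ℕ) => C (((N.factorial * q : ℚ).num.natAbs)^2) = i)).1
    exact this (Filter.Eventually.of_forall fun N => ⟨_, rfl⟩)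
  choose c hc using key
  refine ⟨c, ?_⟩
  intro x y z hx hy hz hxy
  have hgt : ∀ M : ℕ, ∀ᶠ N in (Filter.hyperfilter ℕ : Filter ℕ), M ≤ N := by
    intro M
    have : Filter.hyperfilter ℕ ≤ (Filter.atTop : Filter ℕ) := by
      rw [← Nat.cofinite_eq_atTop]; exact Filter.hyperfilter_le_cofinite
    exact this (Filter.eventually_ge_atTop M)
  obtain ⟨N, h1, h2, h3, h4, h5⟩ := ((hc x).and ((hc y).and ((hgt x.den).and ((hgt y.den).and (hgt z.den))))).exists
  have nat : ∀ q : ℚ, 0 < q → q.den ≤ N → (((N.factorial * q : ℚ).num.natAbs : ℕ) : ℚ) = N.factorial * q := by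
    intro q hq hd
    obtain ⟨k, hk⟩ := Nat.dvd_factorial q.den_pos hd
    have e : (N.factorial * q : ℚ) = ((k * q.num : ℤ) : ℚ) := by
      rw [hk]; push_cast
      rw [mul_comm (q.den:ℚ), mul_assoc, Rat.den_mul_eq_num]
    have hpos : 0 < (k * q.num : ℤ) := by
      have : (0:ℚ) < N.factorial * q := by positivity
      rw [e] at this; exact_mod_cast this
    rw [e, Rat.num_intCast]
    have : ((k * q.num : ℤ).natAbs : ℤ) = k * q.num := Int.natAbs_of_nonneg hpos.le
    rw [← Int.cast_natCast, this]
  refine ⟨N.factorial, _, _, _, N.factorial_pos, nat x hx h3, nat y hy h4, nat z hz h5, ?_⟩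
  rw [h1, h2, hxy]

theorem final_of (thm2 : ∀ {r : ℕ} (c : ℚ → Fin r), ∃ x y z : ℚ, 0 < x ∧ 0 < y ∧ 0 < z ∧ x^2 = y^2 + z^2 ∧ c x = c y)
  (r : ℕ) (C : ℕ → Fin r) : 
   (∃ x y : ℕ, (∃ k : ℕ, 0 < k ∧ x = k^2) ∧ (∃ k : ℕ, 0 < k ∧ y = k^2) ∧ x ≠ y ∧ C x = C y ∧ ∃ z : ℕ, 0 < z ∧ x + y = z^2) ∧
   (∃ x y : ℕ, (∃ k : ℕ, 0 < k ∧ x = k^2) ∧ (∃ k : ℕ, 0 < k ∧ y = k^2) ∧ x ≠ y ∧ C x = C y ∧ ∃ z : ℕ, 0 < z ∧ x = y + z^2) := by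
  obtain ⟨c, hc⟩ := reduce C
  have pos : ∀ (a N : ℕ) (x : ℚ), 0 < N → 0 < x → (a:ℚ) = N * x → 0 < a := by
    intro a N x hN hx h
    have : (0:ℚ) < a := by rw [h]; positivity
    exact_mod_cast this
  constructor
  · obtain ⟨x, y, z, hx, hy, hz, h, hcc⟩ := thm1 c
    obtain ⟨N, a, b, d, hN, ha, hb, hd, hC⟩ := hc x y z hx hy hz hcc
    have e : a^2 + b^2 = d^2 := by
      have : (a:ℚ)^2 + b^2 = d^2 := by rw [ha, hb, hd]; linear_combination (N:ℚ)^2 * h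
      exact_mod_cast this
    refine ⟨a^2, b^2, ⟨a, pos _ _ _ hN hx ha, rfl⟩, ⟨b, pos _ _ _ hN hy hb, rfl⟩, ?_, hC, d, pos _ _ _ hN hz hd, e⟩
    intro hab
    rw [← hab] at e
    have ha0 := pos _ _ _ hN hx ha
    have : Irrational (Real.sqrt 2) := irrational_sqrt_two
    apply this
    refine ⟨(d:ℚ)/a, ?_⟩
    symm
    rw [Real.sqrt_eq_iff_mul_self_eq (by norm_num) (by positivity)]
    push_cast
    have e' : (a:ℝ)^2 + a^2 = d^2 := by exact_mod_cast e
    field_simp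
    linarith
  · obtain ⟨x, y, z, hx, hy, hz, h, hcc⟩ := thm2 c
    obtain ⟨N, a, b, d, hN, ha, hb, hd, hC⟩ := hc x y z hx hy hz hcc
    have e : a^2 = b^2 + d^2 := by
      have : (a:ℚ)^2 = b^2 + d^2 := by rw [ha, hb, hd]; linear_combination (N:ℚ)^2 * h
      exact_mod_cast this
    have hd0 := pos _ _ _ hN hz hd
    refine ⟨a^2, b^2, ⟨a, pos _ _ _ hN hx ha, rfl⟩, ⟨b, pos _ _ _ hN hy hb, rfl⟩, ?_, hC, d, hd0, e⟩
    intro hab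
    have : 0 < d^2 := by positivity
    omega

end SqCol

namespace SqCol
open Filter Topology

def Bd {X : Type} (f : X → ℝ) : Prop := ∃ C : ℝ, ∀ x, |f x| ≤ C

lemma Bd.of_le {X : Type} {f : X → ℝ} (C : ℝ) (h : ∀ x, |f x| ≤ C) : Bd f := ⟨C, h⟩
lemma Bd.const {X : Type} (c : ℝ) : Bd (fun _ : X => c) := ⟨|c|, fun _ => le_rfl⟩
lemma Bd.add {X : Type} {f g : X → ℝ} (hf : Bd f) (hg : Bd g) : Bd (fun x => f x + g x) := by
  obtain ⟨A, hA⟩ := hf; obtain ⟨B, hB⟩ := hg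
  exact ⟨A + B, fun x => (abs_add_le _ _).trans (add_le_add (hA x) (hB x))⟩
lemma Bd.neg {X : Type} {f : X → ℝ} (hf : Bd f) : Bd (fun x => - f x) := by
  obtain ⟨A, hA⟩ := hf
  exact ⟨A, fun x => by rw [abs_neg]; exact hA x⟩
lemma Bd.sub {X : Type} {f g : X → ℝ} (hf : Bd f) (hg : Bd g) : Bd (fun x => f x - g x) := by
  simpa [sub_eq_add_neg] using hf.add hg.neg
lemma Bd.mul {X : Type} {f g : X → ℝ} (hf : Bd f) (hg : Bd g) : Bd (fun x => f x * g x) := by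
  obtain ⟨A, hA⟩ := hf; obtain ⟨B, hB⟩ := hg
  exact ⟨A * B, fun x => by
    rw [abs_mul]; exact mul_le_mul (hA x) (hB x) (abs_nonneg _) ((abs_nonneg _).trans (hA x))⟩
lemma Bd.comp {X Y : Type} {f : X → ℝ} (hf : Bd f) (g : Y → X) : Bd (fun y => f (g y)) := by
  obtain ⟨A, hA⟩ := hf
  exact ⟨A, fun x => hA _⟩
lemma Bd.sum {X ι : Type} {s : Finset ι} {f : ι → X → ℝ} (hf : ∀ i ∈ s, Bd (f i)) :
    Bd (fun x => ∑ i ∈ s, f i x) := by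
  classical
  induction s using Finset.induction_on with
  | empty => simpa using Bd.const 0
  | insert i s hi ih =>
    simp only [Finset.sum_insert hi]
    exact (hf i (by simp)).add (ih fun j hj => hf j (by simp [hj]))

def bdSub (X : Type) : Submodule ℝ (X → ℝ) where
  carrier := {f | Bd f}
  add_mem' := fun ha hb => Bd.add ha hb
  zero_mem' := Bd.const 0
  smul_mem' := fun c _ hf => (Bd.const c).mul hf

structure Mn (X : Type) where
  E : (X → ℝ) →ₗ[ℝ] ℝ
  nonneg' : ∀ f, Bd f → (∀ x, 0 ≤ f x) → 0 ≤ E f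
  one' : E (fun _ => 1) = 1

namespace Mn
variable {X Y : Type}

lemma add (μ : Mn X) (f g : X → ℝ) : μ.E (fun x => f x + g x) = μ.E f + μ.E g := map_add μ.E f g
lemma sub (μ : Mn X) (f g : X → ℝ) : μ.E (fun x => f x - g x) = μ.E f - μ.E g := map_sub μ.E f g
lemma smul (μ : Mn X) (c : ℝ) (f : X → ℝ) : μ.E (fun x => c * f x) = c * μ.E f := map_smul μ.E c f
lemma mul_right (μ : Mn X) (c : ℝ) (f : X → ℝ) : μ.E (fun x => f x * c) = μ.E f * c := by
  simp only [mul_comm _ c]; exact μ.smul c f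
lemma neg (μ : Mn X) (f : X → ℝ) : μ.E (fun x => - f x) = - μ.E f := map_neg μ.E f
lemma const (μ : Mn X) (c : ℝ) : μ.E (fun _ => c) = c := by
  have := μ.smul c (fun _ => 1)
  simpa [μ.one'] using this
lemma sum (μ : Mn X) {ι : Type} (s : Finset ι) (f : ι → X → ℝ) :
    μ.E (fun x => ∑ i ∈ s, f i x) = ∑ i ∈ s, μ.E (f i) := by
  rw [← map_sum]; congr 1; ext x; simp
lemma nonneg (μ : Mn X) {f : X → ℝ} (hf : Bd f) (h : ∀ x, 0 ≤ f x) : 0 ≤ μ.E f := μ.nonneg' f hf h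
lemma mono (μ : Mn X) {f g : X → ℝ} (hf : Bd f) (hg : Bd g) (h : ∀ x, f x ≤ g x) : μ.E f ≤ μ.E g := by
  have := μ.nonneg (hg.sub hf) (fun x => sub_nonneg.2 (h x))
  rw [μ.sub] at this; linarith
lemma le_of (μ : Mn X) {f : X → ℝ} {C : ℝ} (hf : Bd f) (h : ∀ x, f x ≤ C) : μ.E f ≤ C := by
  have := μ.mono hf (Bd.const C) h
  rwa [μ.const] at this
lemma abs_le (μ : Mn X) {f : X → ℝ} {C : ℝ} (h : ∀ x, |f x| ≤ C) : |μ.E f| ≤ C := by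
  have hf : Bd f := ⟨C, h⟩
  rw [_root_.abs_le]
  constructor
  · have := μ.mono (Bd.const (-C)) hf (fun x => (_root_.abs_le.1 (h x)).1)
    rwa [μ.const] at this
  · exact μ.le_of hf (fun x => (_root_.abs_le.1 (h x)).2)
lemma congr (μ : Mn X) {f g : X → ℝ} (h : ∀ x, f x = g x) : μ.E f = μ.E g := by
  rw [show f = g from funext h]

lemma sq_le (μ : Mn X) {f : X → ℝ} (hf : Bd f) : (μ.E f)^2 ≤ μ.E (fun x => f x * f x) := by
  set e := μ.E f with he
  have h := μ.nonneg ((hf.sub (Bd.const e)).mul (hf.sub (Bd.const e))) (fun x => mul_self_nonneg _)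
  have h2 : μ.E (fun x => (f x - e) * (f x - e)) = μ.E (fun x => f x * f x) - 2 * e * μ.E f + e * e := by
    rw [← μ.smul, ← μ.sub, ← μ.const (e*e), ← μ.add]
    apply μ.congr; intro x; ring
  rw [h2, ← he] at h
  nlinarith

lemma bd_mean {f : X → Y → ℝ} {C : ℝ} (h : ∀ x y, |f x y| ≤ C) (κ : X → Mn Y) :
    Bd (fun x => (κ x).E (f x)) := ⟨C, fun x => (κ x).abs_le (h x)⟩

def bind (μ : Mn X) (κ : X → Mn Y) : Mn Y where
  E := { toFun := fun f => μ.E (fun x => (κ x).E f)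
         map_add' := fun f g => by simp only [map_add]; exact μ.add _ _
         map_smul' := fun c f => by simp only [map_smul, smul_eq_mul]; exact μ.smul _ _ }
  nonneg' := by
    intro f hf h
    obtain ⟨C, hC⟩ := id hf
    exact μ.nonneg ⟨C, fun x => (κ x).abs_le hC⟩ (fun x => (κ x).nonneg hf h)
  one' := by
    change μ.E (fun x => (κ x).E (fun _ => 1)) = 1
    simp only [(κ _).const]; exact μ.const 1

lemma bind_E (μ : Mn X) (κ : X → Mn Y) (f : Y → ℝ) : (μ.bind κ).E f = μ.E (fun x => (κ x).E f) := rfl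

def map (μ : Mn X) (g : X → Y) : Mn Y where
  E := { toFun := fun f => μ.E (fun x => f (g x))
         map_add' := fun _ _ => μ.add _ _
         map_smul' := fun _ _ => μ.smul _ _ }
  nonneg' := by
    intro f hf h
    exact μ.nonneg (hf.comp g) (fun x => h _)
  one' := μ.const 1

lemma map_E (μ : Mn X) (g : X → Y) (f : Y → ℝ) : (μ.map g).E f = μ.E (fun x => f (g x)) := rfl

def dirac (x : X) : Mn X where
  E := { toFun := fun f => f x
         map_add' := fun f g => rfl
         map_smul' := fun c f => rfl }
  nonneg' := fun f _ h => h x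
  one' := rfl

lemma exists_of (L : (X → ℝ) → ℝ) (hadd : ∀ f g, Bd f → Bd g → L (fun x => f x + g x) = L f + L g)
    (hsmul : ∀ (c : ℝ) f, Bd f → L (fun x => c * f x) = c * L f)
    (hnn : ∀ f, Bd f → (∀ x, 0 ≤ f x) → 0 ≤ L f) (hone : L (fun _ => 1) = 1) :
    ∃ ν : Mn X, ∀ f, Bd f → ν.E f = L f := by
  let L0 : bdSub X →ₗ[ℝ] ℝ :=
    { toFun := fun f => L f.1
      map_add' := fun f g => hadd _ _ f.2 g.2
      map_smul' := fun c f => hsmul _ _ f.2 }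
  obtain ⟨E, hE⟩ := LinearMap.exists_extend L0
  have hE' : ∀ f, Bd f → E f = L f := fun f hf => by
    have := LinearMap.congr_fun hE ⟨f, hf⟩
    exact this
  refine ⟨⟨E, ?_, ?_⟩, hE'⟩
  · intro f hf h; rw [hE' f hf]; exact hnn f hf h
  · rw [hE' _ (Bd.const 1)]; exact hone

lemma exists_ulim {ι : Type} (𝒰 : Ultrafilter ι) (μ : ι → Mn X) :
    ∃ ν : Mn X, ∀ f, Bd f → Tendsto (fun i => (μ i).E f) 𝒰 (𝓝 (ν.E f)) := by
  have key : ∀ f : X → ℝ, Bd f → ∃ l, Tendsto (fun i => (μ i).E f) 𝒰 (𝓝 l) := by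
    rintro f ⟨C, hC⟩
    have hc : IsCompact (Set.Icc (-C) C) := isCompact_Icc
    obtain ⟨l, _, hl⟩ := hc.ultrafilter_le_nhds' (𝒰.map (fun i => (μ i).E f)) (by
      rw [Ultrafilter.mem_map]
      filter_upwards with i
      exact _root_.abs_le.1 ((μ i).abs_le hC))
    exact ⟨l, hl⟩
  classical
  let L : (X → ℝ) → ℝ := fun f => if h : Bd f then (key f h).choose else 0
  have hL : ∀ f, Bd f → Tendsto (fun i => (μ i).E f) 𝒰 (𝓝 (L f)) := by
    intro f hf
    simp only [L, dif_pos hf]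
    exact (key f hf).choose_spec
  suffices h : ∃ ν : Mn X, ∀ f, Bd f → ν.E f = L f by
    obtain ⟨ν, hν⟩ := h
    refine ⟨ν, fun f hf => ?_⟩
    rw [hν f hf]; exact hL f hf
  apply exists_of L
  · intro f g hf hg
    refine tendsto_nhds_unique (hL _ (hf.add hg)) ?_
    simp only [Mn.add]
    exact (hL f hf).add (hL g hg)
  · intro c f hf
    refine tendsto_nhds_unique (hL _ ((Bd.const c).mul hf)) ?_
    simp only [Mn.smul]
    exact (hL f hf).const_mul c
  · intro f hf h
    exact ge_of_tendsto' (hL f hf) (fun i => (μ i).nonneg hf h)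
  · refine tendsto_nhds_unique (hL _ (Bd.const 1)) ?_
    simp only [Mn.const]
    exact tendsto_const_nhds

noncomputable def avg (μ : ℕ → Mn X) (N : ℕ) : Mn X where
  E := ((N:ℝ)+1)⁻¹ • ∑ k ∈ Finset.range (N+1), (μ k).E
  nonneg' := by
    intro f hf h
    simp only [LinearMap.smul_apply, LinearMap.sum_apply, smul_eq_mul]
    have := Finset.sum_nonneg (s := Finset.range (N+1)) (fun k _ => (μ k).nonneg hf h)
    positivity
  one' := by
    simp only [LinearMap.smul_apply, LinearMap.sum_apply, smul_eq_mul, Mn.const]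
    simp
    field_simp

lemma avg_E (μ : ℕ → Mn X) (N : ℕ) (f : X → ℝ) :
    (avg μ N).E f = ((N:ℝ)+1)⁻¹ * ∑ k ∈ Finset.range (N+1), (μ k).E f := by
  simp [avg]

lemma cesaro (μ : ℕ → Mn X) : ∃ ν : Mn X,
    (∀ f g, Bd f → Bd g → (∀ k, (μ (k+1)).E f = (μ k).E g) → ν.E f = ν.E g) ∧
    (∀ f g, Bd f → Bd g → (∀ k, (μ k).E f = (μ k).E g) → ν.E f = ν.E g) := by
  obtain ⟨ν, hν⟩ := exists_ulim (Filter.hyperfilter ℕ) (avg μ)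
  have hle : ((Filter.hyperfilter ℕ : Ultrafilter ℕ) : Filter ℕ) ≤ atTop := by
    rw [← Nat.cofinite_eq_atTop]; exact Filter.hyperfilter_le_cofinite
  refine ⟨ν, ?_, ?_⟩
  · intro f g hf hg h
    have h1 := (hν f hf).sub (hν g hg)
    have h2 : Tendsto (fun N => (avg μ N).E f - (avg μ N).E g) atTop (𝓝 0) := by
      obtain ⟨C, hC⟩ := hf
      have h3 : Tendsto (fun N : ℕ => (2 * C) / ((N:ℝ)+1)) atTop (𝓝 0) :=
        tendsto_const_div_atTop_nhds_zero_nat (2*C) |>.comp (tendsto_add_atTop_nat 1) |>.congr (by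
          intro N; simp)
      refine squeeze_zero_norm (fun N => ?_) h3
      have e : (avg μ N).E f - (avg μ N).E g = ((N:ℝ)+1)⁻¹ * ((μ 0).E f - (μ (N+1)).E f) := by
        rw [avg_E, avg_E, ← mul_sub]
        congr 1
        rw [← Finset.sum_sub_distrib]
        simp only [← h]
        rw [Finset.sum_range_sub']
      rw [e, Real.norm_eq_abs, abs_mul, abs_of_pos (by positivity : (0:ℝ) < ((N:ℝ)+1)⁻¹), div_eq_inv_mul]
      apply mul_le_mul_of_nonneg_left _ (by positivity)
      have a1 := _root_.abs_le.1 ((μ 0).abs_le hC)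
      have a2 := _root_.abs_le.1 ((μ (N+1)).abs_le hC)
      rw [_root_.abs_le]; constructor <;> linarith
    have := tendsto_nhds_unique h1 (h2.mono_left hle)
    linarith
  · intro f g hf hg h
    refine tendsto_nhds_unique (hν f hf) ((hν g hg).congr fun N => ?_)
    rw [avg_E, avg_E]; simp only [h]

lemma exists_inv (G : Type) [CommGroup G] : ∃ n : Mn G, ∀ u f, Bd f → n.E (fun g => f (u * g)) = n.E f := by
  classical
  have fin : ∀ s : Finset G, ∃ n : Mn G, ∀ u ∈ s, ∀ f, Bd f → n.E (fun g => f (u * g)) = n.E f := by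
    intro s
    induction s using Finset.induction_on with
    | empty => exact ⟨dirac 1, by simp⟩
    | insert v s _ ih =>
      obtain ⟨n, hn⟩ := ih
      obtain ⟨ν, h1, h2⟩ := cesaro (fun k => n.map (fun g => v^k * g))
      refine ⟨ν, ?_⟩
      intro u hu f hf
      rcases Finset.mem_insert.1 hu with rfl | hu
      · symm
        apply h1 _ _ hf (hf.comp _)
        intro k
        simp only [map_E, pow_succ', mul_assoc]
      · apply h2 _ _ (hf.comp _) hf
        intro k
        simp only [map_E]
        rw [← hn u hu _ (hf.comp (fun g => v^k * g))]
        apply n.congr; intro g; congr 1; exact mul_left_comm _ _ _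
  choose n hn using fin
  obtain ⟨ν, hν⟩ := exists_ulim (Ultrafilter.of (atTop : Filter (Finset G))) n
  refine ⟨ν, fun u f hf => ?_⟩
  refine tendsto_nhds_unique (hν _ (hf.comp _)) ((hν f hf).congr' ?_)
  have : ∀ᶠ s in (Ultrafilter.of (atTop : Filter (Finset G)) : Filter (Finset G)), {u} ≤ s :=
    (Ultrafilter.of_le _) (eventually_ge_atTop ({u} : Finset G))
  filter_upwards [this] with s hs
  exact (hn s u (hs (by simp)) f hf).symm

end Mn

/-- affine invariant means on `ℚ` -/
def AffInv (μ : Mn ℚ) : Prop :=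
  ∀ a b : ℚ, a ≠ 0 → ∀ f, Bd f → μ.E (fun y => f (a * y + b)) = μ.E f

lemma exists_affInv : ∃ m : Mn ℚ, AffInv m := by
  obtain ⟨m0, hm0⟩ := Mn.exists_inv (Multiplicative ℚ)
  obtain ⟨n0, hn0⟩ := Mn.exists_inv ℚˣ
  let m1 : Mn ℚ := m0.map Multiplicative.toAdd
  have hm1 : ∀ b f, Bd f → m1.E (fun y => f (y + b)) = m1.E f := by
    intro b f hf
    have := hm0 (Multiplicative.ofAdd b) (fun g => f (Multiplicative.toAdd g)) (hf.comp _)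
    simp only [m1, Mn.map_E]
    rw [← this]
    apply m0.congr; intro y; congr 1; rw [toAdd_mul, add_comm]; rfl
  refine ⟨n0.bind (fun u => m1.map (fun y => (u:ℚ) * y)), ?_⟩
  intro a b ha f hf
  simp only [Mn.bind_E, Mn.map_E]
  have hbd : Bd (fun u : ℚˣ => m1.E (fun y => f ((u:ℚ) * y))) := by
    obtain ⟨C, hC⟩ := hf
    exact ⟨C, fun u => m1.abs_le fun y => hC _⟩
  rw [← hn0 (Units.mk0 a ha) _ hbd]
  apply n0.congr
  intro u
  rw [← hm1 (b / (a * u)) _ (hf.comp (fun y => ((Units.mk0 a ha * u : ℚˣ) : ℚ) * y))]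
  apply m1.congr
  intro y
  congr 1
  have : (u:ℚ) ≠ 0 := u.ne_zero
  simp only [Units.val_mul, Units.val_mk0]
  field_simp

/-- affine-invariant means ignore points -/
lemma AffInv.point {μ : Mn ℚ} (hμ : AffInv μ) (x : ℚ) : μ.E (fun y => if y = x then 1 else 0) = 0 := by
  have hb : ∀ z : ℚ, Bd (fun y : ℚ => if y = z then (1:ℝ) else 0) := fun z => ⟨1, fun y => by dsimp only; split_ifs <;> simp⟩
  set e := μ.E (fun y => if y = x then (1:ℝ) else 0) with he
  have h0 : 0 ≤ e := μ.nonneg (hb x) (fun y => by split_ifs <;> simp)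
  have all : ∀ z : ℚ, μ.E (fun y => if y = z then (1:ℝ) else 0) = e := by
    intro z
    rw [he, ← hμ 1 (x - z) one_ne_zero _ (hb x)]
    apply μ.congr; intro y
    have : (y = z) ↔ (1 * y + (x - z) = x) := by constructor <;> intro h <;> linarith
    simp only [this]
  have bound : ∀ N : ℕ, N * e ≤ 1 := by
    intro N
    have h1 := μ.sum (Finset.range N) (fun k y => if y = (k:ℚ) then (1:ℝ) else 0)
    simp only [all, Finset.sum_const, Finset.card_range, nsmul_eq_mul] at h1
    rw [← h1]
    apply μ.le_of (Bd.sum fun (k:ℕ) _ => hb (k:ℚ))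
    intro y
    by_cases hy : ∃ k : ℕ, y = k
    · obtain ⟨k, rfl⟩ := hy
      simp only [Nat.cast_inj]
      rw [Finset.sum_ite_eq]; split_ifs <;> simp
    · push Not at hy
      rw [Finset.sum_eq_zero]; · simp
      intro k _; simp [hy k]
  by_contra hne
  have hpos : 0 < e := lt_of_le_of_ne h0 (Ne.symm hne)
  obtain ⟨N, hN⟩ := exists_nat_gt (1/e)
  rw [div_lt_iff₀ hpos] at hN
  linarith [bound N]

lemma AffInv.congr_finset {μ : Mn ℚ} (hμ : AffInv μ) (s : Finset ℚ) {f g : ℚ → ℝ} (hf : Bd f) (hg : Bd g)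
    (h : ∀ x, x ∉ s → f x = g x) : μ.E f = μ.E g := by
  have hb : ∀ z : ℚ, Bd (fun y : ℚ => if y = z then (1:ℝ) else 0) := fun z => ⟨1, fun y => by dsimp only; split_ifs <;> simp⟩
  obtain ⟨C, hC⟩ := hf.sub hg
  have hC0 : 0 ≤ C := (abs_nonneg _).trans (hC 0)
  have h1 : ∀ x, |f x - g x| ≤ C * ∑ z ∈ s, if x = z then (1:ℝ) else 0 := by
    intro x
    rw [Finset.sum_ite_eq]
    split_ifs with hx
    · simpa using hC x
    · simp [h x hx]
  have h2 : μ.E (fun x => C * ∑ z ∈ s, if x = z then (1:ℝ) else 0) = 0 := by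
    rw [μ.smul, μ.sum]
    simp [hμ.point]
  have hb2 : Bd (fun x => C * ∑ z ∈ s, if x = z then (1:ℝ) else 0) := (Bd.const C).mul (Bd.sum fun z _ => hb z)
  have h3 := μ.mono (hf.sub hg) hb2 (fun x => (abs_le.1 (h1 x)).2)
  have h4 := μ.mono hb2.neg (hf.sub hg) (fun x => (abs_le.1 (h1 x)).1)
  rw [μ.neg, h2, μ.sub] at h4
  rw [h2, μ.sub] at h3
  linarith

lemma AffInv.eq_zero_of_finite {μ : Mn ℚ} (hμ : AffInv μ) {f : ℚ → ℝ} (hf : Bd f)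
    (h : ∀ ε > 0, {x | ε < |f x|}.Finite) : μ.E f = 0 := by
  by_contra hne
  have hpos : 0 < |μ.E f| := abs_pos.2 hne
  have hfin := h (|μ.E f| / 2) (by linarith)
  have e : μ.E f = μ.E (fun x => if |μ.E f| / 2 < |f x| then 0 else f x) := by
    apply hμ.congr_finset hfin.toFinset hf
    · refine ⟨|μ.E f| / 2, fun x => ?_⟩
      dsimp only
      split_ifs with hx
      · simp; positivity
      · linarith
    · intro x hx
      have : ¬ (|μ.E f| / 2 < |f x|) := by simpa using hx
      simp [this]
  have := μ.abs_le (f := fun x => if |μ.E f| / 2 < |f x| then 0 else f x) (C := |μ.E f| / 2) (fun x => by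
      split_ifs with hx
      · simp; positivity
      · linarith)
  rw [← e] at this
  linarith

end SqCol

local notation "⟪" x "," y "⟫" => inner ℝ x y

namespace SqCol
open Filter Topology

section
variable {Ω : Type}

/-- bounded functions, as the pre-Hilbert space of a mean -/
def PreL (_ω : Mn Ω) : Type := bdSub Ω

variable (ω : Mn Ω)

noncomputable instance : AddCommGroup (PreL ω) := inferInstanceAs (AddCommGroup (bdSub Ω))
noncomputable instance : Module ℝ (PreL ω) := inferInstanceAs (Module ℝ (bdSub Ω))

/-- the pre-Hilbert core on bounded functions -/
@[reducible]
noncomputable def preCore : PreInnerProductSpace.Core ℝ (PreL ω) where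
  inner f g := ω.E (fun x => f.1 x * g.1 x)
  conj_inner_symm f g := by simp [mul_comm]
  re_inner_nonneg f := by
    simp only [RCLike.re_to_real]
    exact ω.nonneg (Bd.mul f.2 f.2) (fun x => mul_self_nonneg _)
  add_left f g h := by
    rw [← ω.add]; apply ω.congr; intro x; exact add_mul (f.1 x) (g.1 x) (h.1 x)
  smul_left f g c := by
    simp only [conj_trivial]
    rw [← ω.smul]; apply ω.congr; intro x; exact mul_assoc c (f.1 x) (g.1 x)

noncomputable instance instSN : SeminormedAddCommGroup (PreL ω) :=
  @InnerProductSpace.Core.toSeminormedAddCommGroup ℝ (PreL ω) _ _ _ (preCore ω)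
noncomputable instance instIP : InnerProductSpace ℝ (PreL ω) := InnerProductSpace.ofCore (preCore ω)

lemma preL_inner (f g : PreL ω) : inner ℝ f g = ω.E (fun x => f.1 x * g.1 x) := rfl

end

theorem gns {Ω M : Type} [CommMonoid M] (ω : Mn Ω) (act : M → Ω → Ω) (h1 : ∀ x, act 1 x = x)
    (hm : ∀ R S x, act (R * S) x = act R (act S x))
    (hinv : ∀ R f, Bd f → ω.E (fun x => f (act R x)) = ω.E f) :
    ∃ (H : Type) (_ : NormedAddCommGroup H) (_ : InnerProductSpace ℝ H) (_ : CompleteSpace H)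
      (j : bdSub Ω → H) (P : M →* (H →L[ℝ] H)),
      (∀ f g : bdSub Ω, inner ℝ (j f) (j g) = ω.E (fun x => f.1 x * g.1 x)) ∧
      (∀ R (f : bdSub Ω), P R (j f) = j ⟨fun x => f.1 (act R x), Bd.comp f.2 _⟩) ∧
      (∀ R x, ‖P R x‖ = ‖x‖) := by
  let T : M → (PreL ω →ₗ[ℝ] PreL ω) := fun R =>
    { toFun := fun f => ⟨fun x => f.1 (act R x), Bd.comp f.2 _⟩
      map_add' := fun f g => rfl
      map_smul' := fun c f => rfl }
  have hT : ∀ R f, ‖T R f‖ = ‖f‖ := by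
    intro R f
    rw [norm_eq_sqrt_real_inner, norm_eq_sqrt_real_inner, preL_inner, preL_inner]
    congr 1
    exact hinv R (fun x => f.1 x * f.1 x) (Bd.mul f.2 f.2)
  let e : PreL ω →L[ℝ] UniformSpace.Completion (PreL ω) := UniformSpace.Completion.toComplL
  have he : DenseRange e := UniformSpace.Completion.denseRange_coe
  have hen : ∀ x, ‖e x‖ = ‖x‖ := UniformSpace.Completion.norm_coe
  let TL : M → (PreL ω →L[ℝ] UniformSpace.Completion (PreL ω)) := fun R => e.comp ((T R).mkContinuous 1 (fun f => by rw [hT, one_mul]))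
  have hu : IsUniformInducing e := UniformSpace.Completion.isUniformInducing_coe _
  let P0 : M → (UniformSpace.Completion (PreL ω) →L[ℝ] UniformSpace.Completion (PreL ω)) := fun R => (TL R).extend e
  have hP0 : ∀ R f, P0 R (e f) = e (T R f) := fun R f => ContinuousLinearMap.extend_eq _ he hu f
  have cext : ∀ A B : UniformSpace.Completion (PreL ω) →L[ℝ] UniformSpace.Completion (PreL ω), (∀ f, A (e f) = B (e f)) → A = B := by
    intro A B h
    apply ContinuousLinearMap.ext
    intro x
    exact congrFun (DenseRange.equalizer he A.continuous B.continuous (funext h)) x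
  refine ⟨UniformSpace.Completion (PreL ω), inferInstance, inferInstance, inferInstance, e,
    { toFun := P0, map_one' := ?_, map_mul' := ?_ }, ?_, ?_, ?_⟩
  · apply cext
    intro f
    rw [hP0]
    change e (T 1 f) = e f
    apply congrArg e
    apply Subtype.ext
    funext x
    exact congrArg f.1 (h1 x)
  · intro R S
    apply cext
    intro f
    rw [hP0, mul_comm, ContinuousLinearMap.mul_apply, hP0, hP0]
    congr 1
    apply Subtype.ext
    funext x
    exact congrArg f.1 (hm S R x)
  · intro f g
    exact UniformSpace.Completion.inner_coe (E := PreL ω) f g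
  · intro R f; exact hP0 R f
  · intro R x
    have : (fun x => ‖P0 R x‖) = fun x => ‖x‖ :=
      DenseRange.equalizer he (P0 R).continuous.norm continuous_norm (by
        funext f
        simp only [Function.comp_apply]
        rw [hP0, hen, hen, hT])
    exact congrFun this x

/-- boundedness of vector families -/
def BdV {X H : Type} [NormedAddCommGroup H] (d : X → H) : Prop := ∃ C : ℝ, ∀ x, ‖d x‖ ≤ C

section
variable {X Y H : Type} [NormedAddCommGroup H] [InnerProductSpace ℝ H]


lemma BdV.inner {d e : X → H} (hd : BdV d) (he : BdV e) : Bd (fun x => ⟪d x, e x⟫) := by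
  obtain ⟨A, hA⟩ := hd; obtain ⟨B, hB⟩ := he
  exact ⟨A * B, fun x => (abs_real_inner_le_norm _ _).trans
    (mul_le_mul (hA x) (hB x) (norm_nonneg _) ((norm_nonneg _).trans (hA x)))⟩

lemma BdV.const (v : H) : BdV (fun _ : X => v) := ⟨‖v‖, fun _ => le_rfl⟩
lemma BdV.sub {d e : X → H} (hd : BdV d) (he : BdV e) : BdV (fun x => d x - e x) := by
  obtain ⟨A, hA⟩ := hd; obtain ⟨B, hB⟩ := he
  exact ⟨A + B, fun x => (norm_sub_le _ _).trans (add_le_add (hA x) (hB x))⟩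
lemma BdV.clm {d : X → H} (hd : BdV d) (T : H →L[ℝ] H) : BdV (fun x => T (d x)) := by
  obtain ⟨A, hA⟩ := hd
  exact ⟨‖T‖ * A, fun x => (T.le_opNorm _).trans (mul_le_mul_of_nonneg_left (hA x) (norm_nonneg _))⟩
lemma BdV.comp {d : X → H} (hd : BdV d) (g : Y → X) : BdV (fun x => d (g x)) := by
  obtain ⟨A, hA⟩ := hd
  exact ⟨A, fun x => hA _⟩

variable [CompleteSpace H]

/-- weak integrals -/
lemma exists_wint (μ : Mn X) (d : X → H) (hd : BdV d) :
    ∃ D : H, ∀ F, ⟪F, D⟫ = μ.E (fun x => ⟪F, d x⟫) := by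
  obtain ⟨C, hC⟩ := id hd
  let L : H →ₗ[ℝ] ℝ :=
    { toFun := fun F => μ.E (fun x => ⟪F, d x⟫)
      map_add' := fun F G => by rw [← μ.add]; simp only [inner_add_left]
      map_smul' := fun c F => by
        simp only [inner_smul_left, conj_trivial, RingHom.id_apply, smul_eq_mul]; exact μ.smul _ _ }
  let L' : H →L[ℝ] ℝ := L.mkContinuous C (fun F => by
    refine μ.abs_le (fun x => ?_)
    rw [mul_comm]
    exact (abs_real_inner_le_norm _ _).trans (mul_le_mul_of_nonneg_left (hC x) (norm_nonneg _)))
  refine ⟨(InnerProductSpace.toDual ℝ H).symm L', fun F => ?_⟩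
  rw [real_inner_comm, InnerProductSpace.toDual_symm_apply]
  rfl

open Classical in
noncomputable def wint (μ : Mn X) (d : X → H) : H :=
  if hd : BdV d then (exists_wint μ d hd).choose else 0

lemma wint_right (μ : Mn X) {d : X → H} (hd : BdV d) (F : H) : ⟪F, wint μ d⟫ = μ.E (fun x => ⟪F, d x⟫) := by
  simp only [wint, dif_pos hd]
  exact (exists_wint μ d hd).choose_spec F

lemma wint_left (μ : Mn X) {d : X → H} (hd : BdV d) (F : H) : ⟪wint μ d, F⟫ = μ.E (fun x => ⟪d x, F⟫) := by
  rw [real_inner_comm, wint_right μ hd]; apply μ.congr; intro x; rw [real_inner_comm]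

lemma norm_wint_le (μ : Mn X) {d : X → H} {C : ℝ} (hd : ∀ x, ‖d x‖ ≤ C) : ‖wint μ d‖ ≤ C := by
  have hb : BdV d := ⟨C, hd⟩
  set D := wint μ d
  have h1 : ‖D‖ * ‖D‖ ≤ C * ‖D‖ := by
    rw [← real_inner_self_eq_norm_mul_norm, wint_right μ hb]
    refine μ.le_of ((BdV.const _).inner hb) (fun x => ?_)
    refine (real_inner_le_norm _ _).trans ?_
    rw [mul_comm]
    exact mul_le_mul_of_nonneg_right (hd x) (norm_nonneg _)
  by_contra h
  push Not at h
  rcases (norm_nonneg D).eq_or_lt with h0 | h0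
  · rw [← h0] at h
    obtain ⟨x⟩ : Nonempty X := by
      by_contra hX
      rw [not_nonempty_iff] at hX
      have := μ.one'
      rw [show (fun _ : X => (1:ℝ)) = (fun _ => 0) from funext fun x => (hX.false x).elim, μ.const] at this
      norm_num at this
    linarith [(norm_nonneg _).trans (hd x)]
  · nlinarith

/-- weak integral of a family of contractions, as an operator -/
lemma exists_opint (μ : Mn X) (M : X → (H →L[ℝ] H)) (hM : ∀ x v, ‖M x v‖ ≤ ‖v‖) :
    ∃ T : H →L[ℝ] H, (∀ v, ‖T v‖ ≤ ‖v‖) ∧ (∀ v, T v = wint μ (fun x => M x v)) := by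
  have hb : ∀ v, BdV (fun x => M x v) := fun v => ⟨‖v‖, fun x => hM x v⟩
  let L : H →ₗ[ℝ] H :=
    { toFun := fun v => wint μ (fun x => M x v)
      map_add' := fun v w => by
        apply ext_inner_left ℝ
        intro F
        rw [inner_add_right, wint_right μ (hb _), wint_right μ (hb _), wint_right μ (hb _), ← μ.add]
        simp only [map_add, inner_add_right]
      map_smul' := fun c v => by
        apply ext_inner_left ℝ
        intro F
        simp only [RingHom.id_apply]
        rw [inner_smul_right, wint_right μ (hb _), wint_right μ (hb _), ← μ.smul]
        simp only [map_smul, inner_smul_right] }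
  refine ⟨L.mkContinuous 1 (fun v => ?_), fun v => ?_, fun v => rfl⟩
  · rw [one_mul]; exact norm_wint_le μ (fun x => hM x v)
  · exact norm_wint_le μ (fun x => hM x v)

/-- Bessel for pairwise orthogonal bounded families -/
lemma bessel {ι : Type} (s : Finset ι) (z : ι → H) (K : ℝ) (hz : ∀ i ∈ s, ‖z i‖ ≤ K)
    (ho : ∀ i ∈ s, ∀ j ∈ s, i ≠ j → ⟪z i, z j⟫ = 0) (F : H) :
    ∑ i ∈ s, ⟪F, z i⟫^2 ≤ K^2 * ‖F‖^2 := by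
  classical
  set Q := ∑ i ∈ s, ⟪F, z i⟫^2 with hQ
  set v := ∑ i ∈ s, ⟪F, z i⟫ • z i with hv
  have e1 : ⟪F, v⟫ = Q := by
    rw [hv, inner_sum, hQ]; apply Finset.sum_congr rfl
    intro i _; rw [inner_smul_right]; ring
  have e2 : ‖v‖^2 ≤ K^2 * Q := by
    rw [← real_inner_self_eq_norm_sq, hv, sum_inner, hQ, Finset.mul_sum]
    apply Finset.sum_le_sum
    intro i hi
    rw [inner_sum, Finset.sum_eq_single i]
    · rw [inner_smul_left, inner_smul_right, real_inner_self_eq_norm_sq]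
      simp only [conj_trivial]
      have h1 : ‖z i‖^2 ≤ K^2 := pow_le_pow_left₀ (norm_nonneg _) (hz i hi) 2
      have := mul_le_mul_of_nonneg_left h1 (sq_nonneg ⟪F, z i⟫)
      linarith
    · intro j hj hji
      rw [inner_smul_left, inner_smul_right, ho i hi j hj hji.symm]; simp
    · intro h; exact absurd hi h
  have hQ0 : 0 ≤ Q := Finset.sum_nonneg fun i _ => sq_nonneg _
  have e3 : Q^2 ≤ ‖F‖^2 * (K^2 * Q) := by
    rw [← e1]
    have h1 := abs_real_inner_le_norm F v
    have h2 : ⟪F, v⟫^2 ≤ (‖F‖ * ‖v‖)^2 := by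
      rw [← sq_abs]; exact pow_le_pow_left₀ (abs_nonneg _) h1 2
    refine h2.trans ?_
    rw [mul_pow, e1]
    exact mul_le_mul_of_nonneg_left e2 (sq_nonneg _)
  rcases hQ0.eq_or_lt with h0 | h0
  · rw [← h0]; positivity
  · by_contra h
    push Not at h
    nlinarith

end

end SqCol

namespace SqCol
open Filter Topology


structure Model (H : Type) [NormedAddCommGroup H] [InnerProductSpace ℝ H] where
  m : Mn ℚ
  hm : AffInv m
  φ : ℚ → ℝ
  hφ : ∀ q, |φ q| ≤ 1
  hneg : ∀ q, φ (-q) = φ q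
  P : (ℚ → ℚˣ) →* (H →L[ℝ] H)
  iso : ∀ R x, ‖P R x‖ = ‖x‖
  ξ : H
  one : H
  a : ℝ
  ha : 0 < a
  inn : ∀ R S, ⟪P R ξ, P S ξ⟫ = m.E (fun y => φ ((R y : ℚ) / (S y : ℚ)))
  inn1 : ∀ R, ⟪P R ξ, one⟫ = a
  edge : ∀ t : ℚ, t ≠ 0 → t ≠ 1 → t ≠ -1 → φ ((t^2+1)/(2*t)) = 0

def toU (q : ℚ) : ℚˣ := if h : q = 0 then 1 else Units.mk0 q h

lemma toU_coe {q : ℚ} (h : q ≠ 0) : (toU q : ℚ) = q := by simp [toU, h]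
lemma toU_unit (u : ℚˣ) : toU (u : ℚ) = u := by simp [toU]

theorem exists_model {r : ℕ} (c : ℚ → Fin r)
    (hc : ∀ x y z : ℚ, 0 < x → 0 < y → 0 < z → x^2 = y^2 + z^2 → c x ≠ c y) :
    ∃ (H : Type) (_ : NormedAddCommGroup H) (_ : InnerProductSpace ℝ H) (_ : CompleteSpace H),
      Nonempty (Model H) := by
  classical
  obtain ⟨m, hm⟩ := exists_affInv
  obtain ⟨n, hn⟩ := Mn.exists_inv ℚˣ
  let I : Fin r → ℚˣ → ℝ := fun i u => if c |(u:ℚ)| = i then 1 else 0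
  have hI0 : ∀ i u, 0 ≤ I i u := fun i u => by simp only [I]; split_ifs <;> simp
  have hI1 : ∀ i u, I i u ≤ 1 := fun i u => by simp only [I]; split_ifs <;> simp
  have hIb : ∀ i, Bd (I i) := fun i => ⟨1, fun u => abs_le.2 ⟨by linarith [hI0 i u], hI1 i u⟩⟩
  obtain ⟨i, hi⟩ : ∃ i, 0 < n.E (I i) := by
    by_contra h
    push Not at h
    have h1 := n.sum Finset.univ I
    have h2 : (fun u => ∑ i, I i u) = fun _ => 1 := by
      funext u; simp [I]
    rw [h2, n.const] at h1
    have := Finset.sum_nonpos (s := Finset.univ) (fun i _ => h i)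
    linarith
  let ω : Mn (ℚ × ℚˣ) := m.bind (fun y => n.map (fun g => (y, g)))
  have hω : ∀ f, ω.E f = m.E (fun y => n.E (fun g => f (y, g))) := fun f => rfl
  obtain ⟨H, i1, i2, i3, j, P, hj, hP, hiso⟩ := gns (M := ℚ → ℚˣ) ω (fun R x => (x.1, R x.1 * x.2))
    (fun x => by simp) (fun R S x => by simp [mul_assoc]) (fun R f hf => by
      rw [hω, hω]
      apply m.congr
      intro y
      exact hn (R y) (fun g => f (y, g)) (hf.comp _))
  let ξ : bdSub (ℚ × ℚˣ) := ⟨fun x => I i x.2, (hIb i).comp _⟩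
  let o : bdSub (ℚ × ℚˣ) := ⟨fun x => 1, Bd.const 1⟩
  refine ⟨H, i1, i2, i3, ⟨{
    m := m, hm := hm
    φ := fun q => n.E (fun g => I i (toU q * g) * I i g)
    hφ := ?_, hneg := ?_, P := P, iso := hiso, ξ := j ξ, one := j o, a := n.E (I i), ha := hi
    inn := ?_, inn1 := ?_, edge := ?_ }⟩⟩
  · intro q
    apply n.abs_le
    intro g
    rw [abs_of_nonneg (mul_nonneg (hI0 _ _) (hI0 _ _))]
    exact mul_le_one₀ (hI1 _ _) (hI0 _ _) (hI1 _ _)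
  · intro q
    apply n.congr
    intro g
    congr 1
    by_cases hq : q = 0
    · simp [hq]
    · simp only [I]
      rw [Units.val_mul, Units.val_mul, toU_coe hq, toU_coe (neg_ne_zero.2 hq), neg_mul, abs_neg]
  · intro R S
    rw [hP, hP, hj, hω]
    apply m.congr
    intro y
    have e : toU ((R y : ℚ) / (S y : ℚ)) = R y * (S y)⁻¹ := by
      rw [← toU_unit (R y * (S y)⁻¹)]; simp [div_eq_mul_inv]
    rw [e, ← hn (S y) (fun g => I i (R y * (S y)⁻¹ * g) * I i g) (((hIb i).comp _).mul (hIb i))]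
    apply n.congr
    intro g
    simp only [ξ]
    congr 2
    rw [mul_assoc, inv_mul_cancel_left]
  · intro R
    rw [hP, hj, hω]
    rw [← m.const (n.E (I i))]
    apply m.congr
    intro y
    rw [← hn (R y) _ (hIb i)]
    apply n.congr
    intro g
    simp [ξ, o]
  · intro t h0 h1 h2
    rw [← n.const 0]
    apply n.congr
    intro g
    have hs : (t^2+1)/(2*t) ≠ 0 := by
      have : t^2 + 1 ≠ 0 := by positivity
      positivity
    have hg : (g:ℚ) ≠ 0 := g.ne_zero
    simp only [I, Units.val_mul, toU_coe hs]
    have h3 : t^2 - 1 ≠ 0 := by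
      have : t^2 - 1 = (t-1)*(t+1) := by ring
      rw [this]
      refine mul_ne_zero (sub_ne_zero.2 h1) ?_
      intro h; apply h2; linarith
    have := hc |(t^2+1)/(2*t) * (g:ℚ)| |(g:ℚ)| |(t^2-1)/(2*t) * (g:ℚ)| (by rw [abs_pos]; positivity)
      (by rw [abs_pos]; positivity) (by rw [abs_pos]; positivity) (by
        rw [sq_abs, sq_abs, sq_abs]; field_simp; ring)
    by_cases hci : c |(g:ℚ)| = i
    · rw [hci] at this; rw [if_neg this, zero_mul]
    · simp [hci]

end SqCol

namespace SqCol
open Filter Topology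


lemma finite_of_sum_bound {ι : Type} (A : Set ι) (ψ : ι → ℝ) (C : ℝ)
    (h : ∀ S : Finset ι, ↑S ⊆ A → ∑ i ∈ S, ψ i ≤ C) (ε : ℝ) (hε : 0 < ε) :
    {i | i ∈ A ∧ ε < ψ i}.Finite := by
  by_contra hinf
  obtain ⟨N, hN⟩ := exists_nat_gt (C / ε)
  obtain ⟨S, hS, hc⟩ := Set.Infinite.exists_subset_card_eq hinf N
  have h1 := h S (fun i hi => (hS hi).1)
  have h2 : S.card • ε ≤ ∑ i ∈ S, ψ i := Finset.card_nsmul_le_sum _ _ _ (fun i hi => (hS hi).2.le)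
  rw [hc, nsmul_eq_mul] at h2
  rw [div_lt_iff₀ hε] at hN
  linarith

lemma bessel_finite {ι H : Type} [NormedAddCommGroup H] [InnerProductSpace ℝ H] [CompleteSpace H]
    (z : ι → H) (hz : BdV z) (ho : ∀ i j, i ≠ j → ⟪z i, z j⟫ = 0) (X : H) (ε : ℝ) (hε : 0 < ε) :
    {i | ε < |⟪X, z i⟫|}.Finite := by
  obtain ⟨K, hK⟩ := hz
  have := finite_of_sum_bound Set.univ (fun i => ⟪X, z i⟫^2) _
    (fun S _ => bessel S z K (fun i _ => hK i) (fun i _ j _ h => ho i j h) X) (ε^2) (by positivity)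
  refine this.subset ?_
  intro i hi
  refine ⟨trivial, ?_⟩
  have hi' : ε < |⟪X, z i⟫| := hi
  have h2 := pow_lt_pow_left₀ hi' hε.le (two_ne_zero)
  rwa [sq_abs] at h2

/-- the linear function `y - h`, as a unit -/
def ell (h : ℚ) : ℚ → ℚˣ := fun y => toU (y - h)
/-- constant functions -/
def cst (u : ℚˣ) : ℚ → ℚˣ := fun _ => u

lemma ell_coe {h y : ℚ} (hy : y ≠ h) : (ell h y : ℚ) = y - h := toU_coe (sub_ne_zero.2 hy)
lemma cst_mul (u v : ℚˣ) : cst (u * v) = cst u * cst v := rfl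
lemma cst_inv (u : ℚˣ) : cst (u⁻¹) = (cst u)⁻¹ := rfl
lemma cst_apply (u : ℚˣ) (y : ℚ) : cst u y = u := rfl

namespace Model
variable {H : Type} [NormedAddCommGroup H] [InnerProductSpace ℝ H] (Λ : Model H)

lemma hφb {X : Type} (f : X → ℚ) : Bd (fun x => Λ.φ (f x)) := ⟨1, fun x => Λ.hφ _⟩

lemma φ_abs {q q' : ℚ} (h : |q| = |q'|) : Λ.φ q = Λ.φ q' := by
  rcases abs_eq_abs.1 h with h | h
  · rw [h]
  · rw [h, Λ.hneg]

lemma P_mul (R S : ℚ → ℚˣ) (x : H) : Λ.P (R * S) x = Λ.P R (Λ.P S x) := by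
  rw [map_mul]; rfl
lemma P_comm (R S : ℚ → ℚˣ) (x : H) : Λ.P R (Λ.P S x) = Λ.P S (Λ.P R x) := by
  rw [← P_mul, mul_comm, P_mul]
lemma P_inv (R : ℚ → ℚˣ) (x : H) : Λ.P R⁻¹ (Λ.P R x) = x := by
  rw [← P_mul, inv_mul_cancel, map_one]; rfl
lemma P_inv' (R : ℚ → ℚˣ) (x : H) : Λ.P R (Λ.P R⁻¹ x) = x := by
  rw [← P_mul, mul_inv_cancel, map_one]; rfl

lemma inner_P (R : ℚ → ℚˣ) (x y : H) : ⟪Λ.P R x, Λ.P R y⟫ = ⟪x, y⟫ :=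
  LinearIsometry.inner_map_map (⟨(Λ.P R : H →ₗ[ℝ] H), Λ.iso R⟩ : H →ₗᵢ[ℝ] H) x y

lemma adj (R : ℚ → ℚˣ) (x y : H) : ⟪Λ.P R x, y⟫ = ⟪x, Λ.P R⁻¹ y⟫ := by
  rw [← Λ.inner_P R x, P_inv']
lemma adj' (R : ℚ → ℚˣ) (x y : H) : ⟪x, Λ.P R y⟫ = ⟪Λ.P R⁻¹ x, y⟫ := by
  rw [← Λ.inner_P R _ y, P_inv']

lemma bdV_P {X : Type} (R : X → ℚ → ℚˣ) (v : H) : BdV (fun x => Λ.P (R x) v) :=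
  ⟨‖v‖, fun x => (Λ.iso _ _).le⟩

lemma inner_aff (R S R' S' : ℚ → ℚˣ) (a b : ℚ) (ha : a ≠ 0) (s : Finset ℚ)
    (h : ∀ y, y ∉ s → |(R' y : ℚ) / (S' y : ℚ)| = |(R (a*y+b) : ℚ) / (S (a*y+b) : ℚ)|) :
    ⟪Λ.P R' Λ.ξ, Λ.P S' Λ.ξ⟫ = ⟪Λ.P R Λ.ξ, Λ.P S Λ.ξ⟫ := by
  rw [Λ.inn, Λ.inn, ← Λ.hm a b ha _ (Λ.hφb (fun y => (R y : ℚ) / (S y : ℚ)))]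
  apply Λ.hm.congr_finset s (Λ.hφb _) (Λ.hφb _)
  intro y hy
  exact Λ.φ_abs (h y hy)

variable [CompleteSpace H]

noncomputable def T : H →L[ℝ] H :=
  (exists_opint Λ.m (fun h => Λ.P (ell h)) (fun h v => (Λ.iso _ v).le)).choose
lemma T_norm (v : H) : ‖Λ.T v‖ ≤ ‖v‖ :=
  (exists_opint Λ.m (fun h => Λ.P (ell h)) (fun h v => (Λ.iso _ v).le)).choose_spec.1 v
lemma T_right (F v : H) : ⟪F, Λ.T v⟫ = Λ.m.E (fun h => ⟪F, Λ.P (ell h) v⟫) := by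
  have := (exists_opint Λ.m (fun h => Λ.P (ell h)) (fun h v => (Λ.iso _ v).le)).choose_spec.2 v
  rw [show Λ.T v = _ from this, wint_right _ (Λ.bdV_P _ _)]
lemma T_left (F v : H) : ⟪Λ.T v, F⟫ = Λ.m.E (fun h => ⟪Λ.P (ell h) v, F⟫) := by
  rw [real_inner_comm, T_right]; apply Λ.m.congr; intro h; rw [real_inner_comm]

lemma T_comm (R : ℚ → ℚˣ) (v : H) : Λ.T (Λ.P R v) = Λ.P R (Λ.T v) := by
  apply ext_inner_left ℝ
  intro F
  rw [T_right, adj', T_right]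
  apply Λ.m.congr
  intro h
  rw [P_comm, adj']

lemma orth (x x' : H) (c : ℝ)
    (hc : ∀ h h', h ≠ h' → ⟪Λ.P (ell h) x, Λ.P (ell h') x'⟫ = c) (h h' : ℚ) (hh : h ≠ h') :
    ⟪Λ.P (ell h) x - Λ.T x, Λ.P (ell h') x' - Λ.T x'⟫ = 0 := by
  have e1 : ∀ h, ⟪Λ.P (ell h) x, Λ.T x'⟫ = c := by
    intro h
    rw [T_right, ← Λ.m.const c]
    apply Λ.hm.congr_finset {h} ((BdV.const _).inner (Λ.bdV_P _ _)) (Bd.const c)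
    intro k hk
    exact hc _ _ (by simpa [eq_comm] using hk)
  have e2 : ⟪Λ.T x, Λ.P (ell h') x'⟫ = c := by
    rw [T_left, ← Λ.m.const c]
    apply Λ.hm.congr_finset {h'} ((Λ.bdV_P _ _).inner (BdV.const _)) (Bd.const c)
    intro k hk
    exact hc _ _ (by simpa using hk)
  have e3 : ⟪Λ.T x, Λ.T x'⟫ = c := by
    rw [T_left]; simp only [e1]; exact Λ.m.const c
  rw [inner_sub_left, inner_sub_right, inner_sub_right, hc h h' hh, e1, e2, e3]; ring

noncomputable def z (u : ℚˣ) (h : ℚ) : H := Λ.P (ell h) (Λ.P (cst u) Λ.ξ) - Λ.T (Λ.P (cst u) Λ.ξ)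
noncomputable def w (u : ℚˣ) (h : ℚ) : H :=
  Λ.P (ell h) (Λ.T (Λ.P (cst u) Λ.ξ)) - Λ.T (Λ.T (Λ.P (cst u) Λ.ξ))

lemma z_norm (u h) : ‖Λ.z u h‖ ≤ 2 * ‖Λ.ξ‖ := by
  refine (norm_sub_le _ _).trans ?_
  have := Λ.T_norm (Λ.P (cst u) Λ.ξ)
  rw [Λ.iso] at *
  rw [Λ.iso]
  linarith
lemma w_norm (u h) : ‖Λ.w u h‖ ≤ 2 * ‖Λ.ξ‖ := by
  refine (norm_sub_le _ _).trans ?_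
  have h1 := Λ.T_norm (Λ.P (cst u) Λ.ξ)
  have h2 := Λ.T_norm (Λ.T (Λ.P (cst u) Λ.ξ))
  rw [Λ.iso] at *
  linarith

lemma z_orth (u v : ℚˣ) (h h' : ℚ) (hh : h ≠ h') : ⟪Λ.z u h, Λ.z v h'⟫ = 0 := by
  apply Λ.orth _ _ ⟪Λ.P (ell 0) (Λ.P (cst u) Λ.ξ), Λ.P (ell 1) (Λ.P (cst v) Λ.ξ)⟫ _ h h' hh
  clear hh h h'
  intro h h' hh
  have hd : h' - h ≠ 0 := sub_ne_zero.2 hh.symm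
  simp only [← P_mul]
  symm
  apply Λ.inner_aff _ _ _ _ (h' - h) h hd {0, 1}
  intro y hy
  have hy0 : y ≠ 0 := fun h => hy (by simp [h])
  have hy1 : y ≠ 1 := fun h => hy (by simp [h])
  have hy1' := sub_ne_zero.2 hy1
  have a1 : (h' - h) * y + h ≠ h := by
    intro h; apply mul_ne_zero hd hy0; linarith
  have a2 : (h' - h) * y + h ≠ h' := by
    intro h; apply mul_ne_zero hd hy1'; linarith
  simp only [Pi.mul_apply, Units.val_mul, ell_coe hy0, ell_coe hy1, ell_coe a1, ell_coe a2, cst_apply]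
  congr 1
  have hv := v.ne_zero
  have : (h' - h) * y + h - h' = (h' - h) * (y - 1) := by ring
  rw [this]
  field_simp
  ring

lemma w_orth (u v : ℚˣ) (h h' : ℚ) (hh : h ≠ h') : ⟪Λ.w u h, Λ.w v h'⟫ = 0 := by
  have ex : ∀ h h', ⟪Λ.P (ell h) (Λ.T (Λ.P (cst u) Λ.ξ)), Λ.P (ell h') (Λ.T (Λ.P (cst v) Λ.ξ))⟫ =
      Λ.m.E (fun r => Λ.m.E (fun r' => ⟪Λ.P (ell r * ell h * cst u) Λ.ξ, Λ.P (ell r' * ell h' * cst v) Λ.ξ⟫)) := by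
    intro h h'
    simp only [← T_comm, P_mul]
    rw [T_left]
    simp only [T_right]
  apply Λ.orth _ _ ⟪Λ.P (ell 0) (Λ.T (Λ.P (cst u) Λ.ξ)), Λ.P (ell 1) (Λ.T (Λ.P (cst v) Λ.ξ))⟫ _ h h' hh
  clear hh h h'
  intro h h' hh
  have hd : h' - h ≠ 0 := sub_ne_zero.2 hh.symm
  rw [ex, ex]
  have hb : ∀ r h', Bd (fun r' => ⟪Λ.P (ell r * ell h * cst u) Λ.ξ, Λ.P (ell r' * ell h' * cst v) Λ.ξ⟫) :=
    fun r h' => (BdV.const _).inner (Λ.bdV_P _ _)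
  have hb2 : Bd (fun r => Λ.m.E (fun r' => ⟪Λ.P (ell r * ell h * cst u) Λ.ξ, Λ.P (ell r' * ell h' * cst v) Λ.ξ⟫)) := by
    refine Mn.bd_mean (C := ‖Λ.ξ‖ * ‖Λ.ξ‖) (fun r r' => ?_) _
    refine (abs_real_inner_le_norm _ _).trans ?_
    rw [Λ.iso, Λ.iso]
  rw [← Λ.hm (h' - h) h hd _ hb2]
  apply Λ.m.congr
  intro r
  rw [← Λ.hm (h' - h) h hd _ (hb _ _)]
  apply Λ.m.congr
  intro r'
  symm
  apply Λ.inner_aff _ _ _ _ (h' - h) h hd {0, 1, r, r'}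
  intro y hy
  simp only [Finset.mem_insert, Finset.mem_singleton, not_or] at hy
  obtain ⟨hy0, hy1, hyr, hyr'⟩ := hy
  have hy1' := sub_ne_zero.2 hy1
  have hyr1 := sub_ne_zero.2 hyr
  have hyr1' := sub_ne_zero.2 hyr'
  have a1 : (h' - h) * y + h ≠ h := by
    intro h; apply mul_ne_zero hd hy0; linarith
  have a2 : (h' - h) * y + h ≠ h' := by
    intro h; apply mul_ne_zero hd hy1'; linarith
  have a3 : (h' - h) * y + h ≠ (h' - h) * r + h := by
    intro h; apply mul_ne_zero hd hyr1; linarith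
  have a4 : (h' - h) * y + h ≠ (h' - h) * r' + h := by
    intro h; apply mul_ne_zero hd hyr1'; linarith
  simp only [Pi.mul_apply, Units.val_mul, ell_coe hy0, ell_coe hy1, ell_coe hyr, ell_coe hyr', ell_coe a1,
    ell_coe a2, ell_coe a3, ell_coe a4, cst_apply]
  congr 1
  have hv := v.ne_zero
  rw [show (h' - h) * y + h - h' = (h' - h) * (y - 1) by ring,
    show (h' - h) * y + h - ((h' - h) * r + h) = (h' - h) * (y - r) by ring,
    show (h' - h) * y + h - ((h' - h) * r' + h) = (h' - h) * (y - r') by ring]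
  field_simp
  ring

end Model
end SqCol

namespace SqCol
open Filter Topology


def dl (p : ℚ) : ℚ := p + 1 / p
def dU (p : ℚ) : ℚˣ := toU (dl p)

lemma dl_ne {p : ℚ} (hp : p ≠ 0) : dl p ≠ 0 := by
  have : dl p = (p^2+1)/p := by rw [dl]; field_simp
  rw [this]; positivity

def Lp (p : ℚ) : ℚ → ℚˣ := (cst (dU p)⁻¹ * ell p) * ell (-1/p)

namespace Model
variable {H : Type} [NormedAddCommGroup H] [InnerProductSpace ℝ H] (Λ : Model H) [CompleteSpace H]

noncomputable def d (p : ℚ) : H := Λ.P (Lp p) Λ.ξ - Λ.P (cst (dU p)⁻¹) (Λ.T (Λ.T Λ.ξ))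
noncomputable def d1 (p : ℚ) : H := Λ.P (cst (dU p)⁻¹ * ell p) (Λ.P (ell (-1/p)) Λ.ξ - Λ.T Λ.ξ)

lemma d_eq (p : ℚ) : Λ.d p = Λ.d1 p + Λ.w (dU p)⁻¹ p := by
  simp only [d, d1, w, Lp, map_sub, T_comm, P_mul]
  rw [Λ.P_comm (cst (dU p)⁻¹) (ell p) (Λ.T Λ.ξ)]
  abel

lemma d1_bdV : BdV Λ.d1 := by
  refine ⟨2 * ‖Λ.ξ‖, fun p => ?_⟩
  rw [d1, Λ.iso]
  refine (norm_sub_le _ _).trans ?_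
  have := Λ.T_norm Λ.ξ
  rw [Λ.iso]; linarith

lemma w_bdV {X : Type} (f : X → ℚˣ) (g : X → ℚ) : BdV (fun x => Λ.w (f x) (g x)) := ⟨_, fun _ => Λ.w_norm _ _⟩
lemma z_bdV {X : Type} (f : X → ℚˣ) (g : X → ℚ) : BdV (fun x => Λ.z (f x) (g x)) := ⟨_, fun _ => Λ.z_norm _ _⟩

lemma d_bdV : BdV Λ.d := (Λ.bdV_P _ _).sub (Λ.bdV_P _ _)

lemma part_i {μ : Mn ℚ} (hμ : AffInv μ) (X : H) : μ.E (fun p => ⟪X, Λ.w (dU p)⁻¹ p⟫) = 0 := by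
  apply hμ.eq_zero_of_finite ((BdV.const _).inner (Λ.w_bdV _ _))
  intro ε hε
  exact bessel_finite _ (Λ.w_bdV _ _) (fun i j hij => Λ.w_orth _ _ _ _ hij) X ε hε

lemma A_shift (u : ℚˣ) (S S' : ℚ → ℚˣ) (b : ℚ) (s : Finset ℚ)
    (h : ∀ y, y ∉ s → (S' y : ℚ) = (S (y + b) : ℚ)) :
    ⟪Λ.P (cst u) (Λ.T (Λ.T Λ.ξ)), Λ.P S' Λ.ξ⟫ = ⟪Λ.P (cst u) (Λ.T (Λ.T Λ.ξ)), Λ.P S Λ.ξ⟫ := by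
  have ex : ∀ S, ⟪Λ.P (cst u) (Λ.T (Λ.T Λ.ξ)), Λ.P S Λ.ξ⟫ =
      Λ.m.E (fun r => Λ.m.E (fun r' => ⟪Λ.P (ell r' * ell r * cst u) Λ.ξ, Λ.P S Λ.ξ⟫)) := by
    intro S
    simp only [← T_comm, P_mul]
    rw [T_left]
    simp only [← T_comm]
    simp only [T_left]
  have hb : ∀ r S, Bd (fun r' => ⟪Λ.P (ell r' * ell r * cst u) Λ.ξ, Λ.P S Λ.ξ⟫) :=
    fun r S => (Λ.bdV_P _ _).inner (BdV.const _)
  have hb2 : ∀ S, Bd (fun r => Λ.m.E (fun r' => ⟪Λ.P (ell r' * ell r * cst u) Λ.ξ, Λ.P S Λ.ξ⟫)) := by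
    intro S
    refine Mn.bd_mean (C := ‖Λ.ξ‖ * ‖Λ.ξ‖) (fun r r' => ?_) _
    refine (abs_real_inner_le_norm _ _).trans ?_
    rw [Λ.iso, Λ.iso]
  rw [ex, ex, ← Λ.hm 1 b one_ne_zero _ (hb2 S)]
  apply Λ.m.congr
  intro r
  rw [← Λ.hm 1 b one_ne_zero _ (hb _ S)]
  apply Λ.m.congr
  intro r'
  apply Λ.inner_aff _ _ _ _ 1 b one_ne_zero s
  intro y hy
  have e : ∀ k, ell (k + b) (y + b) = ell k y := by
    intro k; simp [ell]
  simp only [Pi.mul_apply, Units.val_mul, cst_apply, one_mul, e]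
  rw [h y hy]

lemma part_ii_eq (u : ℚˣ) {p : ℚ} (hp : p ≠ 0) : ⟪Λ.P (cst u) (Λ.T (Λ.T Λ.ξ)), Λ.d1 p⟫ =
    ⟪Λ.P (ell 0)⁻¹ (Λ.P (cst u) (Λ.T (Λ.T Λ.ξ))), Λ.z (toU (dl p))⁻¹ (- dl p)⟫ := by
  rw [← adj', d1, z, map_sub, map_sub, inner_sub_right, inner_sub_right]
  congr 1
  · simp only [← P_mul]
    symm
    apply Λ.A_shift u _ _ p ∅
    intro y _
    have e : ell (-1/p) (y + p) = ell (- dl p) y := by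
      simp only [ell, dl]; congr 1; ring
    have e2 : ell p (y + p) = ell 0 y := by simp [ell]
    simp only [Pi.mul_apply, e, e2, dU, cst_apply, Units.val_mul]
    ring
  · simp only [← T_comm, ← P_mul, T_right]
    have hb : Bd (fun h => ⟪Λ.T (Λ.T (Λ.P (cst u) Λ.ξ)), Λ.P (ell h * (cst (dU p)⁻¹ * ell p)) Λ.ξ⟫) :=
      (BdV.const _).inner (Λ.bdV_P _ _)
    rw [← Λ.hm 1 p one_ne_zero _ hb]
    apply Λ.m.congr
    intro k
    simp only [T_comm]
    symm
    apply Λ.A_shift u _ _ p ∅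
    intro y _
    have e : ell (1 * k + p) (y + p) = ell k y := by
      simp only [ell]; congr 1; ring
    have e2 : ell p (y + p) = ell 0 y := by simp [ell]
    simp only [Pi.mul_apply, e, e2, dU, cst_apply, Units.val_mul]
    ring

lemma dl_fiber (b : ℚ) : {p : ℚ | p ≠ 0 ∧ dl p = b}.Finite := by
  by_cases h : ∃ p0 : ℚ, p0 ≠ 0 ∧ dl p0 = b
  · obtain ⟨p0, h0, hb⟩ := h
    refine ({p0, 1/p0} : Finset ℚ).finite_toSet.subset ?_
    rintro p ⟨hp, hpb⟩
    have e : dl p = dl p0 := hpb.trans hb.symm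
    rw [dl, dl] at e
    field_simp at e
    have : (p - p0) * (p * p0 - 1) = 0 := by linear_combination e
    rcases mul_eq_zero.1 this with h | h
    · simp [sub_eq_zero.1 h]
    · have : p = 1 / p0 := by field_simp; linarith
      simp [this]
  · convert Set.finite_empty
    ext p
    simp only [Set.mem_setOf_eq, Set.mem_empty_iff_false, iff_false]
    intro hp; exact h ⟨p, hp⟩

lemma part_ii {μ : Mn ℚ} (hμ : AffInv μ) (u : ℚˣ) :
    μ.E (fun p => ⟪Λ.P (cst u) (Λ.T (Λ.T Λ.ξ)), Λ.d1 p⟫) = 0 := by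
  apply hμ.eq_zero_of_finite ((BdV.const _).inner Λ.d1_bdV)
  intro ε hε
  have h1 := bessel_finite (fun δ => Λ.z (toU δ)⁻¹ (- δ)) (Λ.z_bdV _ _)
    (fun i j hij => Λ.z_orth _ _ _ _ (by simpa using hij))
    (Λ.P (ell 0)⁻¹ (Λ.P (cst u) (Λ.T (Λ.T Λ.ξ)))) ε hε
  refine ((h1.biUnion (fun b _ => dl_fiber b)).union (Set.finite_singleton 0)).subset ?_
  intro p hp
  by_cases h0 : p = 0
  · right; exact h0
  · left
    simp only [Set.mem_iUnion]
    refine ⟨dl p, ?_, h0, rfl⟩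
    have hp' : ε < |⟪Λ.P (cst u) (Λ.T (Λ.T Λ.ξ)), Λ.d1 p⟫| := hp
    rw [Λ.part_ii_eq u h0] at hp'
    exact hp'

lemma core3 (a p r e k : ℚ) (ha : a ≠ 0) (he : e ≠ 0) :
    ⟪Λ.P (cst (toU (-a))⁻¹ * ell p * ell (p + a)) Λ.ξ,
      Λ.P (cst (toU (a * e))⁻¹ * ell (p + a * r) * ell (p + a * k)) Λ.ξ⟫ =
    ⟪Λ.P (ell 0 * ell 1) Λ.ξ, Λ.P (cst (toU e)⁻¹ * ell r * ell k) Λ.ξ⟫ := by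
  symm
  apply Λ.inner_aff _ _ _ _ a p ha {0, 1, r, k}
  intro y hy
  simp only [Finset.mem_insert, Finset.mem_singleton, not_or] at hy
  obtain ⟨hy0, hy1, hyr, hyk⟩ := hy
  have hy1' := sub_ne_zero.2 hy1
  have hyr' := sub_ne_zero.2 hyr
  have hyk' := sub_ne_zero.2 hyk
  have a1 : a * y + p ≠ p := by
    intro h; apply mul_ne_zero ha hy0; linarith
  have a2 : a * y + p ≠ p + a := by
    intro h; apply mul_ne_zero ha hy1'; linarith
  have a3 : a * y + p ≠ p + a * r := by
    intro h; apply mul_ne_zero ha hyr'; linarith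
  have a4 : a * y + p ≠ p + a * k := by
    intro h; apply mul_ne_zero ha hyk'; linarith
  simp only [Pi.mul_apply, Units.val_mul, ell_coe hy0, ell_coe hy1, ell_coe hyr, ell_coe hyk, ell_coe a1,
    ell_coe a2, ell_coe a3, ell_coe a4, cst_apply, Units.val_inv_eq_inv_val, toU_coe he,
    toU_coe (neg_ne_zero.2 ha), toU_coe (mul_ne_zero ha he)]
  rw [show a * y + p - p = a * y by ring,
    show a * y + p - (p + a) = a * (y - 1) by ring,
    show a * y + p - (p + a * r) = a * (y - r) by ring,
    show a * y + p - (p + a * k) = a * (y - k) by ring]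
  rw [← abs_neg]
  congr 1
  field_simp
  ring

/-- the parameter `r'` -/
def rho (p r : ℚ) : ℚ := (1 - r) * p^2 / ((1 - r) * p^2 - r)

lemma part_iii_eq {p r : ℚ} (hp : p ≠ 0) (hr : (1 - r) * p^2 - r ≠ 0) :
    ⟪Λ.P (Lp p) Λ.ξ, Λ.d1 (p + (- dl p) * r)⟫ =
    ⟪Λ.P (ell r)⁻¹ (Λ.P (ell 0 * ell 1) Λ.ξ), Λ.z (toU (r - rho p r))⁻¹ (rho p r)⟫ := by
  have ha : - dl p ≠ 0 := neg_ne_zero.2 (dl_ne hp)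
  have hp'e : p + (- dl p) * r = ((1 - r) * p^2 - r) / p := by
    rw [dl]; field_simp; ring
  have hp' : p + (- dl p) * r ≠ 0 := by rw [hp'e]; exact div_ne_zero hr hp
  have hq' : -1 / (p + (- dl p) * r) = p + (- dl p) * rho p r := by
    rw [hp'e, rho, dl]; field_simp; ring
  have hδ' : dl (p + (- dl p) * r) = (- dl p) * (r - rho p r) := by
    have : dl (p + (- dl p) * r) = (p + (- dl p) * r) - (-1 / (p + (- dl p) * r)) := by
      simp only [dl]; ring
    rw [this, hq']; ring
  have he : r - rho p r ≠ 0 := by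
    intro h
    apply dl_ne hp'
    rw [hδ', h, mul_zero]
  have hL : Lp p = cst (toU (-(- dl p)))⁻¹ * ell p * ell (p + (- dl p)) := by
    rw [Lp, dU, neg_neg]
    congr 2
    rw [dl]; ring
  rw [← adj', d1, z, map_sub, map_sub, inner_sub_right, inner_sub_right, dU, hq', hδ', hL]
  congr 1
  · simp only [← P_mul]
    rw [Λ.core3 _ p r _ _ ha he]
    congr 3
    ac_rfl
  · simp only [← T_comm, ← P_mul, T_right]
    have hb : Bd (fun h => ⟪Λ.P (cst (toU (-(- dl p)))⁻¹ * ell p * ell (p + (- dl p))) Λ.ξ,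
        Λ.P (ell h * (cst (toU ((- dl p) * (r - rho p r)))⁻¹ * ell (p + (- dl p) * r))) Λ.ξ⟫) :=
      (BdV.const _).inner (Λ.bdV_P _ _)
    rw [← Λ.hm (- dl p) p ha _ hb]
    apply Λ.m.congr
    intro k
    have := Λ.core3 _ p r _ k ha he
    convert this using 3
    · rw [add_comm p (- dl p * k)]; congr 1; ac_rfl
    · congr 1; ac_rfl

end Model
end SqCol

namespace SqCol
open Filter Topology


namespace Model
variable {H : Type} [NormedAddCommGroup H] [InnerProductSpace ℝ H] (Λ : Model H) [CompleteSpace H]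

lemma rho_inj {p p' r : ℚ} (hr0 : r ≠ 0) (hr1 : r ≠ 1) (hp : (1 - r) * p^2 - r ≠ 0)
    (hp' : (1 - r) * p'^2 - r ≠ 0) (h : rho p r = rho p' r) : p^2 = p'^2 := by
  rw [rho, rho, div_eq_div_iff hp hp'] at h
  have h1 : (1 - r) ≠ 0 := sub_ne_zero.2 hr1.symm
  have : (r * (1 - r)) * (p^2 - p'^2) = 0 := by linear_combination -h
  rcases mul_eq_zero.1 this with h | h
  · exact absurd h (mul_ne_zero hr0 h1)
  · linarith

noncomputable def tt (p p' : ℚ) : ℝ := ⟪Λ.P (Lp p) Λ.ξ, Λ.d1 p'⟫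

lemma tt_bd (p : ℚ) : Bd (Λ.tt p) := (BdV.const _).inner Λ.d1_bdV

lemma tt_unif : ∃ C, ∀ p p', |Λ.tt p p'| ≤ C := by
  obtain ⟨C, hC⟩ := Λ.d1_bdV
  refine ⟨‖Λ.ξ‖ * C, fun p p' => ?_⟩
  refine (abs_real_inner_le_norm _ _).trans ?_
  rw [Λ.iso]
  exact mul_le_mul_of_nonneg_left (hC p') (norm_nonneg _)

lemma tt_sum {μ : Mn ℚ} (hμ : AffInv μ) (S : Finset ℚ) (h0 : ∀ p ∈ S, p ≠ 0)
    (hS : ∀ p ∈ S, ∀ p' ∈ S, p^2 = p'^2 → p = p') :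
    ∑ p ∈ S, μ.E (fun p' => Λ.tt p p' * Λ.tt p p') ≤ (2 * ‖Λ.ξ‖)^2 * ‖Λ.ξ‖^2 := by
  classical
  have e1 : ∀ p ∈ S, μ.E (fun p' => Λ.tt p p' * Λ.tt p p') =
      μ.E (fun r => Λ.tt p ((- dl p) * r + p) * Λ.tt p ((- dl p) * r + p)) := by
    intro p hp
    exact (hμ (- dl p) p (neg_ne_zero.2 (dl_ne (h0 p hp))) _ ((Λ.tt_bd p).mul (Λ.tt_bd p))).symm
  rw [Finset.sum_congr rfl e1, ← μ.sum]
  have hb : Bd (fun r => ∑ p ∈ S, Λ.tt p ((- dl p) * r + p) * Λ.tt p ((- dl p) * r + p)) :=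
    Bd.sum (fun p _ => ((Λ.tt_bd p).mul (Λ.tt_bd p)).comp (fun r => (- dl p) * r + p))
  let s : Finset ℚ := {0, 1} ∪ S.image (fun p => p^2/(p^2+1))
  have hg : ∀ r, r ∉ s → ∑ p ∈ S, Λ.tt p ((- dl p) * r + p) * Λ.tt p ((- dl p) * r + p) ≤
      (2 * ‖Λ.ξ‖)^2 * ‖Λ.ξ‖^2 := by
    intro r hr
    simp only [s, Finset.mem_union, Finset.mem_insert, Finset.mem_singleton, Finset.mem_image,
      not_or, not_exists, not_and] at hr
    obtain ⟨⟨hr0, hr1⟩, hr2⟩ := hr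
    have hr3 : ∀ p ∈ S, (1 - r) * p^2 - r ≠ 0 := by
      intro p hp h
      apply hr2 p hp
      have : p^2 + 1 ≠ 0 := by positivity
      rw [div_eq_iff this]; linear_combination h
    have hbs := bessel S (fun p => Λ.z (toU (r - rho p r))⁻¹ (rho p r)) (2 * ‖Λ.ξ‖)
      (fun p _ => Λ.z_norm _ _) (fun p hp p' hp' hne => Λ.z_orth _ _ _ _
        (fun h => hne (hS p hp p' hp' (rho_inj hr0 hr1 (hr3 p hp) (hr3 p' hp') h))))
      (Λ.P (ell r)⁻¹ (Λ.P (ell 0 * ell 1) Λ.ξ))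
    rw [Λ.iso, Λ.iso] at hbs
    refine le_trans (le_of_eq ?_) hbs
    apply Finset.sum_congr rfl
    intro p hp
    rw [← Λ.part_iii_eq (h0 p hp) (hr3 p hp), tt, add_comm p, sq]
  have hle : μ.E (fun r => if r ∈ s then 0 else
      ∑ p ∈ S, Λ.tt p ((- dl p) * r + p) * Λ.tt p ((- dl p) * r + p)) ≤ (2 * ‖Λ.ξ‖)^2 * ‖Λ.ξ‖^2 := by
    have hC : ∀ r, (if r ∈ s then 0 else
      ∑ p ∈ S, Λ.tt p ((- dl p) * r + p) * Λ.tt p ((- dl p) * r + p)) ≤ (2 * ‖Λ.ξ‖)^2 * ‖Λ.ξ‖^2 := by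
      intro r
      split_ifs with h
      · positivity
      · exact hg r h
    refine μ.le_of ⟨(2 * ‖Λ.ξ‖)^2 * ‖Λ.ξ‖^2, fun r => ?_⟩ hC
    rw [abs_of_nonneg]
    · exact hC r
    · beta_reduce
      split_ifs
      · exact le_rfl
      · exact Finset.sum_nonneg (fun p _ => mul_self_nonneg _)
  refine le_trans (le_of_eq ?_) hle
  apply hμ.congr_finset s hb
  · obtain ⟨C, hC⟩ := hb
    refine ⟨C, fun r => ?_⟩
    beta_reduce
    split_ifs
    · rw [abs_zero]; exact (abs_nonneg _).trans (hC r)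
    · exact hC r
  · intro r hr
    simp [hr]

lemma part_iii {μ : Mn ℚ} (hμ : AffInv μ) : μ.E (fun p => μ.E (fun p' => Λ.tt p p')) = 0 := by
  obtain ⟨C, hC⟩ := Λ.tt_unif
  apply hμ.eq_zero_of_finite (Mn.bd_mean hC (fun _ => μ))
  intro ε hε
  have f1 := finite_of_sum_bound {p : ℚ | 0 < p} (fun p => μ.E (fun p' => Λ.tt p p' * Λ.tt p p')) _
    (fun S hS => Λ.tt_sum hμ S (fun p hp => (hS hp : 0 < p).ne') (fun p hp p' hp' h => by
      have a := (hS hp : 0 < p); have b := (hS hp' : 0 < p')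
      exact (pow_left_inj₀ a.le b.le two_ne_zero).1 h)) (ε^2) (by positivity)
  have f2 := finite_of_sum_bound {p : ℚ | p < 0} (fun p => μ.E (fun p' => Λ.tt p p' * Λ.tt p p')) _
    (fun S hS => Λ.tt_sum hμ S (fun p hp => (hS hp : p < 0).ne) (fun p hp p' hp' h => by
      have a : p < 0 := hS hp
      have b : p' < 0 := hS hp'
      rcases sq_eq_sq_iff_eq_or_eq_neg.1 h with h | h
      · exact h
      · linarith)) (ε^2) (by positivity)
  refine ((f1.union f2).union (Set.finite_singleton 0)).subset ?_
  intro p hp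
  have hp' : ε < |μ.E (fun p' => Λ.tt p p')| := hp
  have h2 := pow_lt_pow_left₀ hp' hε.le (two_ne_zero)
  rw [sq_abs] at h2
  have h3 := h2.trans_le (μ.sq_le (Λ.tt_bd p))
  rcases lt_trichotomy p 0 with h | h | h
  · left; right; exact ⟨h, h3⟩
  · right; exact h
  · left; left; exact ⟨h, h3⟩

theorem DL {μ : Mn ℚ} (hμ : AffInv μ) (X : H) : μ.E (fun p => ⟪X, Λ.d p⟫) = 0 := by
  have key : ⟪wint μ Λ.d, wint μ Λ.d⟫ = 0 := by
    rw [wint_left μ Λ.d_bdV, ← Λ.part_iii hμ]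
    apply μ.congr
    intro p
    rw [wint_right μ Λ.d_bdV]
    simp only [Λ.d_eq _, inner_add_right]
    rw [μ.add, Λ.part_i hμ, add_zero, ← Λ.d_eq]
    simp only [d, inner_sub_left]
    rw [μ.sub, Λ.part_ii hμ, sub_zero]
    rfl
  rw [← wint_right μ Λ.d_bdV, inner_self_eq_zero.1 key, inner_zero_right]

end Model
end SqCol

namespace SqCol
open Filter Topology


lemma wint_clm {X H : Type} [NormedAddCommGroup H] [InnerProductSpace ℝ H] [CompleteSpace H]
    (μ : Mn X) {d : X → H} (hd : BdV d) (A : H →L[ℝ] H) (F : H) :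
    ⟪F, A (wint μ d)⟫ = μ.E (fun x => ⟪F, A (d x)⟫) := by
  rw [← ContinuousLinearMap.adjoint_inner_left, wint_right μ hd]
  apply μ.congr; intro x
  rw [ContinuousLinearMap.adjoint_inner_left]

lemma fix_of {H : Type} [NormedAddCommGroup H] [InnerProductSpace ℝ H]
    (Z : H → H) (hZ : ∀ v, ‖Z v‖ ≤ ‖v‖) (k : H) (h : ⟪k, Z k⟫ = ⟪k, k⟫) : Z k = k := by
  rw [← sub_eq_zero, ← norm_eq_zero]
  have h1 := norm_sub_sq_real (Z k) k
  rw [real_inner_comm, h, real_inner_self_eq_norm_sq] at h1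
  have h2 := pow_le_pow_left₀ (norm_nonneg _) (hZ k) 2
  have : ‖Z k - k‖^2 ≤ 0 := by linarith
  exact pow_eq_zero_iff (two_ne_zero) |>.1 (le_antisymm this (sq_nonneg _))

def Rp (p y : ℚ) : ℚ := p + (p^2+1)/(y-p)
def star (m μ : Mn ℚ) : Mn ℚ := μ.bind (fun p => m.map (Rp p))
lemma star_E (m μ : Mn ℚ) (f : ℚ → ℝ) : (star m μ).E f = μ.E (fun p => m.E (fun y => f (Rp p y))) := rfl

lemma star_bd (m : Mn ℚ) {f : ℚ → ℝ} (hf : Bd f) : Bd (fun p => m.E (fun y => f (Rp p y))) := by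
  obtain ⟨C, hC⟩ := hf
  exact Mn.bd_mean (C := C) (fun p y => hC _) (fun _ => m)

lemma star_affInv {m μ : Mn ℚ} (hm : AffInv m) (hμ : AffInv μ) : AffInv (star m μ) := by
  intro a b ha f hf
  rw [star_E, star_E, ← hμ a b ha _ (star_bd m hf)]
  apply μ.congr
  intro p
  have h1 : p^2 + 1 ≠ 0 := by positivity
  have h2 : (a*p+b)^2 + 1 ≠ 0 := by positivity
  have hc : ((a*p+b)^2+1)/(a*(p^2+1)) ≠ 0 := by positivity
  refine Eq.trans ?_ (hm (((a*p+b)^2+1)/(a*(p^2+1))) ((a*p+b) - ((a*p+b)^2+1)/(a*(p^2+1)) * p) hc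
    (fun y => f (Rp (a*p+b) y)) (hf.comp _))
  apply m.congr
  intro y
  congr 1
  rw [Rp, Rp]
  by_cases hy : y = p
  · subst hy; simp
  · have hy' := sub_ne_zero.2 hy
    have e : ((a*p+b)^2+1)/(a*(p^2+1)) * y + ((a*p+b) - ((a*p+b)^2+1)/(a*(p^2+1)) * p) - (a*p+b)
        = ((a*p+b)^2+1)/(a*(p^2+1)) * (y - p) := by ring
    rw [e]
    field_simp
    ring

def nu (m : Mn ℚ) : ℕ → Mn ℚ
  | 0 => m
  | k+1 => star m (nu m k)

lemma nu_affInv {m : Mn ℚ} (hm : AffInv m) : ∀ k, AffInv (nu m k)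
  | 0 => hm
  | k+1 => star_affInv hm (nu_affInv hm k)

def sq (t : ℚ) : ℚ := (t^2+1)/(2*t)
def sU (t : ℚ) : ℚˣ := toU (sq t)
lemma sq_ne {t : ℚ} (ht : t ≠ 0) : sq t ≠ 0 := by
  rw [sq]; positivity
lemma sU_coe {t : ℚ} (ht : t ≠ 0) : (sU t : ℚ) = (t^2+1)/(2*t) := toU_coe (sq_ne ht)
def two : ℚˣ := Units.mk0 2 two_ne_zero
lemma two_coe : (two : ℚ) = 2 := rfl
def nn : ℚ → ℚˣ := fun y => toU (y^2+1)
lemma nn_coe (y : ℚ) : (nn y : ℚ) = y^2+1 := toU_coe (by positivity)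

lemma sU_dU {p : ℚ} (hp : p ≠ 0) : (sU p)⁻¹ = two * (dU p)⁻¹ := by
  apply Units.ext
  simp only [Units.val_inv_eq_inv_val, Units.val_mul, sU_coe hp, dU, toU_coe (dl_ne hp), two_coe]
  have : p^2 + 1 ≠ 0 := by positivity
  rw [dl]
  have : p + 1/p = (p^2+1)/p := by field_simp
  rw [this]
  field_simp

namespace Model
variable {H : Type} [NormedAddCommGroup H] [InnerProductSpace ℝ H] (Λ : Model H) [CompleteSpace H]

lemma inn_cst (u v : ℚˣ) : ⟪Λ.P (cst u) Λ.ξ, Λ.P (cst v) Λ.ξ⟫ = Λ.φ ((u:ℚ)/(v:ℚ)) := by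
  rw [Λ.inn]; exact Λ.m.const (Λ.φ ((u:ℚ)/(v:ℚ)))

noncomputable def κ (μ : Mn ℚ) : H := wint μ (fun p => Λ.P (cst (sU p)⁻¹) Λ.ξ)

lemma κ_clm (μ : Mn ℚ) (A : H →L[ℝ] H) (F : H) :
    ⟪F, A (Λ.κ μ)⟫ = μ.E (fun p => ⟪F, A (Λ.P (cst (sU p)⁻¹) Λ.ξ)⟫) :=
  wint_clm μ (Λ.bdV_P _ _) A F
lemma κ_right (μ : Mn ℚ) (F : H) : ⟪F, Λ.κ μ⟫ = μ.E (fun p => ⟪F, Λ.P (cst (sU p)⁻¹) Λ.ξ⟫) :=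
  wint_right μ (Λ.bdV_P _ _) F
lemma κ_left (μ : Mn ℚ) (F : H) : ⟪Λ.κ μ, F⟫ = μ.E (fun p => ⟪Λ.P (cst (sU p)⁻¹) Λ.ξ, F⟫) :=
  wint_left μ (Λ.bdV_P _ _) F

noncomputable def Z : H →L[ℝ] H := (Λ.P nn⁻¹).comp (Λ.T.comp Λ.T)
lemma Z_apply (v : H) : Λ.Z v = Λ.P nn⁻¹ (Λ.T (Λ.T v)) := rfl
lemma Z_norm (v : H) : ‖Λ.Z v‖ ≤ ‖v‖ := by
  rw [Z_apply, Λ.iso]; exact (Λ.T_norm _).trans (Λ.T_norm _)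
lemma Z_comm (R : ℚ → ℚˣ) (v : H) : Λ.Z (Λ.P R v) = Λ.P R (Λ.Z v) := by
  rw [Z_apply, Z_apply, T_comm, T_comm, P_comm]

lemma R_aux (w : ℚˣ) {p : ℚ} (hp : p ≠ 0) :
    Λ.m.E (fun y => ⟪Λ.P (cst w) Λ.ξ, Λ.P (cst (sU (Rp p y))⁻¹) Λ.ξ⟫) =
    ⟪Λ.P (nn * cst w * cst two⁻¹) Λ.ξ, Λ.P (Lp p) Λ.ξ⟫ := by
  rw [Λ.inn]
  simp only [inn_cst]
  apply Λ.hm.congr_finset {p, -1/p} (Λ.hφb _) (Λ.hφb _)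
  intro y hy
  simp only [Finset.mem_insert, Finset.mem_singleton, not_or] at hy
  obtain ⟨hy0, hy1⟩ := hy
  have hy0' := sub_ne_zero.2 hy0
  have hy1' := sub_ne_zero.2 hy1
  have h1 : y - -1/p = (p*y+1)/p := by field_simp; ring
  have h2 : p*y+1 ≠ 0 := by
    intro h; rw [h1, h] at hy1'; simp at hy1'
  have h3 : Rp p y = (p*y+1)/(y-p) := by
    rw [Rp]; field_simp; ring
  have h4 : Rp p y ≠ 0 := by rw [h3]; exact div_ne_zero h2 hy0'
  congr 1
  simp only [Lp, Pi.mul_apply, Units.val_mul, Units.val_inv_eq_inv_val, cst_apply, sU_coe h4, nn_coe,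
    two_coe, ell_coe hy0, ell_coe hy1, dU, toU_coe (dl_ne hp)]
  have h5 : p^2+1 ≠ 0 := by positivity
  have h6 : dl p = (p^2+1)/p := by rw [dl]; field_simp
  rw [h1, h3, h6]
  field_simp
  ring

lemma R_eq {μ : Mn ℚ} (hμ : AffInv μ) (w : ℚˣ) :
    ⟪Λ.P (cst w) Λ.ξ, Λ.κ (star Λ.m μ)⟫ = ⟪Λ.P (cst w) Λ.ξ, Λ.Z (Λ.κ μ)⟫ := by
  have hDL := Λ.DL hμ (Λ.P (nn * cst w * cst two⁻¹) Λ.ξ)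
  simp only [d, inner_sub_right] at hDL
  rw [μ.sub, sub_eq_zero] at hDL
  rw [κ_right, κ_clm, star_E]
  have hb : Bd (fun y => ⟪Λ.P (cst w) Λ.ξ, Λ.P (cst (sU y)⁻¹) Λ.ξ⟫) := (BdV.const _).inner (Λ.bdV_P _ _)
  trans μ.E (fun p => ⟪Λ.P (nn * cst w * cst two⁻¹) Λ.ξ, Λ.P (Lp p) Λ.ξ⟫)
  · apply hμ.congr_finset {0} (star_bd _ hb) ((BdV.const _).inner (Λ.bdV_P _ _))
    intro p hp
    exact Λ.R_aux w (by simpa using hp)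
  rw [hDL]
  apply hμ.congr_finset {0} ((BdV.const _).inner (Λ.bdV_P _ _)) ((BdV.const _).inner ((Λ.bdV_P _ _).clm _))
  intro p hp
  have hp : p ≠ 0 := by simpa using hp
  rw [Z_comm, Z_apply, ← P_mul, adj', adj', ← P_mul, ← P_mul, sU_dU hp]
  congr 3
  simp only [mul_inv, inv_inv, ← cst_inv]
  rw [cst_mul]
  ac_rfl

lemma κ_R {μ μ' : Mn ℚ} (hμ : AffInv μ) (u : ℚˣ) :
    ⟪Λ.P (cst u) (Λ.κ μ'), Λ.κ (star Λ.m μ)⟫ = ⟪Λ.P (cst u) (Λ.κ μ'), Λ.Z (Λ.κ μ)⟫ := by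
  rw [adj, adj, κ_left, κ_left]
  apply μ'.congr
  intro p
  rw [← adj, ← adj, ← P_mul, ← cst_mul, Λ.R_eq hμ]

lemma exists_nu : ∃ ν : Mn ℚ, AffInv ν ∧ (∀ f, Bd f → ν.E f = (star Λ.m ν).E f) ∧
    ∀ f c, Bd f → (∀ k, (nu Λ.m k).E f = c) → ν.E f = c := by
  obtain ⟨ν, h1, h2⟩ := Mn.cesaro (nu Λ.m)
  refine ⟨ν, ?_, ?_, ?_⟩
  · intro a b ha f hf
    exact h2 _ _ (hf.comp _) hf (fun k => nu_affInv Λ.hm k a b ha f hf)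
  · intro f hf
    rw [star_E]
    exact h1 _ _ hf (star_bd _ hf) (fun k => rfl)
  · intro f c hf h
    rw [h2 f (fun _ => c) hf (Bd.const c) (fun k => by rw [h k, Mn.const]), Mn.const]

lemma G_dil (u v : ℚˣ) :
    ⟪Λ.P (cst u * ell 0) Λ.ξ, Λ.T (Λ.T (Λ.P (cst v) Λ.ξ))⟫ =
    ⟪Λ.P (ell 0) Λ.ξ, Λ.T (Λ.T (Λ.P (cst v) Λ.ξ))⟫ := by
  have ex : ∀ R, ⟪Λ.P R Λ.ξ, Λ.T (Λ.T (Λ.P (cst v) Λ.ξ))⟫ =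
      Λ.m.E (fun r => Λ.m.E (fun r' => ⟪Λ.P R Λ.ξ, Λ.P (ell r' * ell r * cst v) Λ.ξ⟫)) := by
    intro R
    simp only [P_mul]
    rw [T_right]
    simp only [← T_comm]
    simp only [T_right]
  have hb : ∀ R r, Bd (fun r' => ⟪Λ.P R Λ.ξ, Λ.P (ell r' * ell r * cst v) Λ.ξ⟫) :=
    fun R r => (BdV.const _).inner (Λ.bdV_P _ _)
  have hb2 : ∀ R, Bd (fun r => Λ.m.E (fun r' => ⟪Λ.P R Λ.ξ, Λ.P (ell r' * ell r * cst v) Λ.ξ⟫)) := by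
    intro R
    refine Mn.bd_mean (C := ‖Λ.ξ‖ * ‖Λ.ξ‖) (fun r r' => ?_) _
    refine (abs_real_inner_le_norm _ _).trans ?_
    rw [Λ.iso, Λ.iso]
  have hu := u.ne_zero
  have hv := v.ne_zero
  rw [ex, ex, ← Λ.hm u 0 hu _ (hb2 (cst u * ell 0))]
  apply Λ.m.congr
  intro r
  rw [← Λ.hm u 0 hu _ (hb _ _)]
  apply Λ.m.congr
  intro r'
  symm
  apply Λ.inner_aff _ _ _ _ u 0 hu {0, r, r'}
  intro y hy
  simp only [Finset.mem_insert, Finset.mem_singleton, not_or] at hy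
  obtain ⟨hy0, hyr, hyr'⟩ := hy
  have hyr1 := sub_ne_zero.2 hyr
  have hyr1' := sub_ne_zero.2 hyr'
  have a1 : (u:ℚ) * y + 0 ≠ 0 := by
    intro h; apply mul_ne_zero hu hy0; linarith
  have a3 : (u:ℚ) * y + 0 ≠ u * r + 0 := by
    intro h; apply mul_ne_zero hu hyr1; linarith
  have a4 : (u:ℚ) * y + 0 ≠ u * r' + 0 := by
    intro h; apply mul_ne_zero hu hyr1'; linarith
  simp only [Pi.mul_apply, Units.val_mul, ell_coe hy0, ell_coe hyr, ell_coe hyr', ell_coe a1,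
    ell_coe a3, ell_coe a4, cst_apply]
  congr 1
  rw [show (u:ℚ) * y + 0 - (u * r + 0) = u * (y - r) by ring,
    show (u:ℚ) * y + 0 - (u * r' + 0) = u * (y - r') by ring]
  field_simp
  ring

theorem contra (Λ : Model H) : False := by
  obtain ⟨ν, hν, hst, hces⟩ := Λ.exists_nu
  set k := Λ.κ ν with hk
  have hkst : Λ.κ (star Λ.m ν) = k := by
    apply ext_inner_left ℝ
    intro F
    rw [hk, κ_right, κ_right]
    exact (hst _ ((BdV.const _).inner (Λ.bdV_P _ _))).symm
  have hone : cst 1 = 1 := rfl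
  have h1 : ⟪k, Λ.Z k⟫ = ⟪k, k⟫ := by
    have := Λ.κ_R (μ' := ν) hν 1
    rw [hkst, hone, map_one] at this
    exact this.symm
  have hZ : Λ.Z k = k := fix_of _ Λ.Z_norm k h1
  have hZ' : ContinuousLinearMap.adjoint Λ.Z k = k := by
    apply fix_of (fun v => ContinuousLinearMap.adjoint Λ.Z v)
    · intro v
      refine (ContinuousLinearMap.le_opNorm _ _).trans ?_
      have : ‖ContinuousLinearMap.adjoint Λ.Z‖ ≤ 1 := by
        rw [LinearIsometryEquiv.norm_map]
        exact ContinuousLinearMap.opNorm_le_bound _ zero_le_one (fun v => by rw [one_mul]; exact Λ.Z_norm v)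
      exact mul_le_of_le_one_left (norm_nonneg _) this
    · rw [ContinuousLinearMap.adjoint_inner_right, hZ]
  have hZa : ∀ v, ⟪Λ.Z v, k⟫ = ⟪v, k⟫ := by
    intro v; rw [← ContinuousLinearMap.adjoint_inner_right, hZ']
  have hnk : Λ.P nn k = Λ.T (Λ.T k) := by
    conv_lhs => rw [← hZ, Z_apply, P_inv']
  -- constancy along the iteration
  have hit : ∀ u j, ⟪Λ.P (cst u) (Λ.κ (nu Λ.m j)), k⟫ = ⟪Λ.P (cst u) (Λ.κ Λ.m), k⟫ := by
    intro u j
    induction j with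
    | zero => rfl
    | succ j ih =>
      rw [← ih]
      have := Λ.κ_R (μ' := ν) (nu_affInv Λ.hm j) u⁻¹
      rw [nu, adj, ← cst_inv, real_inner_comm, this, real_inner_comm, ← hk, adj', cst_inv, inv_inv,
        ← Z_comm, hZa]
  have hg : ∀ u, ⟪Λ.P (cst u) k, k⟫ = ⟪Λ.P (cst u) (Λ.κ Λ.m), k⟫ := by
    intro u
    conv_lhs => rw [adj, hk, κ_left]
    apply hces _ _ ((Λ.bdV_P _ _).inner (BdV.const _))
    intro j
    rw [← hit u j, ← κ_left, ← hk, ← adj]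
  have hG : ∀ u, ⟪Λ.P (cst u) (Λ.κ Λ.m), k⟫ = ⟪Λ.P (ell 0) Λ.ξ, Λ.T (Λ.T k)⟫ := by
    intro u
    trans ⟪Λ.P (cst (two * u) * ell 0) Λ.ξ, Λ.P nn k⟫
    · rw [hk, κ_right, κ_clm]
      apply ν.congr
      intro p
      rw [adj, κ_left]
      simp only [← P_mul]
      rw [Λ.inn]
      simp only [← cst_inv, ← cst_mul, inn_cst]
      apply Λ.hm.congr_finset {0} (Λ.hφb _) (Λ.hφb _)
      intro y hy
      have hy : y ≠ 0 := by simpa using hy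
      congr 1
      have hp := (sU p).ne_zero
      have hu := u.ne_zero
      simp only [Pi.mul_apply, Units.val_mul, Units.val_inv_eq_inv_val, cst_apply, sU_coe hy, nn_coe,
        two_coe, ell_coe hy]
      have h5 : y^2+1 ≠ 0 := by positivity
      field_simp
      ring
    · rw [hnk, ← ContinuousLinearMap.comp_apply, hk, κ_clm, κ_clm]
      apply ν.congr
      intro p
      exact Λ.G_dil _ _
  have hinv : ∀ u, Λ.P (cst u) k = k := by
    intro u
    apply fix_of (Λ.P (cst u)) (fun v => (Λ.iso _ v).le)
    rw [real_inner_comm, hg, hG, ← hG 1, ← hg, hone, map_one]; rfl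
  have hξ : ⟪Λ.ξ, k⟫ = 0 := by
    rw [hk, κ_right, ← ν.const 0]
    apply hν.congr_finset {0, 1, -1} ((BdV.const _).inner (Λ.bdV_P _ _)) (Bd.const 0)
    intro p hp
    simp only [Finset.mem_insert, Finset.mem_singleton, not_or] at hp
    have e1 : Λ.ξ = Λ.P (cst 1) Λ.ξ := by rw [hone, map_one]; rfl
    have e2 := Λ.inn_cst 1 (sU p)⁻¹
    rw [← e1] at e2
    rw [e2, Units.val_inv_eq_inv_val, sU_coe hp.1, ← Λ.edge p hp.1 hp.2.1 hp.2.2]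
    congr 1
    simp
  have hkk : ⟪k, k⟫ = 0 := by
    conv_lhs => rw [hk, κ_left, ← hk]
    rw [← ν.const 0]
    apply ν.congr
    intro p
    rw [adj, ← cst_inv, hinv, hξ]
  have hk0 : k = 0 := inner_self_eq_zero.1 hkk
  have : ⟪k, Λ.one⟫ = Λ.a := by
    rw [hk, κ_left, ← ν.const Λ.a]
    apply ν.congr
    intro p
    rw [Λ.inn1]
  rw [hk0, inner_zero_left] at this
  exact Λ.ha.ne this

end Model

theorem thm2 {r : ℕ} (c : ℚ → Fin r) :
    ∃ x y z : ℚ, 0 < x ∧ 0 < y ∧ 0 < z ∧ x^2 = y^2+z^2 ∧ c x = c y := by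
  by_contra h
  push Not at h
  obtain ⟨H, i1, i2, i3, ⟨Λ⟩⟩ := exists_model c (fun x y z hx hy hz e => h x y z hx hy hz e)
  exact Λ.contra

end SqCol

/-- For every finite coloring of the set of perfect squares:
(1) there are distinct squares `x, y` of the same color whose sum is a perfect square;
(2) there are distinct squares `x, y` of the same color whose difference is a perfect
square (in particular `x − y > 0`, phrased as `x = y + z²` with `z` positive). -/
theorem squares_coloring_pythagorean
    (r : ℕ) (C : ℕ → Fin r) :
    (∃ x y : ℕ, (∃ k : ℕ, 0 < k ∧ x = k ^ 2) ∧ (∃ k : ℕ, 0 < k ∧ y = k ^ 2) ∧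
      x ≠ y ∧ C x = C y ∧ ∃ z : ℕ, 0 < z ∧ x + y = z ^ 2) ∧
    (∃ x y : ℕ, (∃ k : ℕ, 0 < k ∧ x = k ^ 2) ∧ (∃ k : ℕ, 0 < k ∧ y = k ^ 2) ∧
      x ≠ y ∧ C x = C y ∧ ∃ z : ℕ, 0 < z ∧ x = y + z ^ 2) := by
  exact SqCol.final_of (fun c => SqCol.thm2 c) r C
end

section
/- Suppose Λ ⊆ ℕ satisfies d̄_Φ(Λ) > 0 for some multiplicative Følner sequence Φ. Then for all ℓ, ℓ' ∈ ℕ: (1) there exist m, n ∈ ℕ with m > n such that ℓ·(m² − n²) and ℓ'·m·n are distinct and d̄_Φ( (ℓ·(m² − n²))⁻¹Λ ∩ (ℓ'·m·n)⁻¹Λ ) > 0; and (2) there exist m, n ∈ ℕ such that ℓ·(m² + n²) and ℓ'·m·n are distinct and d̄_Φ( (ℓ·(m² + n²))⁻¹Λ ∩ (ℓ'·m·n)⁻¹Λ ) > 0. -/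
open Filter

/-- `Φ` is a multiplicative Følner sequence in `ℕ = {1, 2, …}`: a sequence of finite
nonempty sets of positive integers which is asymptotically invariant under dilation. -/
def IsMulFolner (Φ : ℕ → Finset ℕ) : Prop :=
  (∀ K, (Φ K).Nonempty) ∧ (∀ K, ∀ n ∈ Φ K, 0 < n) ∧
    ∀ x : ℕ, 0 < x →
      Tendsto (fun K => ((Φ K ∩ (Φ K).image (fun n => x * n)).card : ℝ) / ((Φ K).card : ℝ))
        atTop (nhds 1)

-- The upper multiplicative density of `Λ` with respect to the sequence `Φ`.
open scoped Classical in
noncomputable def upMulDens (Φ : ℕ → Finset ℕ) (Λ : Set ℕ) : ℝ :=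
  limsup (fun K => (((Φ K).filter (fun n => n ∈ Λ)).card : ℝ) / ((Φ K).card : ℝ)) atTop

set_option linter.unusedVariables false
set_option linter.unusedSectionVars false


/-- bounded real functions -/
def BF {X : Type} (f : X → ℝ) : Prop := ∃ C, ∀ x, |f x| ≤ C

/-- a mean -/
structure MMean (X : Type) where
  L : (X → ℝ) →ₗ[ℝ] ℝ
  one : L (fun _ => 1) = 1
  bd : ∀ f C, (∀ x, |f x| ≤ C) → |L f| ≤ C

namespace MMean
variable {X Y : Type}

instance : CoeFun (MMean X) (fun _ => (X → ℝ) → ℝ) := ⟨fun m => m.L⟩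

theorem map_add (m : MMean X) (f g : X → ℝ) : m (fun x => f x + g x) = m f + m g :=
  m.L.map_add f g
theorem map_sub (m : MMean X) (f g : X → ℝ) : m (fun x => f x - g x) = m f - m g :=
  m.L.map_sub f g
theorem map_mul (m : MMean X) (c : ℝ) (f : X → ℝ) : m (fun x => c * f x) = c * m f :=
  m.L.map_smul c f
theorem map_sum {ι : Type*} (m : MMean X) (s : Finset ι) (f : ι → X → ℝ) :
    m (fun x => ∑ i ∈ s, f i x) = ∑ i ∈ s, m (f i) := by
  have := _root_.map_sum m.L f s
  rw [← this]; congr 1; ext x; simp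
theorem map_const (m : MMean X) (c : ℝ) : m (fun _ => c) = c := by
  have := m.map_mul c (fun _ => 1)
  rw [m.one] at this; simpa using this
theorem nonneg (m : MMean X) {f : X → ℝ} (hb : BF f) (h : ∀ x, 0 ≤ f x) : 0 ≤ m f := by
  obtain ⟨C, hC⟩ := hb
  have h1 : |m (fun x => f x - C/2)| ≤ C/2 := by
    apply m.bd
    intro x
    have := hC x; rw [abs_le] at this ⊢; constructor <;> linarith [h x]
  rw [m.map_sub, m.map_const, abs_le] at h1
  linarith [h1.1]
theorem mono (m : MMean X) {f g : X → ℝ} (hf : BF f) (hg : BF g) (h : ∀ x, f x ≤ g x) :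
    m f ≤ m g := by
  have : 0 ≤ m (fun x => g x - f x) := by
    apply m.nonneg
    · obtain ⟨C, hC⟩ := hf
      obtain ⟨D, hD⟩ := hg
      exact ⟨D + C, fun x => (abs_sub _ _).trans (add_le_add (hD x) (hC x))⟩
    · intro x; linarith [h x]
  rw [m.map_sub] at this; linarith

/-- composition of means -/
noncomputable def bind (μ : MMean X) (l : X → MMean Y) : MMean Y where
  L := { toFun := fun f => μ (fun a => l a f)
         map_add' := fun f g => by
          rw [← μ.map_add]; congr 1; ext a; exact (l a).map_add f g
         map_smul' := fun c f => by
          simp only [RingHom.id_apply, smul_eq_mul]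
          rw [← μ.map_mul]; congr 1; ext a; exact (l a).map_mul c f }
  one := by
    change μ (fun a => l a (fun _ => 1)) = 1
    simp only [(l _).one]; exact μ.one
  bd := fun f C h => μ.bd _ _ (fun a => (l a).bd _ _ h)

/-- pushforward -/
noncomputable def map (T : X → Y) (m : MMean X) : MMean Y where
  L := { toFun := fun f => m (fun x => f (T x))
         map_add' := fun f g => m.map_add _ _
         map_smul' := fun c f => m.map_mul _ _ }
  one := m.one
  bd := fun f C h => m.bd _ _ (fun a => h _)

theorem bind_apply (μ : MMean X) (l : X → MMean Y) (f : Y → ℝ) :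
  μ.bind l f = μ (fun a => l a f) := rfl
theorem map_apply (T : X → Y) (m : MMean X) (f : Y → ℝ) : m.map T f = m (fun x => f (T x)) := rfl

/-- point mass -/
noncomputable def dirac (x : X) : MMean X where
  L := LinearMap.proj x
  one := rfl
  bd := fun _ _ h => h x

/-- average of finite family -/
noncomputable def avg {ι : Type} (s : Finset ι) (hs : s.Nonempty) (l : ι → MMean X) : MMean X where
  L := (s.card : ℝ)⁻¹ • ∑ i ∈ s, (l i).L
  one := by
    have : (s.card : ℝ) ≠ 0 := by exact_mod_cast hs.card_pos.ne'
    simp [(l _).one, this]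
  bd := fun f C h => by
    have h0 : (0 : ℝ) < s.card := by exact_mod_cast hs.card_pos
    simp only [LinearMap.smul_apply, LinearMap.sum_apply, smul_eq_mul]
    rw [abs_mul, abs_of_pos (inv_pos.2 h0), inv_mul_le_iff₀ h0]
    refine (Finset.abs_sum_le_sum_abs _ _).trans ?_
    calc _ ≤ ∑ i ∈ s, C := Finset.sum_le_sum (fun i _ => (l i).bd f C h)
      _ = _ := by simp
theorem avg_apply {ι : Type} (s : Finset ι) (hs : s.Nonempty) (l : ι → MMean X) (f : X → ℝ) :
    avg s hs l f = (s.card : ℝ)⁻¹ * ∑ i ∈ s, l i f := by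
  change ((s.card : ℝ)⁻¹ • ∑ i ∈ s, (l i).L) f = _
  simp

theorem exists_ulim {ι : Type} (u : Ultrafilter ι) (M : ι → MMean X) :
    ∃ N : MMean X, ∀ f, BF f → Tendsto (fun i => M i f) u (nhds (N f)) := by
  have key : ∀ f : X → ℝ, BF f → ∃ a, Tendsto (fun i => M i f) u (nhds a) := by
    rintro f ⟨C, hC⟩
    have hc : IsCompact (Set.Icc (-C) C) := isCompact_Icc
    have := hc.ultrafilter_le_nhds (u.map (fun i => M i f)) (by
      rw [le_principal_iff]
      refine mem_map.2 (Filter.univ_mem' fun i => ?_)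
      exact abs_le.1 ((M i).bd f C hC))
    obtain ⟨a, _, ha⟩ := this
    exact ⟨a, ha⟩
  let p : Submodule ℝ (X → ℝ) :=
    { carrier := {f | BF f}
      add_mem' := by
        rintro f g ⟨C, hC⟩ ⟨D, hD⟩
        exact ⟨C + D, fun x => (abs_add_le _ _).trans (add_le_add (hC x) (hD x))⟩
      zero_mem' := ⟨0, fun x => by simp⟩
      smul_mem' := by
        rintro c f ⟨C, hC⟩
        exact ⟨|c| * C, fun x => by
          simp only [Pi.smul_apply, smul_eq_mul, abs_mul]
          exact mul_le_mul_of_nonneg_left (hC x) (abs_nonneg _)⟩ }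
  choose! l hl using key
  let F : p →ₗ[ℝ] ℝ :=
    { toFun := fun f => l f
      map_add' := fun f g => tendsto_nhds_unique (hl _ (f + g).2) (by
        have := (hl _ f.2).add (hl _ g.2)
        refine this.congr (fun i => ?_)
        exact ((M i).L.map_add _ _).symm)
      map_smul' := fun c f => tendsto_nhds_unique (hl _ (c • f).2) (by
        have := (hl _ f.2).const_mul c
        refine this.congr (fun i => ?_)
        exact ((M i).L.map_smul _ _).symm) }
  obtain ⟨G, hG⟩ := LinearMap.exists_extend F
  have hGF : ∀ f, BF f → G f = l f := fun f hf => by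
    have := LinearMap.congr_fun hG ⟨f, hf⟩
    exact this
  have h1 : BF (fun _ : X => (1:ℝ)) := ⟨1, fun _ => by simp⟩
  refine ⟨⟨G, ?_, ?_⟩, ?_⟩
  · rw [hGF _ h1]
    refine tendsto_nhds_unique (hl _ h1) ?_
    simp only [(M _).one]; exact tendsto_const_nhds
  · intro f C h
    have hf : BF f := ⟨C, h⟩
    rw [hGF _ hf]
    exact le_of_tendsto (hl _ hf).abs (Eventually.of_forall fun i => (M i).bd f C h)
  · intro f hf
    change Tendsto _ _ (nhds (G f))
    rw [hGF _ hf]; exact hl f hf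

/-- invariance under a map -/
def InvU (m : MMean X) (T : X → X) : Prop := ∀ f, BF f → m (fun x => f (T x)) = m f

theorem _root_.BF.comp {f : Y → ℝ} (h : BF f) (T : X → Y) : BF (fun x => f (T x)) :=
  ⟨h.choose, fun x => h.choose_spec _⟩

theorem _root_.BF.mean {f : X → Y → ℝ} {C : ℝ} (h : ∀ x y, |f x y| ≤ C) (m : MMean Y) :
    BF (fun x => m (f x)) := ⟨C, fun x => m.bd _ _ (h x)⟩

theorem _root_.BF.meanl {f : Y → ℝ} (h : BF f) (m : X → MMean Y) :
    BF (fun x => m x f) := ⟨h.choose, fun x => (m x).bd _ _ h.choose_spec⟩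

/-- Cesaro limit of a sequence of means. -/
theorem exists_cesaro (M : ℕ → MMean X) :
    ∃ N : MMean X, (∀ f, BF f → ∀ g, BF g → (∀ k, M (k+1) f = M k g) → N f = N g) ∧
      (∀ f, BF f → ∀ g, BF g → (∀ k, M k f = M k g) → N f = N g) ∧
      (∀ f, BF f → ∀ c, (∀ k, M k f = c) → N f = c) := by
  obtain ⟨N, hN⟩ := exists_ulim (hyperfilter ℕ)
    (fun n => avg (Finset.range (n+1)) (by simp) M)
  have hle : (hyperfilter ℕ : Filter ℕ) ≤ atTop := by
    rw [← Nat.cofinite_eq_atTop]; exact hyperfilter_le_cofinite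
  have h2 : (∀ f, BF f → ∀ g, BF g → (∀ k, M k f = M k g) → N f = N g) := by
    intro f hf g hg h
    refine tendsto_nhds_unique (hN f hf) ((hN g hg).congr fun n => ?_)
    simp only [avg_apply, h]
  have hsh : ∀ f, BF f → Tendsto (fun n => (avg (Finset.range (n+1)) (by simp) M) f
      - ((n:ℝ)+1)⁻¹ * ∑ i ∈ Finset.range (n+1), M (i+1) f) atTop (nhds 0) := by
    rintro f ⟨C, hC⟩
    have e : ∀ n : ℕ, (avg (Finset.range (n+1)) (by simp) M) f
      - ((n:ℝ)+1)⁻¹ * ∑ i ∈ Finset.range (n+1), M (i+1) f = ((n:ℝ)+1)⁻¹ * (M 0 f - M (n+1) f) := by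
      intro n
      rw [avg_apply]
      have := Finset.sum_range_succ' (fun i => M i f) (n+1)
      have h' := Finset.sum_range_succ (fun i => M i f) (n+1)
      simp only [Finset.card_range, Nat.cast_add, Nat.cast_one]
      rw [← mul_sub]; congr 1; linarith
    simp only [e]
    have h0 : Tendsto (fun n : ℕ => ((n:ℝ)+1)⁻¹ * (2*C)) atTop (nhds 0) := by
      have := (tendsto_one_div_add_atTop_nhds_zero_nat (𝕜 := ℝ)).mul_const (2*C)
      simpa using this
    refine squeeze_zero_norm (fun n => ?_) h0
    rw [Real.norm_eq_abs, abs_mul, abs_of_pos (by positivity : (0:ℝ) < ((n:ℝ)+1)⁻¹)]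
    gcongr
    refine (abs_sub _ _).trans ?_
    have a := (M 0).bd f C hC
    have b := (M (n+1)).bd f C hC
    linarith
  refine ⟨N, ?_, h2, ?_⟩
  · intro f hf g hg h
    have h3 := (hN f hf).sub ((hsh f hf).mono_left hle)
    simp only [sub_zero] at h3
    refine tendsto_nhds_unique h3 ((hN g hg).congr fun n => ?_)
    rw [avg_apply _ _ _ g]
    simp only [h]; simp
  · intro f hf c h
    have := h2 f hf (fun _ => c) ⟨|c|, fun _ => le_rfl⟩ (fun k => by rw [h, map_const])
    rw [this, map_const]

theorem exists_inv_finset {G : Type} (T : G → X → X) (hT : ∀ g h x, T g (T h x) = T h (T g x))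
    (x0 : X) (S : Finset G) : ∃ m : MMean X, ∀ g ∈ S, m.InvU (T g) := by
  classical
  induction S using Finset.induction_on with
  | empty => exact ⟨dirac x0, by simp⟩
  | insert g S hg ih =>
    obtain ⟨m, hm⟩ := ih
    obtain ⟨N, h1, h2, -⟩ := exists_cesaro (fun k => m.map ((T g)^[k]))
    refine ⟨N, fun h hh => ?_⟩
    rcases Finset.mem_insert.1 hh with rfl | hh
    · intro f hf
      refine (h1 f hf _ (hf.comp _) (fun k => ?_)).symm
      simp only [map_apply, Function.iterate_succ_apply']
    · intro f hf
      refine h2 _ (hf.comp _) _ hf (fun k => ?_)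
      simp only [map_apply]
      rw [← hm h hh _ (hf.comp ((T g)^[k]))]
      congr 1; ext x
      congr 1
      have : Function.Commute (T h) (T g) := fun x => hT h g x
      exact (this.iterate_right k) x

theorem exists_inv {G : Type} (T : G → X → X) (hT : ∀ g h x, T g (T h x) = T h (T g x))
    (x0 : X) : ∃ m : MMean X, ∀ g, m.InvU (T g) := by
  choose M hM using exists_inv_finset T hT x0
  obtain ⟨N, hN⟩ := exists_ulim (Ultrafilter.of (atTop : Filter (Finset G))) M
  refine ⟨N, fun g f hf => ?_⟩
  refine tendsto_nhds_unique (hN _ (hf.comp _)) ((hN f hf).congr' ?_)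
  have : ∀ᶠ S in (atTop : Filter (Finset G)), g ∈ S := by
    filter_upwards [eventually_ge_atTop {g}] with S hS
    exact hS (by simp)
  filter_upwards [Ultrafilter.of_le _ this] with S hS
  exact (hM S g hS f hf).symm

/-- affine invariance -/
def AffInv (m : MMean ℚ) : Prop :=
  ∀ A B : ℚ, A ≠ 0 → ∀ f, BF f → m (fun x => f (A * x + B)) = m f

theorem exists_affInv : ∃ m : MMean ℚ, m.AffInv := by
  obtain ⟨l, hl⟩ := exists_inv (X := ℚ) (G := ℚ) (fun g x => x + g) (fun g h x => by ring) 0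
  obtain ⟨μ, hμ⟩ := exists_inv (X := ℚˣ) (G := ℚˣ) (fun g x => g * x)
    (fun g h x => by simp only [mul_left_comm]) 1
  refine ⟨μ.bind (fun a => l.map (fun b => (a:ℚ) * b)), fun A B hA f hf => ?_⟩
  simp only [bind_apply, map_apply]
  have h1 : ∀ a : ℚˣ, l (fun x => f (A * (↑a * x) + B)) = l (fun x => f (A * (a * x))) := by
    intro a
    rw [← hl (B / (A * a)) _ (hf.comp (fun x => A * (a * x)))]
    congr 1; ext x; congr 1; have := a.ne_zero; field_simp
  simp only [h1]
  have := hμ (Units.mk0 A hA) (fun a => l (fun x => f ((a:ℚ) * x))) 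
    ⟨hf.choose, fun a => l.bd _ _ (fun x => hf.choose_spec _)⟩
  rw [← this]
  simp [mul_assoc]

open Classical in
theorem AffInv.point {m : MMean ℚ} (hm : m.AffInv) (p : ℚ) :
    m (fun x => if x = p then 1 else 0) = 0 := by
  have hb : BF (fun x : ℚ => if x = p then (1:ℝ) else 0) := ⟨1, fun x => by dsimp only; split_ifs <;> simp⟩
  set a := m (fun x => if x = p then 1 else 0) with ha
  have ha0 : 0 ≤ a := m.nonneg hb (fun x => by split_ifs <;> simp)
  have key : ∀ n : ℕ, (n:ℝ) * a ≤ 1 := by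
    intro n
    have h1 : m (fun x => ∑ i ∈ Finset.range n, if x + (i:ℚ) = p then (1:ℝ) else 0) = n * a := by
      rw [m.map_sum]
      have : ∀ i : ℕ, m (fun x => if x + (i:ℚ) = p then (1:ℝ) else 0) = a := by
        intro i
        have := hm 1 i one_ne_zero _ hb
        rw [ha, ← this]; simp
      simp [this]
    rw [← h1]
    refine (le_abs_self _).trans (m.bd _ _ fun x => ?_)
    rw [abs_of_nonneg (Finset.sum_nonneg fun i _ => by split_ifs <;> simp)]
    rw [← Finset.sum_filter]
    simp only [Finset.sum_const, nsmul_eq_mul, mul_one]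
    have : (Finset.filter (fun i : ℕ => x + (i:ℚ) = p) (Finset.range n)).card ≤ 1 := by
      rw [Finset.card_le_one]
      intro i hi j hj
      simp only [Finset.mem_filter] at hi hj
      have : (i:ℚ) = j := by linarith [hi.2, hj.2]
      exact_mod_cast this
    exact_mod_cast this
  by_contra hne
  have hpos : 0 < a := lt_of_le_of_ne ha0 (Ne.symm hne)
  obtain ⟨n, hn⟩ := exists_nat_gt (1/a)
  have := key n
  rw [div_lt_iff₀ hpos] at hn
  linarith

theorem AffInv.congr {m : MMean ℚ} (hm : m.AffInv) (S : Finset ℚ) {f g : ℚ → ℝ}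
    (h : ∀ x, x ∉ S → f x = g x) : m f = m g := by
  classical
  have h1 : m (fun x => f x - g x) = m (fun x => ∑ p ∈ S, (f p - g p) * (if x = p then 1 else 0)) := by
    congr 1; ext x
    by_cases hx : x ∈ S
    · rw [Finset.sum_eq_single x]
      · simp
      · intro b _ hb; simp [hb.symm]
      · simp [hx]
    · rw [Finset.sum_eq_zero]
      · rw [h x hx]; simp
      · intro p hp
        have : x ≠ p := fun h => hx (h ▸ hp)
        simp [this]
  rw [m.map_sum] at h1
  simp only [m.map_mul] at h1
  rw [m.map_sub, Finset.sum_eq_zero] at h1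
  · linarith
  · intro p _
    have := hm.point p
    rw [mul_eq_zero]; right; convert this

theorem AffInv.mono {m : MMean ℚ} (hm : m.AffInv) (S : Finset ℚ) {f g : ℚ → ℝ} (hf : BF f)
    (hg : BF g) (h : ∀ x, x ∉ S → f x ≤ g x) : m f ≤ m g := by
  classical
  have : m f = m (fun x => if x ∈ S then g x else f x) := hm.congr S (fun x hx => by simp [hx])
  rw [this]
  refine m.mono ?_ hg fun x => ?_
  · obtain ⟨C, hC⟩ := hf
    obtain ⟨D, hD⟩ := hg
    refine ⟨max C D, fun x => ?_⟩
    dsimp only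
    split_ifs
    · exact (hD x).trans (le_max_right _ _)
    · exact (hC x).trans (le_max_left _ _)
  · split_ifs with hx
    · exact le_rfl
    · exact h x hx

theorem AffInv.abs_le {m : MMean ℚ} (hm : m.AffInv) (S : Finset ℚ) {f : ℚ → ℝ} {C : ℝ}
    (hC : 0 ≤ C)
    (h : ∀ x, x ∉ S → |f x| ≤ C) : |m f| ≤ C := by
  classical
  have : m f = m (fun x => if x ∈ S then 0 else f x) := hm.congr S (fun x hx => by simp [hx])
  rw [this]
  refine m.bd _ _ fun x => ?_
  split_ifs with hx
  · simpa
  · exact h x hx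

/-- the addition law -/
def opl (e t θ : ℚ) : ℚ := (t * θ - e) / (t + θ)

theorem exists_means (e : ℚ) (he : e = 1 ∨ e = -1) : ∃ m N : MMean ℚ, m.AffInv ∧ N.AffInv ∧
    (∀ f, BF f → N (fun t => m (fun θ => f (opl e t θ))) = N f) ∧
    (∀ f, BF f → ∀ S : Finset ℚ, (∀ t ∉ S, m (fun θ => f (opl e t θ)) = f t) → N f = m f) := by
  obtain ⟨m, hm⟩ := exists_affInv
  have hsq : ∀ t : ℚ, t ≠ 1 → t ≠ -1 → t^2 + e ≠ 0 := by
    intro t h1 h2 h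
    rcases he with rfl | rfl
    · nlinarith [sq_nonneg t]
    · have : (t-1)*(t+1) = 0 := by linarith
      rcases mul_eq_zero.1 this with h | h
      · exact h1 (by linarith)
      · exact h2 (by linarith)
  let M : ℕ → MMean ℚ := fun k => Nat.rec m (fun _ P => P.bind (fun t => m.map (opl e t))) k
  have M0 : M 0 = m := rfl
  have MS : ∀ k, M (k+1) = (M k).bind (fun t => m.map (opl e t)) := fun k => rfl
  have hbd : ∀ f, BF f → BF (fun t => m (fun θ => f (opl e t θ))) := fun f hf =>
    ⟨hf.choose, fun t => m.bd _ _ (fun θ => hf.choose_spec _)⟩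
  have hMS : ∀ k f, M (k+1) f = M k (fun t => m (fun θ => f (opl e t θ))) := fun k f => rfl
  have haff : ∀ k, (M k).AffInv := by
    intro k
    induction k with
    | zero => exact hm
    | succ k ih =>
      intro A B hA f hf
      rw [hMS, hMS]
      rw [← ih A B hA _ (hbd f hf)]
      refine ih.congr {1, -1, (1-B)/A, (-1-B)/A} fun t ht => ?_
      simp only [Finset.mem_insert, Finset.mem_singleton, not_or] at ht
      obtain ⟨ht1, ht2, ht3, ht4⟩ := ht
      have hd := hsq t ht1 ht2
      set s := A * t + B with hs
      have hd' : s^2 + e ≠ 0 := by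
        apply hsq
        · intro h; apply ht3; field_simp; linarith
        · intro h; apply ht4; field_simp; linarith
      have hq : (s^2+e)/(A*(t^2+e)) ≠ 0 := div_ne_zero hd' (mul_ne_zero hA hd)
      rw [← hm ((s^2+e)/(A*(t^2+e))) ((s^2+e)/(A*(t^2+e)) * t - s) hq _ (hf.comp (opl e s))]
      refine hm.congr {-t} fun θ hθ => ?_
      simp only [Finset.mem_singleton] at hθ
      have h0 : t + θ ≠ 0 := fun h => hθ (by linarith)
      congr 1
      unfold opl
      have e1 : s + ((s^2+e)/(A*(t^2+e)) * θ + ((s^2+e)/(A*(t^2+e)) * t - s))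
        = (s^2+e)/(A*(t^2+e)) * (t+θ) := by ring
      rw [e1, eq_div_iff (mul_ne_zero hq h0)]
      field_simp
      rw [hs]; ring
  obtain ⟨N, h1, h2, h3⟩ := exists_cesaro M
  refine ⟨m, N, hm, ?_, ?_, ?_⟩
  · intro A B hA f hf
    exact h2 _ (hf.comp _) _ hf (fun k => haff k A B hA f hf)
  · intro f hf
    exact (h1 f hf _ (hbd f hf) (fun k => hMS k f)).symm
  · intro f hf S hS
    refine h3 f hf _ fun k => ?_
    induction k with
    | zero => rfl
    | succ k ih =>
      rw [← ih, hMS]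
      exact (haff k).congr S hS

end MMean


section GNS
variable {X : Type} {V : Type} [NormedAddCommGroup V] [InnerProductSpace ℝ V]

/-- bounded functions -/
def bfun (X V : Type) [NormedAddCommGroup V] [InnerProductSpace ℝ V] : Submodule ℝ (X → V) where
  carrier := {f | ∃ C, ∀ x, ‖f x‖ ≤ C}
  add_mem' := by
    rintro f g ⟨C, hC⟩ ⟨D, hD⟩
    exact ⟨C + D, fun x => (norm_add_le _ _).trans (add_le_add (hC x) (hD x))⟩
  zero_mem' := ⟨0, fun x => by simp⟩
  smul_mem' := by
    rintro c f ⟨C, hC⟩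
    exact ⟨|c| * C, fun x => by
      simp only [Pi.smul_apply, norm_smul, Real.norm_eq_abs]
      exact mul_le_mul_of_nonneg_left (hC x) (abs_nonneg _)⟩

/-- GNS pre-Hilbert space -/
def GE (m : MMean X) (V : Type) [NormedAddCommGroup V] [InnerProductSpace ℝ V] : Type := bfun X V

instance (m : MMean X) : AddCommGroup (GE m V) := inferInstanceAs (AddCommGroup (bfun X V))
instance (m : MMean X) : Module ℝ (GE m V) := inferInstanceAs (Module ℝ (bfun X V))

theorem BF.inner {f g : X → V} {C D : ℝ} (hf : ∀ x, ‖f x‖ ≤ C) (hg : ∀ x, ‖g x‖ ≤ D) :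
    BF (fun x => inner ℝ (f x) (g x)) :=
  ⟨C * D, fun x => (abs_real_inner_le_norm _ _).trans
    (mul_le_mul (hf x) (hg x) (norm_nonneg _) ((norm_nonneg _).trans (hf x)))⟩

/-- the form -/
@[reducible] noncomputable def GEcore (m : MMean X) : PreInnerProductSpace.Core ℝ (GE m V) where
  inner f g := m (fun x => inner ℝ (f.1 x) (g.1 x))
  conj_inner_symm f g := by
    simp only [conj_trivial]
    congr 1; ext x; exact real_inner_comm _ _
  re_inner_nonneg f := by
    obtain ⟨C, hC⟩ := f.2
    exact m.nonneg (BF.inner hC hC) (fun x => real_inner_self_nonneg)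
  add_left f g h := by
    rw [← m.map_add]
    congr 1; ext x; exact inner_add_left _ _ _
  smul_left f g r := by
    simp only [conj_trivial]
    rw [← m.map_mul]
    congr 1; ext x; exact real_inner_smul_left _ _ _

noncomputable instance (m : MMean X) : SeminormedAddCommGroup (GE m V) :=
  @InnerProductSpace.Core.toSeminormedAddCommGroup ℝ (GE m V) _ _ _ (GEcore m)
noncomputable instance (m : MMean X) : InnerProductSpace ℝ (GE m V) :=
  InnerProductSpace.ofCore (GEcore m)

/-- GNS Hilbert space -/
abbrev GH (m : MMean X) (V : Type) [NormedAddCommGroup V] [InnerProductSpace ℝ V] : Type :=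
  UniformSpace.Completion (GE m V)

theorem GE_inner (m : MMean X) (f g : GE m V) :
    inner ℝ (f : GH m V) (g : GH m V) = m (fun x => inner ℝ (f.1 x) (g.1 x)) := by
  rw [UniformSpace.Completion.inner_coe]; rfl


/-- constructor -/
def GE.mk (m : MMean X) (f : X → V) (h : ∃ C, ∀ x, ‖f x‖ ≤ C) : GE m V := (⟨f, h⟩ : bfun X V)

open Classical in
/-- class of a function -/
noncomputable def gj (m : MMean X) (f : X → V) : GH m V :=
  if h : ∃ C, ∀ x, ‖f x‖ ≤ C then ((GE.mk m f h : GE m V) : GH m V) else 0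

theorem gj_inner (m : MMean X) {f g : X → V} (hf : ∃ C, ∀ x, ‖f x‖ ≤ C)
    (hg : ∃ C, ∀ x, ‖g x‖ ≤ C) :
    inner ℝ (gj m f) (gj m g) = m (fun x => inner ℝ (f x) (g x)) := by
  rw [gj, gj, dif_pos hf, dif_pos hg]
  exact GE_inner m _ _

end GNS

section vm
variable {X Y : Type} {H : Type} [NormedAddCommGroup H] [InnerProductSpace ℝ H] [CompleteSpace H]

theorem exists_vm (m : MMean X) (v : X → H) {C : ℝ} (hv : ∀ x, ‖v x‖ ≤ C) :
    ∃ z : H, ‖z‖ ≤ C ∧ ∀ y, m (fun x => inner ℝ (v x) y) = inner ℝ z y := by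
  let F : H →ₗ[ℝ] ℝ :=
    { toFun := fun y => m (fun x => inner ℝ (v x) y)
      map_add' := fun y z => by
        rw [← m.map_add]; congr 1; ext x; exact inner_add_right _ _ _
      map_smul' := fun c y => by
        simp only [RingHom.id_apply, smul_eq_mul]
        rw [← m.map_mul]; congr 1; ext x; exact real_inner_smul_right _ _ _ }
  have hF : ∀ y, ‖F y‖ ≤ C * ‖y‖ := fun y => m.bd _ _ (fun x =>
    (abs_real_inner_le_norm _ _).trans (by gcongr; exact hv x))
  let F' := F.mkContinuous C hF
  have hz : ∀ y, inner ℝ ((InnerProductSpace.toDual ℝ H).symm F') y = F' y := fun y =>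
    InnerProductSpace.toDual_symm_apply
  refine ⟨(InnerProductSpace.toDual ℝ H).symm F', ?_, fun y => (hz y).symm⟩
  set z := (InnerProductSpace.toDual ℝ H).symm F'
  have h1 : ‖z‖^2 ≤ C * ‖z‖ := by
    rw [← real_inner_self_eq_norm_sq, hz]
    exact (le_abs_self _).trans (hF z)
  by_cases h0 : ‖z‖ = 0
  · rw [h0]
    by_cases hX : Nonempty X
    · exact (norm_nonneg _).trans (hv hX.some)
    · exfalso
      have := m.one
      have e : (fun _ : X => (1:ℝ)) = 0 := funext fun x => (hX ⟨x⟩).elim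
      rw [e, map_zero] at this; simp at this
  · have : 0 < ‖z‖ := lt_of_le_of_ne (norm_nonneg _) (Ne.symm h0)
    nlinarith

/-- bounded linear functionals commute with vector means -/
theorem vm_functional (m : MMean X) (v : X → H) {C : ℝ} (hv : ∀ x, ‖v x‖ ≤ C) {z : H}
    (hz : ∀ y, m (fun x => inner ℝ (v x) y) = inner ℝ z y) (F : H →ₗ[ℝ] ℝ) {D : ℝ}
    (hF : ∀ y, |F y| ≤ D * ‖y‖) : m (fun x => F (v x)) = F z := by
  let F' := F.mkContinuous D hF
  have h : ∀ y, F y = inner ℝ y ((InnerProductSpace.toDual ℝ H).symm F') := fun y => by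
    rw [real_inner_comm]
    exact (InnerProductSpace.toDual_symm_apply (y := F')).symm
  simp only [h]; exact hz _

theorem CS2 (m : MMean X) (N : MMean Y) (V : X → H) (W : Y → X → H) {C D : ℝ}
    (hV : ∀ x, ‖V x‖ ≤ C) (hW : ∀ y x, ‖W y x‖ ≤ D) :
    (N (fun t => m (fun x => inner ℝ (V x) (W t x))))^2 ≤
      m (fun x => inner ℝ (V x) (V x)) *
        N (fun t => N (fun s => m (fun x => inner ℝ (W t x) (W s x)))) := by
  by_cases hX : Nonempty X
  swap
  · exfalso
    have := m.one
    have e : (fun _ : X => (1:ℝ)) = 0 := funext fun x => (hX ⟨x⟩).elim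
    rw [e, map_zero] at this; simp at this
  have hVb : ∃ C, ∀ x, ‖V x‖ ≤ C := ⟨C, hV⟩
  have hWb : ∀ y, ∃ C, ∀ x, ‖W y x‖ ≤ C := fun y => ⟨D, hW y⟩
  have hn : ∀ y, ‖gj m (W y)‖ ≤ |D| := by
    intro y
    have : ‖gj m (W y)‖^2 ≤ |D|^2 := by
      rw [← real_inner_self_eq_norm_sq, gj_inner m (hWb y) (hWb y)]
      refine (le_abs_self _).trans (m.bd _ _ fun x => ?_)
      rw [real_inner_self_eq_norm_sq, abs_of_nonneg (by positivity)]
      have := hW y x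
      gcongr; exact this.trans (le_abs_self _)
    exact le_of_sq_le_sq this (abs_nonneg _)
  obtain ⟨z, -, hz⟩ := exists_vm N (fun y => gj m (W y)) hn
  have h1 : N (fun t => m (fun x => inner ℝ (V x) (W t x))) = inner ℝ (gj m V) z := by
    rw [real_inner_comm, ← hz]
    congr 1; ext t
    rw [gj_inner m (hWb t) hVb]; congr 1; ext x; exact real_inner_comm _ _
  have h2 : N (fun t => N (fun s => m (fun x => inner ℝ (W t x) (W s x)))) = inner ℝ z z := by
    rw [← hz]
    congr 1; ext t
    rw [real_inner_comm, ← hz]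
    congr 1; ext s
    rw [gj_inner m (hWb s) (hWb t)]; congr 1; ext x; exact real_inner_comm _ _
  rw [h1, h2, ← gj_inner m hVb hVb, sq]
  exact real_inner_mul_inner_self_le _ _

theorem CS1 (m : MMean X) (V W : X → H) {C D : ℝ}
    (hV : ∀ x, ‖V x‖ ≤ C) (hW : ∀ x, ‖W x‖ ≤ D) :
    (m (fun x => inner ℝ (V x) (W x)))^2 ≤
      m (fun x => inner ℝ (V x) (V x)) * m (fun x => inner ℝ (W x) (W x)) := by
  have := CS2 m (MMean.dirac ()) V (fun _ => W) hV (fun _ => hW)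
  simpa [MMean.map_const] using this
end vm


/-- isometric representation of the nonzero rationals -/
structure QRep (H : Type) [NormedAddCommGroup H] [InnerProductSpace ℝ H] where
  U : ℚ → H →ₗ[ℝ] H
  mul : ∀ a b, a ≠ 0 → b ≠ 0 → ∀ x, U a (U b x) = U (a * b) x
  norm : ∀ a x, ‖U a x‖ = ‖x‖
  one : ∀ x, U 1 x = x

namespace QRep
variable {H : Type} [NormedAddCommGroup H] [InnerProductSpace ℝ H] [CompleteSpace H]
variable (R : QRep H)

theorem inn (a : ℚ) (x y : H) : inner ℝ (R.U a x) (R.U a y) = inner ℝ x y :=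
  (⟨R.U a, R.norm a⟩ : H →ₗᵢ[ℝ] H).inner_map_map x y

theorem ieq {a b a' b' : ℚ} (ha : a ≠ 0) (hb : b ≠ 0) (ha' : a' ≠ 0) (hb' : b' ≠ 0)
    (h : a * b' = a' * b) (x y : H) :
    inner ℝ (R.U a x) (R.U b y) = inner ℝ (R.U a' x) (R.U b' y) := by
  have h1 : R.U a x = R.U (a/a') (R.U a' x) := by
    rw [R.mul _ _ (div_ne_zero ha ha') ha']; congr 2; field_simp
  have h2 : R.U b y = R.U (a/a') (R.U b' y) := by
    rw [R.mul _ _ (div_ne_zero ha ha') hb']; congr 2; field_simp; linarith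
  rw [h1, h2, R.inn]

variable (m : MMean ℚ)

/-- correlation with shifted family -/
noncomputable def D (V : ℚ → H) (y : ℚ) (b : H) : ℝ := m (fun θ => inner ℝ (V θ) (R.U (θ - y) b))

/-- correlation form -/
noncomputable def C (x y : H) : ℝ := m (fun θ => inner ℝ (R.U (θ + 1) x) (R.U θ y))

variable {m}

theorem D_le {V : ℚ → H} {B : ℝ} (hV : ∀ θ, ‖V θ‖ ≤ B) (y : ℚ) (b : H) :
    |R.D m V y b| ≤ B * ‖b‖ := by
  refine m.bd _ _ fun θ => (abs_real_inner_le_norm _ _).trans ?_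
  rw [R.norm]; gcongr; exact hV θ

theorem gram (hm : m.AffInv) {u u' : ℚ} (h : u ≠ u') (x y : H) :
    m (fun θ => inner ℝ (R.U (θ - u) x) (R.U (θ - u') y)) = R.C m x y := by
  have h0 : u' - u ≠ 0 := sub_ne_zero.2 h.symm
  rw [← hm (u' - u) u' h0 _ (BF.inner (fun θ => (R.norm _ x).le) (fun θ => (R.norm _ y).le))]
  refine hm.congr {0, -1} fun θ hθ => ?_
  simp only [Finset.mem_insert, Finset.mem_singleton, not_or] at hθ
  have h1 : θ + 1 ≠ 0 := fun h => hθ.2 (by linarith)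
  have e1 : (u' - u) * θ + u' - u = (u' - u) * (θ + 1) := by ring
  have e2 : (u' - u) * θ + u' - u' = (u' - u) * θ := by ring
  rw [e1, e2]
  exact R.ieq (mul_ne_zero h0 h1) (mul_ne_zero h0 hθ.1) h1 hθ.1 (by ring) x y

theorem C_symm (hm : m.AffInv) (x y : H) : R.C m x y = R.C m y x := by
  rw [← R.gram hm zero_ne_one x y, ← R.gram hm one_ne_zero y x]
  congr 1; ext θ; exact real_inner_comm _ _

theorem dec (hm : m.AffInv) (V : ℚ → H) {B B' : ℝ} (hV : ∀ θ, ‖V θ‖ ≤ B') (n : ℕ)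
    (y : ℕ → ℚ) (b : ℕ → H) (hb : ∀ j, ‖b j‖ ≤ B) (hy : Set.InjOn y (Finset.range n)) :
    |∑ j ∈ Finset.range n, (R.D m V (y j) (b j) - m (fun v => R.D m V v (b j)))|
      ≤ 2 * B * B' * √n := by
  have hB : 0 ≤ B := (norm_nonneg _).trans (hb 0)
  have hB' : 0 ≤ B' := (norm_nonneg _).trans (hV 0)
  let E : ℚ → H → GH m H := fun y b => gj m (fun θ => R.U (θ - y) b)
  have bdE : ∀ y b, ∃ C, ∀ θ, ‖R.U (θ - y) b‖ ≤ C := fun y b => ⟨‖b‖, fun θ => (R.norm _ _).le⟩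
  have hVb : ∃ C, ∀ x, ‖V x‖ ≤ C := ⟨B', hV⟩
  have E1 : ∀ y b b', inner ℝ (E y b) (E y b') = inner ℝ b b' := by
    intro y b b'
    rw [gj_inner m (bdE y b) (bdE y b')]
    simp only [R.inn, m.map_const]
  have E2 : ∀ y y' b b', y ≠ y' → inner ℝ (E y b) (E y' b') = R.C m b b' := by
    intro y y' b b' h
    rw [gj_inner m (bdE y b) (bdE y' b')]
    exact R.gram hm h b b'
  have En : ∀ y b, ‖E y b‖ = ‖b‖ := by
    intro y b
    rw [norm_eq_sqrt_real_inner, E1, ← norm_eq_sqrt_real_inner]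
  have ED : ∀ y b, inner ℝ (gj m V) (E y b) = R.D m V y b := by
    intro y b; rw [gj_inner m hVb (bdE y b)]; rfl
  have hF : ∀ b : H, ∃ z : GH m H, ‖z‖ ≤ ‖b‖ ∧ ∀ w, m (fun v => inner ℝ (E v b) w) = inner ℝ z w :=
    fun b => exists_vm m (fun v => E v b) (fun v => (En v b).le)
  choose F Fn hF using hF
  have F1 : ∀ y b b', inner ℝ (F b) (E y b') = R.C m b b' := by
    intro y b b'
    rw [← hF, ← m.map_const (R.C m b b')]
    refine hm.congr {y} fun v hv => E2 _ _ _ _ (by simpa using hv)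
  have F2 : ∀ b b', inner ℝ (F b) (F b') = R.C m b b' := by
    intro b b'
    rw [real_inner_comm, ← hF, ← m.map_const (R.C m b b')]
    congr 1; ext v; rw [real_inner_comm, F1]
  have FD : ∀ b, inner ℝ (gj m V) (F b) = m (fun v => R.D m V v b) := by
    intro b
    rw [real_inner_comm, ← hF]
    congr 1; ext v; rw [real_inner_comm, ED]
  let G : ℕ → GH m H := fun j => E (y j) (b j) - F (b j)
  have Gn : ∀ j, ‖G j‖ ≤ 2 * B := fun j => by
    refine (norm_sub_le _ _).trans ?_
    rw [En]; linarith [hb j, Fn (b j)]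
  have Go : ∀ i ∈ Finset.range n, ∀ j ∈ Finset.range n, i ≠ j → inner ℝ (G i) (G j) = 0 := by
    intro i hi j hj hij
    have : y i ≠ y j := fun h => hij (hy (by simpa using hi) (by simpa using hj) h)
    simp only [G, inner_sub_left, inner_sub_right]
    rw [E2 _ _ _ _ this, F1, F2, real_inner_comm, F1, R.C_symm hm (b j) (b i)]; ring
  have hs : ‖∑ j ∈ Finset.range n, G j‖^2 ≤ (2 * B * √n)^2 := by
    rw [← real_inner_self_eq_norm_sq, sum_inner]
    have : ∀ i ∈ Finset.range n, inner ℝ (G i) (∑ j ∈ Finset.range n, G j) ≤ (2*B)^2 := by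
      intro i hi
      rw [inner_sum, Finset.sum_eq_single i]
      · rw [real_inner_self_eq_norm_sq]; gcongr; exact Gn i
      · intro j hj hji; exact Go i hi j hj hji.symm
      · intro h; exact absurd hi h
    refine (Finset.sum_le_sum this).trans ?_
    rw [mul_pow _ (√(n:ℝ)), Real.sq_sqrt (by positivity)]
    simp; linarith
  have hs' := le_of_sq_le_sq hs (by positivity)
  have hVn : ‖gj m V‖ ≤ B' := by
    have : ‖gj m V‖^2 ≤ B'^2 := by
      rw [← real_inner_self_eq_norm_sq, gj_inner m hVb hVb]
      refine (le_abs_self _).trans (m.bd _ _ fun x => ?_)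
      rw [real_inner_self_eq_norm_sq, abs_of_nonneg (by positivity)]
      gcongr; exact hV x
    exact le_of_sq_le_sq this hB'
  have he : ∑ j ∈ Finset.range n, (R.D m V (y j) (b j) - m (fun v => R.D m V v (b j)))
      = inner ℝ (gj m V) (∑ j ∈ Finset.range n, G j) := by
    rw [inner_sum]
    refine Finset.sum_congr rfl fun j _ => ?_
    simp only [G, inner_sub_right, ED, FD]
  rw [he]
  refine (abs_real_inner_le_norm _ _).trans ?_
  calc _ ≤ B' * (2 * B * √n) := by gcongr
    _ = _ := by ring

theorem eq_zero_of_sqrt {a K : ℝ} (h : ∀ n : ℕ, (n:ℝ) * |a| ≤ K * √n) : a = 0 := by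
  by_contra ha
  have ha : 0 < |a| := abs_pos.2 ha
  obtain ⟨n, hn⟩ := exists_nat_gt ((K/|a|)^2)
  have h1 := h n
  have hn0 : (0:ℝ) < n := lt_of_le_of_lt (by positivity) hn
  have hs : 0 < √(n:ℝ) := Real.sqrt_pos.2 hn0
  have h2 : √(n:ℝ) * |a| ≤ K := by
    have : √(n:ℝ) * √(n:ℝ) = n := Real.mul_self_sqrt hn0.le
    have h3 : √(n:ℝ) * (√(n:ℝ) * |a|) ≤ √(n:ℝ) * K := by
      rw [← mul_assoc, this]; linarith
    exact le_of_mul_le_mul_left h3 hs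
  have h3 : √(n:ℝ) ≤ K / |a| := by rwa [le_div_iff₀ ha]
  have h4 : (n:ℝ) ≤ (K/|a|)^2 := by
    rw [← Real.sq_sqrt hn0.le]; gcongr
  linarith

theorem dec2 (hm : m.AffInv) {N : MMean ℚ} (hN : N.AffInv) (V : ℚ → ℚ → H) (b : ℚ → H) {B B' : ℝ}
    (hV : ∀ v θ, ‖V v θ‖ ≤ B') (hb : ∀ x, ‖b x‖ ≤ B) :
    N (fun x => m (fun v => R.D m (V v) x (b x))) =
      N (fun x => m (fun v => m (fun w => R.D m (V v) w (b x)))) := by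
  have hB : 0 ≤ B := (norm_nonneg _).trans (hb 0)
  have hB' : 0 ≤ B' := (norm_nonneg _).trans (hV 0 0)
  let g : ℚ → ℝ := fun x => m (fun v => R.D m (V v) x (b x) - m (fun w => R.D m (V v) w (b x)))
  have hD : ∀ v x w, |R.D m (V v) w (b x)| ≤ B' * B := fun v x w =>
    (R.D_le (hV v) w (b x)).trans (by gcongr; exact hb x)
  have hg : BF g := ⟨B' * B + B' * B, fun x => m.bd _ _ fun v =>
    (abs_sub _ _).trans (add_le_add (hD _ _ _) (m.bd _ _ fun w => hD _ _ _))⟩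
  have h0 : N g = 0 := by
    apply eq_zero_of_sqrt (K := 2 * B * B')
    intro n
    have h1 : N (fun x => ∑ j ∈ Finset.range n, g (x + j)) = n * N g := by
      rw [N.map_sum]
      have : ∀ j : ℕ, N (fun x => g (x + j)) = N g := fun j => by
        have := hN 1 j one_ne_zero g hg
        simpa using this
      simp [this]
    have h2 : (n:ℝ) * |N g| = |N (fun x => ∑ j ∈ Finset.range n, g (x + j))| := by
      rw [h1, abs_mul, Nat.abs_cast]
    rw [h2]
    refine N.bd _ _ fun x => ?_
    simp only [g]
    rw [← m.map_sum]
    refine m.bd _ _ fun v => ?_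
    refine R.dec hm (V v) (hV v) n (fun j => x + j) (fun j => b (x + j)) (fun j => hb _) ?_
    intro i _ j _ h
    simpa using h
  simp only [g] at h0
  rw [← sub_eq_zero, ← N.map_sub, ← h0]
  congr 1; ext x; rw [m.map_sub]

theorem dec1 (hm : m.AffInv) {N : MMean ℚ} (hN : N.AffInv) (V : ℚ → ℚ → H) (b : ℚ → ℚ → H)
    (y : ℚ → ℚ → ℚ) {B B' : ℝ}
    (hV : ∀ x θ, ‖V x θ‖ ≤ B') (hb : ∀ t x, ‖b t x‖ ≤ B)
    (hy : ∀ n : ℕ, ∀ t : ℚ, t ≠ 0 → ∃ S : Finset ℚ, ∀ x ∉ S,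
      Set.InjOn (fun j : ℕ => y (((j:ℚ)+1) * t) x) (Finset.range n)) :
    N (fun t => N (fun x => R.D m (V x) (y t x) (b t x))) =
      N (fun t => N (fun x => m (fun v => R.D m (V x) v (b t x)))) := by
  have hB : 0 ≤ B := (norm_nonneg _).trans (hb 0 0)
  have hB' : 0 ≤ B' := (norm_nonneg _).trans (hV 0 0)
  let g : ℚ → ℝ := fun t => N (fun x => R.D m (V x) (y t x) (b t x) -
    m (fun w => R.D m (V x) w (b t x)))
  have hD : ∀ t x w, |R.D m (V x) w (b t x)| ≤ B' * B := fun t x w =>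
    (R.D_le (hV x) w (b t x)).trans (by gcongr; exact hb t x)
  have hg : BF g := ⟨B' * B + B' * B, fun x => N.bd _ _ fun v =>
    (abs_sub _ _).trans (add_le_add (hD _ _ _) (m.bd _ _ fun w => hD _ _ _))⟩
  have h0 : N g = 0 := by
    apply eq_zero_of_sqrt (K := 2 * B * B')
    intro n
    have h1 : N (fun t => ∑ j ∈ Finset.range n, g (((j:ℚ)+1) * t)) = n * N g := by
      rw [N.map_sum]
      have : ∀ j : ℕ, N (fun t => g (((j:ℚ)+1) * t)) = N g := fun j => by
        have := hN ((j:ℚ)+1) 0 (by positivity) g hg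
        simpa using this
      simp [this]
    have h2 : (n:ℝ) * |N g| = |N (fun t => ∑ j ∈ Finset.range n, g (((j:ℚ)+1) * t))| := by
      rw [h1, abs_mul, Nat.abs_cast]
    rw [h2]
    refine hN.abs_le {0} (by positivity) fun t ht => ?_
    simp only [g]
    rw [← N.map_sum]
    obtain ⟨S, hS⟩ := hy n t (by simpa using ht)
    refine hN.abs_le S (by positivity) fun x hx => ?_
    exact R.dec hm (V x) (hV x) n (fun j => y (((j:ℚ)+1) * t) x)
      (fun j => b (((j:ℚ)+1) * t) x) (fun j => hb _ _) (hS x hx)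
  simp only [g] at h0
  rw [← sub_eq_zero, ← N.map_sub, ← h0]
  congr 1; ext x; rw [N.map_sub]

end QRep

namespace QRep
variable {H : Type} [NormedAddCommGroup H] [InnerProductSpace ℝ H] [CompleteSpace H]
variable (R : QRep H)

/-- the ratio -/
def rr (e c t : ℚ) : ℚ := c * (t^2 + e) / t

/-- twisted vector -/
def Bv (e c : ℚ) (ξ : H) (t : ℚ) : H := R.U (1 / rr e c t) ξ

theorem Bv_norm (e c : ℚ) (ξ : H) (t : ℚ) : ‖R.Bv e c ξ t‖ = ‖ξ‖ := R.norm _ _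

theorem sq_ne {e : ℚ} (he : e = 1 ∨ e = -1) {t : ℚ} (h1 : t ≠ 1) (h2 : t ≠ -1) :
    t^2 + e ≠ 0 := by
  intro h
  rcases he with rfl | rfl
  · nlinarith [sq_nonneg t]
  · have : (t-1)*(t+1) = 0 := by linarith
    rcases mul_eq_zero.1 this with h | h
    · exact h1 (by linarith)
    · exact h2 (by linarith)

theorem esq {e : ℚ} (he : e = 1 ∨ e = -1) : e^2 = 1 := by rcases he with rfl | rfl <;> norm_num

theorem rr_ne {e c : ℚ} (hc : c ≠ 0) {t : ℚ} (h0 : t ≠ 0) (h1 : t^2+e ≠ 0) : rr e c t ≠ 0 :=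
  div_ne_zero (mul_ne_zero hc h1) h0

theorem rr_opl {e c : ℚ} (he : e = 1 ∨ e = -1) {t θ : ℚ} (h0 : t ≠ 0)
    (h2 : θ + t ≠ 0) (h3 : θ - e/t ≠ 0) :
    rr e c (MMean.opl e t θ) = rr e c t * (θ^2 + e) / ((θ - e/t) * (θ + t)) := by
  have h4 : t * θ - e ≠ 0 := by
    intro h; apply h3; field_simp; linarith
  have h5 : t + θ ≠ 0 := by rwa [add_comm]
  have h6 : θ * t - e ≠ 0 := by rwa [mul_comm]
  have e1 : θ - e/t = (t * θ - e)/t := by field_simp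
  rw [e1]
  unfold rr MMean.opl
  have := esq he
  rw [add_comm θ t]
  have key : (t * θ - e)^2 + e * (t+θ)^2 = (t^2+e) * (θ^2+e) + (e^2 - e^2) := by ring
  have e2 : ((t * θ - e) / (t + θ))^2 + e = (t^2+e) * (θ^2+e) / (t+θ)^2 := by
    field_simp; linarith
  rw [e2]
  field_simp

/-- the vectors in the first Cauchy-Schwarz -/
def Xv (e c : ℚ) (ξ : H) (t θ : ℚ) : H := R.U ((θ + t) * (θ - e/t)) (R.Bv e c ξ t)

theorem Xv_norm (e c : ℚ) (ξ : H) (t θ : ℚ) : ‖R.Xv e c ξ t θ‖ = ‖ξ‖ := by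
  rw [Xv, R.norm, Bv_norm]

theorem phi_op {m : MMean ℚ} (hm : m.AffInv) {e c : ℚ} (he : e = 1 ∨ e = -1) (hc : c ≠ 0) (ξ y : H)
    {t : ℚ} (h0 : t ≠ 0) (h1 : t^2 + e ≠ 0) :
    m (fun θ => inner ℝ (R.Bv e c ξ (MMean.opl e t θ)) y) =
      m (fun θ => inner ℝ (R.Xv e c ξ t θ) (R.U (θ^2 + e) y)) := by
  refine hm.congr {-t, e/t, 1, -1} fun θ hθ => ?_
  simp only [Finset.mem_insert, Finset.mem_singleton, not_or] at hθ
  obtain ⟨a1, a2, a3, a4⟩ := hθ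
  have b1 : θ + t ≠ 0 := fun h => a1 (by linarith)
  have b2 : θ - e/t ≠ 0 := sub_ne_zero.2 a2
  have b3 := sq_ne he a3 a4
  have b4 : rr e c t ≠ 0 := rr_ne hc h0 h1
  have b5 := rr_opl (c := c) he h0 b1 b2
  have b6 : rr e c (MMean.opl e t θ) ≠ 0 := by
    rw [b5]; positivity
  unfold Xv Bv
  rw [R.mul _ _ (mul_ne_zero b1 b2) (one_div_ne_zero b4)]
  conv_lhs => rw [← R.one y]
  refine R.ieq (one_div_ne_zero b6) one_ne_zero (by positivity) b3 ?_ ξ y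
  rw [b5]
  field_simp

/-- position of the second pole -/
def yy (e t x : ℚ) : ℚ := (1 - x) / (1 - x - x * e / t^2)
/-- change of variables -/
def ss (e t x : ℚ) : ℚ := t - x * (t + e/t)

theorem F_norm {m : MMean ℚ} (hm : m.AffInv) {e c : ℚ} (he : e = 1 ∨ e = -1) (hc : c ≠ 0) (ξ : H)
    {t x : ℚ} (h0 : t ≠ 0) (h1 : t^2 + e ≠ 0) (hs0 : ss e t x ≠ 0) (hs1 : (ss e t x)^2 + e ≠ 0) :
    m (fun θ => inner ℝ (R.Xv e c ξ t θ) (R.Xv e c ξ (ss e t x) θ)) =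
      R.D m (fun θ => R.U (θ * (θ-1) / (θ - x)) ξ) (yy e t x)
        (R.U (rr e c t / rr e c (ss e t x)) ξ) := by
  set s := ss e t x with hs
  set y := yy e t x with hy
  have hp : t + e/t ≠ 0 := by
    have : t + e/t = (t^2+e)/t := by field_simp
    rw [this]; positivity
  set p := t + e/t with hpd
  have hsp : s = t - x * p := rfl
  have hd : 1 - x - x * e / t^2 = s / t := by
    rw [hsp, hpd]; field_simp; ring
  have hyp : e/s = p * y - t := by
    rw [hy, yy, hd]
    have : t^2 * p = t * (t^2 + e) := by rw [hpd]; field_simp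
    have h3 : s = t - x*p := hsp
    have h4 : p * t = t^2 + e := by rw [hpd]; field_simp
    field_simp
    rw [h3]; linear_combination -h4
  have c1 := rr_ne (e := e) hc h0 h1
  have c2 := rr_ne (e := e) hc hs0 hs1
  rw [← hm p (-t) hp _ (BF.inner (fun θ => (R.Xv_norm e c ξ t θ).le)
    (fun θ => (R.Xv_norm e c ξ s θ).le))]
  refine hm.congr {0, 1, x, y} fun θ hθ => ?_
  simp only [Finset.mem_insert, Finset.mem_singleton, not_or] at hθ
  obtain ⟨a1, a2, a3, a4⟩ := hθ
  have b2 : θ - 1 ≠ 0 := sub_ne_zero.2 a2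
  have b3 : θ - x ≠ 0 := sub_ne_zero.2 a3
  have b4 : θ - y ≠ 0 := sub_ne_zero.2 a4
  unfold Xv Bv
  have e1 : p * θ + -t + t = p * θ := by ring
  have e2 : p * θ + -t - e/t = p * (θ - 1) := by rw [hpd]; ring
  have e3 : p * θ + -t + s = p * (θ - x) := by rw [hsp]; ring
  have e4 : p * θ + -t - e/s = p * (θ - y) := by rw [hyp]; ring
  rw [e1, e2, e3, e4]
  rw [R.mul _ _ (by positivity) (by positivity), R.mul _ _ (by positivity) (by positivity),
    R.mul _ _ (by positivity) (by positivity)]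
  refine R.ieq (by positivity) (by positivity) (by positivity) (by positivity) ?_ ξ ξ
  field_simp

theorem yy_inj {e : ℚ} (he : e = 1 ∨ e = -1) (n : ℕ) (t : ℚ) (ht : t ≠ 0) :
    ∃ S : Finset ℚ, ∀ x ∉ S,
      Set.InjOn (fun j : ℕ => yy e (((j:ℚ)+1) * t) x) (Finset.range n) := by
  classical
  refine ⟨{0, 1} ∪ (Finset.range n).image (fun j : ℕ => 1/(1 + e/(((j:ℚ)+1) * t)^2)), ?_⟩
  intro x hx
  simp only [Finset.mem_union, Finset.mem_insert, Finset.mem_singleton, Finset.mem_image, not_or,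
    not_exists, not_and] at hx
  obtain ⟨⟨x0, x1⟩, hx⟩ := hx
  have hd : ∀ i ∈ Finset.range n, 1 - x - x * e / (((i:ℚ)+1) * t)^2 ≠ 0 := by
    intro i hi h
    apply hx i hi
    have : x * (1 + e/(((i:ℚ)+1) * t)^2) = 1 := by
      have : x * e / (((i:ℚ)+1) * t)^2 = x * (e / (((i:ℚ)+1) * t)^2) := by ring
      rw [this] at h; linarith
    rw [eq_comm]
    exact eq_one_div_of_mul_eq_one_left this
  intro i hi j hj hij
  have di := hd i (by simpa using hi)
  have dj := hd j (by simpa using hj)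
  simp only [yy] at hij
  have hx1 : 1 - x ≠ 0 := sub_ne_zero.2 (Ne.symm x1)
  rw [div_eq_div_iff di dj] at hij
  have h2 := mul_left_cancel₀ hx1 hij
  have he0 : e ≠ 0 := by rcases he with rfl | rfl <;> norm_num
  have hi0 : ((i:ℚ)+1) ≠ 0 := by positivity
  have hj0 : ((j:ℚ)+1) ≠ 0 := by positivity
  have h3 : x * e / (((j:ℚ)+1) * t)^2 = x * e / (((i:ℚ)+1) * t)^2 := by linarith
  rw [div_eq_div_iff (by positivity) (by positivity)] at h3
  have h4 := mul_left_cancel₀ (mul_ne_zero x0 he0) h3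
  rw [mul_pow, mul_pow] at h4
  have h5 := mul_right_cancel₀ (by positivity : t^2 ≠ 0) h4
  have h6 : (i:ℚ) + 1 = j + 1 := by
    exact (pow_left_inj₀ (by positivity) (by positivity) two_ne_zero).1 h5
  have : (i:ℚ) = j := by linarith
  exact_mod_cast this

/-- limiting form -/
noncomputable def kap (m : MMean ℚ) (a b : H) : ℝ :=
  m (fun v => m (fun w => R.D m (fun θ => R.U (θ * (θ-1) / (θ - v)) a) w b))

theorem kap_le (m : MMean ℚ) (a b : H) : |R.kap m a b| ≤ ‖a‖ * ‖b‖ :=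
  m.bd _ _ fun v => m.bd _ _ fun w => R.D_le (fun θ => (R.norm _ a).le) w b

theorem kap_add_right (m : MMean ℚ) (a b b' : H) :
    R.kap m a (b + b') = R.kap m a b + R.kap m a b' := by
  simp only [kap, D, _root_.map_add, inner_add_right, MMean.map_add]
theorem kap_add_left (m : MMean ℚ) (a b b' : H) :
    R.kap m (b + b') a = R.kap m b a + R.kap m b' a := by
  simp only [kap, D, _root_.map_add, inner_add_left, MMean.map_add]
theorem kap_smul_right (m : MMean ℚ) (c : ℝ) (a b : H) :
    R.kap m a (c • b) = c * R.kap m a b := by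
  simp only [kap, D, _root_.map_smul, real_inner_smul_right, MMean.map_mul]
theorem kap_smul_left (m : MMean ℚ) (c : ℝ) (a b : H) :
    R.kap m (c • b) a = c * R.kap m b a := by
  simp only [kap, D, _root_.map_smul, real_inner_smul_left, MMean.map_mul]

theorem kap_vm (m N : MMean ℚ) (v : ℚ → H) {C : ℝ} (hv : ∀ x, ‖v x‖ ≤ C) {z : H}
    (hz : ∀ y, N (fun x => inner ℝ (v x) y) = inner ℝ z y) :
    N (fun t => N (fun s => R.kap m (v t) (v s))) = R.kap m z z := by
  have h1 : ∀ a, N (fun s => R.kap m a (v s)) = R.kap m a z := fun a =>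
    vm_functional N v hv hz ⟨⟨R.kap m a, R.kap_add_right m a⟩, fun c b => R.kap_smul_right m c a b⟩
      (D := ‖a‖) (fun y => R.kap_le m a y)
  simp only [h1]
  exact vm_functional N v hv hz ⟨⟨fun a => R.kap m a z, fun a b => R.kap_add_left m z a b⟩,
    fun c b => R.kap_smul_left m c z b⟩
      (D := ‖z‖) (fun y => by rw [mul_comm]; exact R.kap_le m y z)

theorem kap_sq {m : MMean ℚ} (hm : m.AffInv) (z : H) : (R.kap m z z)^2 ≤ ‖z‖^2 * R.C m z z := by
  have h : ∀ v, (m (fun w => R.D m (fun θ => R.U (θ * (θ-1) / (θ - v)) z) w z))^2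
      ≤ ‖z‖^2 * R.C m z z := by
    intro v
    have := CS2 m m (fun θ => R.U (θ * (θ-1) / (θ - v)) z) (fun w θ => R.U (θ - w) z)
      (fun θ => (R.norm _ z).le) (fun w θ => (R.norm _ z).le)
    refine this.trans (le_of_eq ?_)
    simp only [R.inn, m.map_const, real_inner_self_eq_norm_sq]
    congr 1
    rw [← m.map_const (R.C m z z)]
    congr 1; ext w
    rw [← m.map_const (R.C m z z)]
    refine hm.congr {w} fun w' hw => ?_
    exact R.gram hm (Ne.symm (by simpa using hw)) z z
  have h0 := (sq_nonneg _).trans (h 0)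
  have h1 : |R.kap m z z| ≤ √(‖z‖^2 * R.C m z z) := m.bd _ _ fun v => Real.abs_le_sqrt (h v)
  have := pow_le_pow_left₀ (abs_nonneg _) h1 2
  rwa [sq_abs, Real.sq_sqrt h0] at this

end QRep

namespace QRep
variable {H : Type} [NormedAddCommGroup H] [InnerProductSpace ℝ H] [CompleteSpace H]
variable (R : QRep H)

theorem S_eq {m N : MMean ℚ} (hm : m.AffInv) (hN : N.AffInv) {e c : ℚ} (he : e = 1 ∨ e = -1)
    (hc : c ≠ 0) (ξ ζ : H) (hζ : ∀ y, N (fun t => inner ℝ (R.Bv e c ξ t) y) = inner ℝ ζ y) :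
    N (fun t => N (fun s => m (fun θ => inner ℝ (R.Xv e c ξ t θ) (R.Xv e c ξ s θ)))) =
      R.kap m ζ ζ := by
  classical
  have hpne : ∀ t : ℚ, t ≠ 0 → t^2 + e ≠ 0 → t + e/t ≠ 0 := fun t h0 h1 => by
    have : t + e/t = (t^2+e)/t := by field_simp
    rw [this]; positivity
  -- change of variable s = ss e t x
  have cv : ∀ f : ℚ → ℚ → ℝ, (∃ C, ∀ t s, |f t s| ≤ C) →
      N (fun t => N (fun s => f t s)) = N (fun t => N (fun x => f t (ss e t x))) := by
    rintro f ⟨C, hC⟩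
    refine hN.congr {0, 1, -1} fun t ht => ?_
    simp only [Finset.mem_insert, Finset.mem_singleton, not_or] at ht
    have hp := hpne t ht.1 (sq_ne he ht.2.1 ht.2.2)
    rw [← hN (-(t + e/t)) t (neg_ne_zero.2 hp) _ ⟨C, hC t⟩]
    congr 1; ext x; congr 1; unfold ss; ring
  -- bad set of x for given t
  have good : ∀ t : ℚ, t ≠ 0 → t^2 + e ≠ 0 → ∃ S : Finset ℚ, ∀ x ∉ S,
      ss e t x ≠ 0 ∧ (ss e t x)^2 + e ≠ 0 := by
    intro t h0 h1
    have hp := hpne t h0 h1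
    refine ⟨{t/(t + e/t), (t-1)/(t + e/t), (t+1)/(t+e/t)}, fun x hx => ?_⟩
    simp only [Finset.mem_insert, Finset.mem_singleton, not_or] at hx
    obtain ⟨a, b, d⟩ := hx
    refine ⟨fun h => a ?_, sq_ne he (fun h => b ?_) (fun h => d ?_)⟩ <;>
    · rw [eq_div_iff hp]; unfold ss at h; linarith
  have st1 : N (fun t => N (fun s => m (fun θ => inner ℝ (R.Xv e c ξ t θ) (R.Xv e c ξ s θ)))) =
      N (fun t => N (fun x => R.D m (fun θ => R.U (θ * (θ-1) / (θ - x)) ξ) (yy e t x)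
        (R.U (rr e c t / rr e c (ss e t x)) ξ))) := by
    rw [cv _ ⟨‖ξ‖ * ‖ξ‖, fun t s => m.bd _ _ fun θ => (abs_real_inner_le_norm _ _).trans
      (by rw [Xv_norm, Xv_norm])⟩]
    refine hN.congr {0, 1, -1} fun t ht => ?_
    simp only [Finset.mem_insert, Finset.mem_singleton, not_or] at ht
    have h1 := sq_ne he ht.2.1 ht.2.2
    obtain ⟨S, hS⟩ := good t ht.1 h1
    refine hN.congr S fun x hx => ?_
    exact R.F_norm hm he hc ξ ht.1 h1 (hS x hx).1 (hS x hx).2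
  rw [st1]
  rw [R.dec1 hm hN (fun x θ => R.U (θ * (θ-1) / (θ - x)) ξ)
    (fun t x => R.U (rr e c t / rr e c (ss e t x)) ξ) (yy e) (fun x θ => (R.norm _ ξ).le)
    (fun x θ => (R.norm _ ξ).le) (fun n t ht => yy_inj he n t ht)]
  -- swap the roles of x and v
  have sw : ∀ t x v : ℚ, rr e c t / rr e c (ss e t x) ≠ 0 →
      R.D m (fun θ => R.U (θ * (θ-1) / (θ - x)) ξ) v (R.U (rr e c t / rr e c (ss e t x)) ξ) =
      R.D m (fun θ => R.U (θ * (θ-1) / (θ - v)) ξ) x (R.U (rr e c t / rr e c (ss e t x)) ξ) := by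
    intro t x v h
    refine hm.congr {0, 1, x, v} fun θ hθ => ?_
    simp only [Finset.mem_insert, Finset.mem_singleton, not_or] at hθ
    obtain ⟨a1, a2, a3, a4⟩ := hθ
    have b2 : θ - 1 ≠ 0 := sub_ne_zero.2 a2
    have b3 : θ - x ≠ 0 := sub_ne_zero.2 a3
    have b4 : θ - v ≠ 0 := sub_ne_zero.2 a4
    refine R.ieq (by positivity) (by positivity) (by positivity) (by positivity) ?_ _ _
    field_simp
  have st2 : N (fun t => N (fun x => m (fun v => R.D m (fun θ => R.U (θ * (θ-1) / (θ - x)) ξ) v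
        (R.U (rr e c t / rr e c (ss e t x)) ξ)))) =
      N (fun t => N (fun x => m (fun v => R.D m (fun θ => R.U (θ * (θ-1) / (θ - v)) ξ) x
        (R.U (rr e c t / rr e c (ss e t x)) ξ)))) := by
    refine hN.congr {0, 1, -1} fun t ht => ?_
    simp only [Finset.mem_insert, Finset.mem_singleton, not_or] at ht
    have h1 := sq_ne he ht.2.1 ht.2.2
    obtain ⟨S, hS⟩ := good t ht.1 h1
    refine hN.congr S fun x hx => ?_
    congr 1; ext v
    exact sw t x v (div_ne_zero (rr_ne hc ht.1 h1) (rr_ne hc (hS x hx).1 (hS x hx).2))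
  rw [st2]
  have st3 : ∀ t, N (fun x => m (fun v => R.D m (fun θ => R.U (θ * (θ-1) / (θ - v)) ξ) x
        (R.U (rr e c t / rr e c (ss e t x)) ξ))) =
      N (fun x => R.kap m ξ (R.U (rr e c t / rr e c (ss e t x)) ξ)) := by
    intro t
    exact R.dec2 hm hN (fun v θ => R.U (θ * (θ-1) / (θ - v)) ξ)
      (fun x => R.U (rr e c t / rr e c (ss e t x)) ξ) (fun x θ => (R.norm _ ξ).le)
      (fun x => (R.norm _ ξ).le)
  simp only [st3]
  have st4 : N (fun t => N (fun x => R.kap m ξ (R.U (rr e c t / rr e c (ss e t x)) ξ))) =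
      N (fun t => N (fun x => R.kap m (R.Bv e c ξ t) (R.Bv e c ξ (ss e t x)))) := by
    refine hN.congr {0, 1, -1} fun t ht => ?_
    simp only [Finset.mem_insert, Finset.mem_singleton, not_or] at ht
    have h1 := sq_ne he ht.2.1 ht.2.2
    obtain ⟨S, hS⟩ := good t ht.1 h1
    refine hN.congr S fun x hx => ?_
    have r1 := rr_ne (e := e) hc ht.1 h1
    have r2 := rr_ne (e := e) hc (hS x hx).1 (hS x hx).2
    unfold kap Bv
    congr 1; ext v; congr 1; ext w
    refine hm.congr {0, 1, v, w} fun θ hθ => ?_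
    simp only [Finset.mem_insert, Finset.mem_singleton, not_or] at hθ
    obtain ⟨a1, a2, a3, a4⟩ := hθ
    have b2 : θ - 1 ≠ 0 := sub_ne_zero.2 a2
    have b3 : θ - v ≠ 0 := sub_ne_zero.2 a3
    have b4 : θ - w ≠ 0 := sub_ne_zero.2 a4
    dsimp only
    rw [R.mul _ _ (by positivity) (by positivity), R.mul _ _ (by positivity) (by positivity),
      R.mul _ _ (by positivity) (by positivity)]
    refine R.ieq (by positivity) (by positivity) (by positivity) (by positivity) ?_ _ _
    field_simp
  rw [st4, ← cv (fun t s => R.kap m (R.Bv e c ξ t) (R.Bv e c ξ s)) ⟨‖ξ‖ * ‖ξ‖, fun t s =>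
    (R.kap_le m _ _).trans (by rw [Bv_norm, Bv_norm])⟩]
  exact R.kap_vm m N _ (fun t => (R.Bv_norm e c ξ t).le) hζ

theorem claim3 {m N : MMean ℚ} (hm : m.AffInv) (hN : N.AffInv) {e c : ℚ} (he : e = 1 ∨ e = -1)
    (hfix : ∀ f, BF f → N (fun t => m (fun θ => f (MMean.opl e t θ))) = N f)
    (hc : c ≠ 0) (ξ ζ : H) (hζ : ∀ y, N (fun t => inner ℝ (R.Bv e c ξ t) y) = inner ℝ ζ y) :
    ‖ζ‖^2 ≤ R.C m ζ ζ := by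
  have h1 : ‖ζ‖^2 = N (fun t => m (fun θ => inner ℝ (R.U (θ^2 + e) ζ) (R.Xv e c ξ t θ))) := by
    rw [← real_inner_self_eq_norm_sq, ← hζ, ← hfix _ (BF.inner (D := ‖ζ‖)
      (fun t => (R.Bv_norm e c ξ t).le) (fun _ => le_rfl))]
    refine hN.congr {0, 1, -1} fun t ht => ?_
    simp only [Finset.mem_insert, Finset.mem_singleton, not_or] at ht
    rw [R.phi_op hm he hc ξ ζ ht.1 (sq_ne he ht.2.1 ht.2.2)]
    congr 1; ext θ; exact real_inner_comm _ _
  have h2 := CS2 m N (fun θ => R.U (θ^2 + e) ζ) (R.Xv e c ξ)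
    (fun θ => (R.norm _ ζ).le) (fun t θ => (R.Xv_norm e c ξ t θ).le)
  rw [← h1, R.S_eq hm hN he hc ξ ζ hζ] at h2
  simp only [R.inn, m.map_const, real_inner_self_eq_norm_sq] at h2
  have h3 := R.kap_sq hm ζ
  by_cases h0 : ζ = 0
  · subst h0; simp [C, MMean.map_const]
  · have hpos : 0 < ‖ζ‖^2 := by positivity
    have h4 : ‖ζ‖^2 ≤ R.kap m ζ ζ := by
      rw [sq (‖ζ‖^2)] at h2
      exact le_of_mul_le_mul_left h2 hpos
    have h5 : (‖ζ‖^2)^2 ≤ (R.kap m ζ ζ)^2 := by gcongr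
    rw [sq (‖ζ‖^2)] at h5
    exact le_of_mul_le_mul_left (h5.trans h3) hpos

/-- asymptotic equality of families -/
def Rel (m : MMean ℚ) (ζ : H) (g h : ℚ → ℚ) : Prop :=
  m (fun θ => inner ℝ (R.U (g θ) ζ - R.U (h θ) ζ) (R.U (g θ) ζ - R.U (h θ) ζ)) = 0

theorem Rel_bd (ζ : H) (g h : ℚ → ℚ) (θ : ℚ) : ‖R.U (g θ) ζ - R.U (h θ) ζ‖ ≤ 2 * ‖ζ‖ := by
  refine (norm_sub_le _ _).trans ?_
  rw [R.norm, R.norm]; linarith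

theorem Rel.inner {R : QRep H} {m : MMean ℚ} {ζ : H} {g h : ℚ → ℚ} (hr : R.Rel m ζ g h) (V : ℚ → H) {B : ℝ}
    (hV : ∀ θ, ‖V θ‖ ≤ B) : m (fun θ => inner ℝ (V θ) (R.U (g θ) ζ)) =
      m (fun θ => inner ℝ (V θ) (R.U (h θ) ζ)) := by
  have := CS1 m V (fun θ => R.U (g θ) ζ - R.U (h θ) ζ) hV (R.Rel_bd ζ g h)
  unfold Rel at hr
  rw [hr, mul_zero] at this
  have h0 : m (fun θ => Inner.inner ℝ (V θ) (R.U (g θ) ζ - R.U (h θ) ζ)) = 0 := by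
    nlinarith [sq_nonneg (m (fun θ => Inner.inner ℝ (V θ) (R.U (g θ) ζ - R.U (h θ) ζ)))]
  simp only [inner_sub_right] at h0
  rw [m.map_sub] at h0
  linarith

theorem Rel.of_inner {R : QRep H} {m : MMean ℚ} {ζ : H} {g h : ℚ → ℚ}
    (hi : ‖ζ‖^2 ≤ m (fun θ => Inner.inner ℝ (R.U (g θ) ζ) (R.U (h θ) ζ))) : R.Rel m ζ g h := by
  have e1 : m (fun θ => Inner.inner ℝ (R.U (g θ) ζ - R.U (h θ) ζ) (R.U (g θ) ζ - R.U (h θ) ζ)) =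
      2 * ‖ζ‖^2 - 2 * m (fun θ => Inner.inner ℝ (R.U (g θ) ζ) (R.U (h θ) ζ)) := by
    have : ∀ θ, (Inner.inner ℝ (R.U (g θ) ζ - R.U (h θ) ζ) (R.U (g θ) ζ - R.U (h θ) ζ) : ℝ) =
        2 * ‖ζ‖^2 - 2 * Inner.inner ℝ (R.U (g θ) ζ) (R.U (h θ) ζ) := by
      intro θ
      rw [inner_sub_left, inner_sub_right, inner_sub_right, R.inn, R.inn,
        real_inner_self_eq_norm_sq, real_inner_comm (R.U (g θ) ζ) (R.U (h θ) ζ)]; ring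
    simp only [this]
    rw [m.map_sub, m.map_const, m.map_mul]
  have := m.nonneg (BF.inner (R.Rel_bd ζ g h) (R.Rel_bd ζ g h)) (fun θ => real_inner_self_nonneg)
  unfold Rel
  linarith

theorem Rel.trans {R : QRep H} {m : MMean ℚ} {ζ : H} {g h k : ℚ → ℚ} (h1 : R.Rel m ζ g h)
    (h2 : R.Rel m ζ h k) : R.Rel m ζ g k := by
  unfold Rel at *
  refine le_antisymm ?_ (m.nonneg (BF.inner (R.Rel_bd ζ g k) (R.Rel_bd ζ g k))
    (fun θ => real_inner_self_nonneg))
  have : m (fun θ => 2 * Inner.inner ℝ (R.U (g θ) ζ - R.U (h θ) ζ) (R.U (g θ) ζ - R.U (h θ) ζ)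
      + 2 * Inner.inner ℝ (R.U (h θ) ζ - R.U (k θ) ζ) (R.U (h θ) ζ - R.U (k θ) ζ)) = 0 := by
    rw [m.map_add, m.map_mul, m.map_mul, h1, h2]; ring
  rw [← this]
  obtain ⟨C1, hC1⟩ := BF.inner (R.Rel_bd ζ g h) (R.Rel_bd ζ g h)
  obtain ⟨C2, hC2⟩ := BF.inner (R.Rel_bd ζ h k) (R.Rel_bd ζ h k)
  refine m.mono (BF.inner (R.Rel_bd ζ g k) (R.Rel_bd ζ g k)) ⟨2*C1 + 2*C2, fun θ => ?_⟩ fun θ => ?_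
  · refine (abs_add_le _ _).trans ?_
    rw [abs_mul, abs_mul, abs_two]
    linarith [hC1 θ, hC2 θ]
  · simp only [real_inner_self_eq_norm_sq]
    have := norm_add_le (R.U (g θ) ζ - R.U (h θ) ζ) (R.U (h θ) ζ - R.U (k θ) ζ)
    rw [sub_add_sub_cancel] at this
    have h3 := pow_le_pow_left₀ (norm_nonneg _) this 2
    nlinarith [sq_nonneg (‖R.U (g θ) ζ - R.U (h θ) ζ‖ - ‖R.U (h θ) ζ - R.U (k θ) ζ‖)]

theorem Rel.mulc {R : QRep H} {m : MMean ℚ} (hm : m.AffInv) {ζ : H} {g h : ℚ → ℚ}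
    (hr : R.Rel m ζ g h)
    (g' h' : ℚ → ℚ) (S : Finset ℚ) (hS : ∀ θ ∉ S, g θ ≠ 0 ∧ h θ ≠ 0 ∧ ∃ k, k ≠ 0 ∧
      g' θ = k * g θ ∧ h' θ = k * h θ) : R.Rel m ζ g' h' := by
  unfold Rel at *
  rw [← hr]
  refine hm.congr S fun θ hθ => ?_
  obtain ⟨h1, h2, k, hk, e1, e2⟩ := hS θ hθ
  rw [e1, e2, ← R.mul _ _ hk h1, ← R.mul _ _ hk h2, ← map_sub, R.inn]

theorem thmA {e c : ℚ} (he : e = 1 ∨ e = -1) (hc : c ≠ 0) (ξ o : H)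
    (ho : ∀ q, R.U q o = o) (ho1 : ‖o‖ = 1) (hδ : inner ℝ ξ o ≠ 0) (S : Finset ℚ) :
    ∃ t ∉ S, 0 < inner ℝ (R.U (1 / rr e c t) ξ) ξ := by
  obtain ⟨m, N, hm, hN, hfix, hharm⟩ := MMean.exists_means e he
  obtain ⟨ζ, -, hζ⟩ := exists_vm N (R.Bv e c ξ) (fun t => (R.Bv_norm e c ξ t).le)
  have hC := R.claim3 hm hN he hfix hc ξ ζ hζ
  -- rigidity
  have rig : ∀ u : ℚ, R.Rel m ζ (fun θ => θ + u) (fun θ => θ) := by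
    intro u
    apply Rel.of_inner
    by_cases hu : u = 0
    · simp only [hu, add_zero, R.inn, m.map_const, real_inner_self_eq_norm_sq, le_refl]
    · refine hC.trans (le_of_eq ?_)
      rw [← R.gram hm (u := -u) (u' := 0) (by simpa using hu) ζ ζ]
      simp
  have he0 : e ≠ 0 := by rcases he with rfl | rfl <;> norm_num
  have rig2 : ∀ t : ℚ, t ≠ 0 → R.Rel m ζ (fun θ => (θ^2+e)/((θ + t) * (θ - e/t)))
      (fun θ => (θ^2+e)/θ^2) := by
    intro t ht
    have r1 : R.Rel m ζ (fun θ => (θ^2+e)/((θ + t) * (θ - e/t)))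
        (fun θ => (θ^2+e)/((θ + t) * θ)) := by
      have hs := rig (-(e/t))
      -- U_θ vs U_{θ - e/t}
      have hs' : R.Rel m ζ (fun θ => θ) (fun θ => θ + -(e/t)) := by
        unfold Rel at hs ⊢
        rw [← hs]; congr 1; ext θ
        rw [← neg_sub, inner_neg_neg]
      refine hs'.mulc hm _ _ {0, -t, e/t, 1, -1} fun θ hθ => ?_
      simp only [Finset.mem_insert, Finset.mem_singleton, not_or] at hθ
      obtain ⟨a1, a2, a3, a4, a5⟩ := hθ
      have b2 : θ + t ≠ 0 := fun h => a2 (by linarith)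
      have b3 : θ - e/t ≠ 0 := sub_ne_zero.2 a3
      have b4 := sq_ne he a4 a5
      rw [← sub_eq_add_neg]
      refine ⟨a1, b3, (θ^2+e)/((θ + t) * (θ - e/t) * θ), by positivity, ?_, ?_⟩
      · rw [div_mul_eq_mul_div, mul_div_mul_right _ _ a1]
      · rw [mul_right_comm, div_mul_eq_mul_div, mul_div_mul_right _ _ b3]
    have r2 : R.Rel m ζ (fun θ => (θ^2+e)/((θ + t) * θ)) (fun θ => (θ^2+e)/θ^2) := by
      have hs := rig t
      have hs' : R.Rel m ζ (fun θ => θ) (fun θ => θ + t) := by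
        unfold Rel at hs ⊢
        rw [← hs]; congr 1; ext θ
        rw [← neg_sub, inner_neg_neg]
      refine hs'.mulc hm _ _ {0, -t, 1, -1} fun θ hθ => ?_
      simp only [Finset.mem_insert, Finset.mem_singleton, not_or] at hθ
      obtain ⟨a1, a2, a4, a5⟩ := hθ
      have b2 : θ + t ≠ 0 := fun h => a2 (by linarith)
      have b4 := sq_ne he a4 a5
      refine ⟨a1, b2, (θ^2+e)/((θ + t) * θ^2), by positivity, ?_, ?_⟩
      · field_simp
      · field_simp
    exact r1.trans r2
  have hBb : ∀ y : H, BF (fun t => inner ℝ (R.Bv e c ξ t) y) := fun y =>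
    BF.inner (D := ‖y‖) (fun t => (R.Bv_norm e c ξ t).le) (fun _ => le_rfl)
  -- one step
  have step : ∀ t : ℚ, t ≠ 0 → t^2 + e ≠ 0 →
      m (fun θ => inner ℝ (R.Bv e c ξ (MMean.opl e t θ)) ζ) =
      m (fun θ => inner ℝ (R.Bv e c ξ t) (R.U ((θ^2+e)/θ^2) ζ)) := by
    intro t h0 h1
    rw [R.phi_op hm he hc ξ ζ h0 h1]
    rw [← (rig2 t h0).inner (fun _ => R.Bv e c ξ t) (fun _ => le_rfl)]
    refine hm.congr {-t, e/t, 1, -1} fun θ hθ => ?_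
    simp only [Finset.mem_insert, Finset.mem_singleton, not_or] at hθ
    obtain ⟨a1, a2, a3, a4⟩ := hθ
    have b1 : θ + t ≠ 0 := fun h => a1 (by linarith)
    have b2 : θ - e/t ≠ 0 := sub_ne_zero.2 a2
    have b3 := sq_ne he a3 a4
    unfold Xv
    conv_rhs => rw [← R.one (R.Bv e c ξ t)]
    have key : ∀ p q : ℚ, p ≠ 0 → p * (q / p) = 1 * q := fun p q hp => by field_simp
    exact R.ieq (by positivity) b3 one_ne_zero (by positivity) (key _ _ (mul_ne_zero b1 b2)) _ _
  obtain ⟨γ, -, hγ⟩ := exists_vm m (fun θ => R.U ((θ^2+e)/θ^2) ζ) (fun θ => (R.norm _ ζ).le)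
  have hζγ : ‖ζ‖^2 = inner ℝ ζ γ := by
    rw [← hζ, ← real_inner_self_eq_norm_sq, ← hζ, ← hfix _ (hBb ζ)]
    refine hN.congr {0, 1, -1} fun t ht => ?_
    simp only [Finset.mem_insert, Finset.mem_singleton, not_or] at ht
    rw [step t ht.1 (sq_ne he ht.2.1 ht.2.2), real_inner_comm, ← hγ]
    congr 1; ext θ; exact real_inner_comm _ _
  have rig3 : R.Rel m ζ (fun θ => (θ^2+e)/θ^2) (fun _ => 1) := by
    apply Rel.of_inner
    simp only [R.one]
    rw [hγ, real_inner_comm, ← hζγ]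
  have harm : N (fun t => inner ℝ (R.Bv e c ξ t) ζ) = m (fun t => inner ℝ (R.Bv e c ξ t) ζ) := by
    refine hharm _ (hBb ζ) {0, 1, -1} fun t ht => ?_
    simp only [Finset.mem_insert, Finset.mem_singleton, not_or] at ht
    rw [step t ht.1 (sq_ne he ht.2.1 ht.2.2),
      rig3.inner (fun _ => R.Bv e c ξ t) (fun _ => le_rfl)]
    simp only [R.one, m.map_const]
  obtain ⟨ω, -, hω⟩ := exists_vm m (fun θ => R.U θ ζ) (fun θ => (R.norm _ ζ).le)
  have hωinv : ∀ a : ℚ, a ≠ 0 → R.U a ω = ω := by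
    intro a ha
    refine ext_inner_right ℝ fun y => ?_
    rw [← hω, ← hm a 0 ha _ (BF.inner (D := ‖y‖) (fun θ => (R.norm _ ζ).le) (fun _ => le_rfl))]
    have h1 : inner ℝ (R.U a ω) y = inner ℝ ω (R.U a⁻¹ y) := by
      conv_rhs => rw [← R.one ω]
      conv_lhs => rw [← R.one y]
      exact R.ieq ha one_ne_zero one_ne_zero (inv_ne_zero ha) (by field_simp) _ _
    rw [h1, ← hω]
    refine hm.congr {0} fun θ hθ => ?_
    have hθ : θ ≠ 0 := by simpa using hθ
    rw [add_zero]
    conv_rhs => rw [← R.one y]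
    exact R.ieq hθ (inv_ne_zero ha) (mul_ne_zero ha hθ) one_ne_zero (by field_simp) _ _
  have rig4 : R.Rel m ζ (fun θ => rr e c θ) (fun θ => c * θ) := by
    refine rig3.mulc hm _ _ {0, 1, -1} fun θ hθ => ?_
    simp only [Finset.mem_insert, Finset.mem_singleton, not_or] at hθ
    have b4 := sq_ne he hθ.2.1 hθ.2.2
    have a1 := hθ.1
    refine ⟨by positivity, one_ne_zero, c * θ, by positivity, ?_, by ring⟩
    unfold rr; field_simp
  have f1 : ‖ζ‖^2 = inner ℝ ξ ω := by
    rw [← real_inner_self_eq_norm_sq, ← hζ, harm, real_inner_comm, ← hω,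
      ← hm c 0 hc _ (BF.inner (D := ‖ξ‖) (fun θ => (R.norm _ ζ).le) (fun _ => le_rfl))]
    have h2 := rig4.inner (fun _ => ξ) (fun _ => le_rfl)
    simp only [add_zero]
    rw [show (fun x => inner ℝ (R.U (c * x) ζ) ξ) = (fun x => inner ℝ ξ (R.U (c * x) ζ)) from
      funext fun x => real_inner_comm _ _, ← h2]
    refine hm.congr {0, 1, -1} fun t ht => ?_
    simp only [Finset.mem_insert, Finset.mem_singleton, not_or] at ht
    have r1 := rr_ne hc ht.1 (sq_ne he ht.2.1 ht.2.2)
    unfold Bv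
    conv_lhs => rw [← R.one ζ]
    conv_rhs => rw [← R.one ξ]
    exact R.ieq (one_div_ne_zero r1) one_ne_zero one_ne_zero r1 (by field_simp) _ _
  have f2 : inner ℝ ζ ω = inner ℝ ξ ω := by
    rw [← hζ, ← N.map_const (inner ℝ ξ ω)]
    refine hN.congr {0, 1, -1} fun t ht => ?_
    simp only [Finset.mem_insert, Finset.mem_singleton, not_or] at ht
    have r1 := rr_ne hc ht.1 (sq_ne he ht.2.1 ht.2.2)
    unfold Bv
    conv_lhs => rw [← hωinv _ (one_div_ne_zero r1)]
    exact R.inn _ _ _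
  have f3 : inner ℝ ω ω = inner ℝ ζ ω := by
    rw [← hω, ← m.map_const (inner ℝ ζ ω)]
    refine hm.congr {0} fun θ hθ => ?_
    have hθ : θ ≠ 0 := by simpa using hθ
    conv_lhs => rw [← hωinv θ hθ]
    exact R.inn _ _ _
  have f4 : ζ = ω := by
    rw [← sub_eq_zero, ← inner_self_eq_zero (𝕜 := ℝ), inner_sub_left, inner_sub_right,
      inner_sub_right, real_inner_self_eq_norm_sq ζ, real_inner_comm ζ ω, f3, f2, f1]
    ring
  have f5 : inner ℝ ζ o = inner ℝ ξ o := by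
    rw [← hζ, ← N.map_const (inner ℝ ξ o)]
    congr 1; ext t
    unfold Bv
    conv_lhs => rw [← ho (1 / rr e c t)]
    exact R.inn _ _ _
  have f6 : ζ ≠ 0 := by
    rintro h; rw [h, inner_zero_left] at f5; exact hδ f5.symm
  have f7 : 0 < N (fun t => inner ℝ (R.Bv e c ξ t) ξ) := by
    rw [hζ, f4, real_inner_comm, ← f1]; positivity
  by_contra hcon
  push Not at hcon
  have := hN.mono S (hBb ξ) (g := fun _ => 0) ⟨0, by simp⟩ (fun t ht => hcon t ht)
  rw [N.map_const] at this
  linarith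

end QRep

/-- positive dilation factor -/
def cq (q : ℚ) : ℚ := if q = 0 then 1 else |q|

theorem cq_pos (q : ℚ) : 0 < cq q := by
  unfold cq; split_ifs with h
  · norm_num
  · exact abs_pos.2 h

theorem cq_mul {a b : ℚ} (ha : a ≠ 0) (hb : b ≠ 0) : cq (a * b) = cq a * cq b := by
  simp [cq, ha, hb, abs_mul]

section dil
variable (N : MMean ℚ)

/-- dilation on bounded functions -/
noncomputable def dilE (q : ℚ) : GE N ℝ →ₗ[ℝ] GE N ℝ where
  toFun F := GE.mk N (fun x => F.1 (cq q * x)) ⟨F.2.choose, fun x => F.2.choose_spec _⟩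
  map_add' F G := rfl
  map_smul' r F := rfl

theorem dilE_norm (hN : ∀ q : ℚ, 0 < q → N.InvU (fun x => q * x)) (q : ℚ) (F : GE N ℝ) : ‖dilE N q F‖ = ‖F‖ := by
  rw [← UniformSpace.Completion.norm_coe, ← UniformSpace.Completion.norm_coe F,
    norm_eq_sqrt_real_inner, norm_eq_sqrt_real_inner (F : GH N ℝ), GE_inner, GE_inner]
  congr 1
  obtain ⟨C, hC⟩ := F.2
  exact hN (cq q) (cq_pos q) (fun x => inner ℝ (F.1 x) (F.1 x)) (BF.inner hC hC)

/-- dilation on the completion -/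
noncomputable def dilRep (hN : ∀ q : ℚ, 0 < q → N.InvU (fun x => q * x)) : QRep (GH N ℝ) where
  U q := ((⟨dilE N q, dilE_norm N hN q⟩ : GE N ℝ →ₗᵢ[ℝ] GE N ℝ).toContinuousLinearMap.completion :
    GH N ℝ →ₗ[ℝ] GH N ℝ)
  mul a b ha hb x := by
    simp only [ContinuousLinearMap.coe_coe]
    induction x using UniformSpace.Completion.induction_on with
    | hp => exact isClosed_eq (by fun_prop) (by fun_prop)
    | ih F =>
      simp only [ContinuousLinearMap.completion_apply_coe]
      congr 1
      apply Subtype.ext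
      funext x
      change F.1 (cq b * (cq a * x)) = F.1 (cq (a * b) * x)
      rw [cq_mul ha hb, mul_comm (cq a) (cq b), mul_assoc]
  norm a x := by
    simp only [ContinuousLinearMap.coe_coe]
    induction x using UniformSpace.Completion.induction_on with
    | hp => exact isClosed_eq (by fun_prop) (by fun_prop)
    | ih F =>
      simp only [ContinuousLinearMap.completion_apply_coe, UniformSpace.Completion.norm_coe]
      exact dilE_norm N hN a F
  one x := by
    simp only [ContinuousLinearMap.coe_coe]
    induction x using UniformSpace.Completion.induction_on with
    | hp => exact isClosed_eq (by fun_prop) (by fun_prop)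
    | ih F =>
      simp only [ContinuousLinearMap.completion_apply_coe]
      congr 1
      apply Subtype.ext
      funext x
      change F.1 (cq 1 * x) = F.1 x
      simp [cq]

theorem dilRep_coe (hN : ∀ q : ℚ, 0 < q → N.InvU (fun x => q * x)) (q : ℚ) (F : GE N ℝ) : (dilRep N hN).U q (F : GH N ℝ) = (dilE N q F : GH N ℝ) := by
  simp only [dilRep, ContinuousLinearMap.coe_coe, ContinuousLinearMap.completion_apply_coe]
  rfl

theorem recur (hN : ∀ q : ℚ, 0 < q → N.InvU (fun x => q * x)) {e c : ℚ} (he : e = 1 ∨ e = -1) (hc : c ≠ 0) (F : ℚ → ℝ) (hF : ∀ x, |F x| ≤ 1)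
    (h0 : 0 < N F) (S : Finset ℚ) :
    ∃ t ∉ S, 0 < N (fun x => F (cq (1 / QRep.rr e c t) * x) * F x) := by
  have hF' : ∃ C, ∀ x, ‖F x‖ ≤ C := ⟨1, hF⟩
  let ξ : GE N ℝ := GE.mk N F hF'
  let o : GE N ℝ := GE.mk N (fun _ => 1) ⟨1, by simp⟩
  have ho : ∀ q, (dilRep N hN).U q (o : GH N ℝ) = o := fun q => by
    rw [dilRep_coe]; rfl
  have ho1 : ‖(o : GH N ℝ)‖ = 1 := by
    rw [norm_eq_sqrt_real_inner, GE_inner]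
    have : (fun x => inner ℝ (o.1 x) (o.1 x)) = fun _ : ℚ => (1:ℝ) := by
      funext x; change inner ℝ (1:ℝ) (1:ℝ) = 1; simp
    rw [this, N.one, Real.sqrt_one]
  have hd : inner ℝ (ξ : GH N ℝ) (o : GH N ℝ) = N F := by
    rw [GE_inner]; congr 1; funext x; change inner ℝ (F x) (1:ℝ) = _; simp
  obtain ⟨t, ht, h⟩ := (dilRep N hN).thmA he hc (ξ : GH N ℝ) (o : GH N ℝ) ho ho1
    (by rw [hd]; exact h0.ne') S
  refine ⟨t, ht, ?_⟩
  rw [dilRep_coe, GE_inner] at h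
  convert h using 2
  funext x
  change _ = inner ℝ (F (cq _ * x)) (F x)
  simp [mul_comm]
end dil

open Classical in
theorem dens_le_one (Φ : ℕ → Finset ℕ) (Λ : Set ℕ) (K : ℕ) :
    (((Φ K).filter (fun n => n ∈ Λ)).card : ℝ) / ((Φ K).card : ℝ) ≤ 1 := by
  apply div_le_one_of_le₀ _ (by positivity)
  exact_mod_cast Finset.card_filter_le _ _

/-- averaging means -/
noncomputable def PhiM (Φ : ℕ → Finset ℕ) (hΦ : IsMulFolner Φ) (K : ℕ) : MMean ℚ :=
  MMean.avg (Φ K) (hΦ.1 K) (fun n => MMean.dirac (n:ℚ))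

theorem PhiM_apply (Φ : ℕ → Finset ℕ) (hΦ : IsMulFolner Φ) (K : ℕ) (f : ℚ → ℝ) :
    PhiM Φ hΦ K f = ((Φ K).card : ℝ)⁻¹ * ∑ n ∈ Φ K, f n := by
  rw [PhiM, MMean.avg_apply]; rfl

theorem PhiM_shift (Φ : ℕ → Finset ℕ) (hΦ : IsMulFolner Φ) (a : ℕ) (ha : 0 < a) (f : ℚ → ℝ)
    (hf : BF f) :
    Tendsto (fun K => PhiM Φ hΦ K (fun x => f (a * x)) - PhiM Φ hΦ K f) atTop (nhds 0) := by
  obtain ⟨C, hC⟩ := hf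
  have hC0 : 0 ≤ C := (abs_nonneg _).trans (hC 0)
  have hlim : Tendsto (fun K => 2 * C * (1 - ((Φ K ∩ (Φ K).image (fun n => a * n)).card : ℝ) /
      ((Φ K).card : ℝ))) atTop (nhds 0) := by
    have := ((hΦ.2.2 a ha).const_sub 1).const_mul (2*C)
    simpa using this
  refine squeeze_zero_norm (fun K => ?_) hlim
  have hc : (0:ℝ) < (Φ K).card := by exact_mod_cast (hΦ.1 K).card_pos
  rw [PhiM_apply, PhiM_apply, ← mul_sub]
  set A := Φ K with hA
  set A' := A.image (fun n => a * n) with hA'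
  have hinj : Function.Injective (fun n : ℕ => a * n) := fun x y h => Nat.eq_of_mul_eq_mul_left ha h
  have e1 : ∑ n ∈ A, f (a * (n:ℚ)) = ∑ n ∈ A', f n := by
    rw [hA', Finset.sum_image (fun x _ y _ h => hinj h)]
    push_cast; rfl
  have hcard : A'.card = A.card := Finset.card_image_of_injective _ hinj
  have e2 : ∑ n ∈ A', f n - ∑ n ∈ A, f n = ∑ n ∈ A' \ A, f n - ∑ n ∈ A \ A', f n := by
    exact (Finset.sum_sdiff_sub_sum_sdiff (f := fun n : ℕ => f n)).symm
  have bnd : ∀ s : Finset ℕ, |∑ n ∈ s, f n| ≤ C * s.card := fun s => by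
    refine (Finset.abs_sum_le_sum_abs _ _).trans ((Finset.sum_le_sum (f := fun n : ℕ => |f n|) (g := fun _ => C) fun n _ => hC (n:ℚ)).trans ?_)
    simp [mul_comm]
  have c1 : ((A' \ A).card : ℝ) = A.card - (A ∩ A').card := by
    rw [← hcard, ← Finset.card_sdiff_add_card_inter A' A, Finset.inter_comm]; push_cast; ring
  have c2 : ((A \ A').card : ℝ) = A.card - (A ∩ A').card := by
    rw [← Finset.card_sdiff_add_card_inter A A']; push_cast; ring
  rw [e1, e2, Real.norm_eq_abs, abs_mul, abs_of_pos (inv_pos.2 hc), inv_mul_le_iff₀ hc]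
  refine (abs_sub _ _).trans ?_
  have b1 := bnd (A' \ A)
  have b2 := bnd (A \ A')
  rw [c1] at b1; rw [c2] at b2
  have : (A.card:ℝ) * (2 * C * (1 - (A ∩ A').card / A.card)) = 2 * C * (A.card - (A ∩ A').card) := by
    field_simp
  rw [this]; linarith

open Classical in
theorem transfer (Λ : Set ℕ) (Φ : ℕ → Finset ℕ) (hΦ : IsMulFolner Φ) (hdens : 0 < upMulDens Φ Λ)
    {e c : ℚ} (he : e = 1 ∨ e = -1) (hc : c ≠ 0) (S : Finset ℚ) :
    ∃ t ∉ S, ∀ a b : ℕ, 0 < a → 0 < b → |QRep.rr e c t| = a / b →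
      0 < upMulDens Φ ({x : ℕ | a * x ∈ Λ} ∩ {x : ℕ | b * x ∈ Λ}) := by
  have hbdd : ∀ Λ' : Set ℕ, IsBoundedUnder (· ≤ ·) atTop
      (fun K => (((Φ K).filter (fun n => n ∈ Λ')).card : ℝ) / ((Φ K).card : ℝ)) := fun Λ' =>
    isBoundedUnder_of ⟨1, fun K => dens_le_one Φ Λ' K⟩
  have hcob : ∀ Λ' : Set ℕ, IsCoboundedUnder (· ≤ ·) atTop
      (fun K => (((Φ K).filter (fun n => n ∈ Λ')).card : ℝ) / ((Φ K).card : ℝ)) := fun Λ' =>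
    IsBoundedUnder.isCoboundedUnder_le (isBoundedUnder_of ⟨0, fun K => by
      change (0:ℝ) ≤ _; positivity⟩)
  set d := upMulDens Φ Λ with hd
  have hfr : ∃ᶠ K in atTop, K ∈ {K | d/2 <
      (((Φ K).filter (fun n => n ∈ Λ)).card : ℝ) / ((Φ K).card : ℝ)} :=
    frequently_lt_of_lt_limsup (hcob Λ) (by change d/2 < upMulDens Φ Λ; linarith)
  rw [frequently_mem_iff_neBot] at hfr
  let u := Ultrafilter.of (atTop ⊓ 𝓟 {K | d/2 <
      (((Φ K).filter (fun n => n ∈ Λ)).card : ℝ) / ((Φ K).card : ℝ)})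
  have hu1 : (u : Filter ℕ) ≤ atTop := (Ultrafilter.of_le _).trans inf_le_left
  have hu2 : ∀ᶠ K in (u : Filter ℕ), d/2 <
      (((Φ K).filter (fun n => n ∈ Λ)).card : ℝ) / ((Φ K).card : ℝ) :=
    (Ultrafilter.of_le _).trans inf_le_right (mem_principal_self _)
  obtain ⟨N, hNl⟩ := MMean.exists_ulim u (PhiM Φ hΦ)
  have hNat : ∀ a : ℕ, 0 < a → ∀ f, BF f → N (fun x => f (a * x)) = N f := by
    intro a ha f hf
    have h1 := (hNl _ (hf.comp (fun x => (a:ℚ) * x))).sub (hNl f hf)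
    have h2 := (PhiM_shift Φ hΦ a ha f hf).mono_left hu1
    have := tendsto_nhds_unique h1 h2
    linarith
  have hN : ∀ q : ℚ, 0 < q → N.InvU (fun x => q * x) := by
    intro q hq f hf
    have hden : 0 < q.den := q.den_pos
    have hnum : 0 < q.num := Rat.num_pos.2 hq
    have h1 := hNat q.den hden _ (hf.comp (fun x => q * x))
    have h2 := hNat q.num.toNat (by omega) f hf
    rw [← h1, ← h2]
    congr 1; funext x; congr 1
    have : ((q.num.toNat : ℕ) : ℚ) = q.num := by
      have : ((q.num.toNat : ℤ) : ℚ) = q.num := by rw [Int.toNat_of_nonneg hnum.le]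
      exact_mod_cast this
    rw [this, ← mul_assoc, Rat.mul_den_eq_num]
  let F : ℚ → ℝ := fun x => if ∃ n ∈ Λ, (n:ℚ) = x then 1 else 0
  have hFn : ∀ n : ℕ, F n = if n ∈ Λ then 1 else 0 := fun n => by
    simp [F]
  have hF : ∀ x, |F x| ≤ 1 := fun x => by simp only [F]; split_ifs <;> simp
  have hFb : BF F := ⟨1, hF⟩
  have h0 : 0 < N F := by
    have : d/2 ≤ N F := by
      refine ge_of_tendsto (hNl F hFb) (hu2.mono fun K hK => ?_)
      rw [PhiM_apply]
      simp only [hFn]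
      rw [Finset.sum_boole, inv_mul_eq_div]; exact hK.le
    linarith
  obtain ⟨t, ht, hpos⟩ := recur N hN he hc F hF h0 S
  refine ⟨t, ht, fun a b ha hb hab => ?_⟩
  have hb' : (0:ℚ) < b := by exact_mod_cast hb
  have ha' : (0:ℚ) < a := by exact_mod_cast ha
  have hcq : cq (1 / QRep.rr e c t) = b / a := by
    have : QRep.rr e c t ≠ 0 := by
      intro h; rw [h, abs_zero] at hab
      have : (0:ℚ) < a / b := by positivity
      linarith
    simp only [cq, one_div, inv_eq_zero, this, if_false, abs_inv, hab, inv_div]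
  rw [hcq] at hpos
  have hbF : BF (fun x : ℚ => F (b / a * x) * F x) := ⟨1, fun x => by
    rw [abs_mul]; exact mul_le_one₀ (hF _) (abs_nonneg _) (hF _)⟩
  rw [← hNat a ha _ hbF] at hpos
  obtain ⟨Λ', hΛ'⟩ : ∃ X : Set ℕ, X = {x : ℕ | a * x ∈ Λ} ∩ {x : ℕ | b * x ∈ Λ} := ⟨_, rfl⟩
  rw [← hΛ']
  have hlim := hNl _ (hbF.comp (fun x => (a:ℚ) * x))
  have heq : ∀ K, PhiM Φ hΦ K (fun x => F (b / a * (a * x)) * F (a * x)) =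
      (((Φ K).filter (fun n => n ∈ Λ')).card : ℝ) / ((Φ K).card : ℝ) := by
    intro K
    rw [PhiM_apply]
    have : ∀ n : ℕ, F (b / a * (a * n)) * F (a * n) = if n ∈ Λ' then 1 else 0 := by
      intro n
      have e1 : (b:ℚ) / a * (a * n) = ((b * n : ℕ) : ℚ) := by push_cast; field_simp
      have e2 : (a:ℚ) * n = ((a * n : ℕ) : ℚ) := by push_cast; rfl
      rw [e1, e2, hFn, hFn]
      by_cases h1 : b * n ∈ Λ <;> by_cases h2 : a * n ∈ Λ <;> simp [h1, h2, hΛ']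
    simp only [this]
    rw [Finset.sum_boole, inv_mul_eq_div]
  simp only [heq] at hlim
  set L := N (fun x => F (b / a * (a * x)) * F (a * x)) with hL
  have hev : ∀ᶠ K in (u : Filter ℕ), L/2 <
      (((Φ K).filter (fun n => n ∈ Λ')).card : ℝ) / ((Φ K).card : ℝ) :=
    hlim.eventually (lt_mem_nhds (by linarith))
  have hfr' : ∃ᶠ K in atTop, L/2 ≤
      (((Φ K).filter (fun n => n ∈ Λ')).card : ℝ) / ((Φ K).card : ℝ) :=
    (hev.frequently.filter_mono hu1).mono fun K hK => hK.le
  have := le_limsup_of_frequently_le hfr' (hbdd Λ')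
  change L/2 ≤ upMulDens Φ Λ' at this
  linarith

theorem bad_fin {e c : ℚ} (hc : c ≠ 0) : ∃ S : Finset ℚ, 0 ∈ S ∧ 1 ∈ S ∧ -1 ∈ S ∧
    ∀ t ∉ S, |QRep.rr e c t| ≠ 1 := by
  classical
  open Polynomial in
  let P : ℚ → ℚ[X] := fun s => Polynomial.C c * X^2 + Polynomial.C s * X + Polynomial.C (c * e)
  have hP : ∀ s, P s ≠ 0 := fun s h => by
    have h2 := congrArg (fun p => Polynomial.coeff p 2) h
    simp [P, Polynomial.coeff_X, Polynomial.coeff_C] at h2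
    exact hc h2
  refine ⟨{0, 1, -1} ∪ (P 1).roots.toFinset ∪ (P (-1)).roots.toFinset, by simp, by simp, by simp, ?_⟩
  intro t ht h
  simp only [Finset.mem_union, Finset.mem_insert, Finset.mem_singleton, Multiset.mem_toFinset,
    Polynomial.mem_roots (hP _), not_or] at ht
  obtain ⟨⟨⟨h0, -, -⟩, h1⟩, h2⟩ := ht
  rcases (abs_eq zero_le_one).1 h with h | h
  · apply h2
    unfold QRep.rr at h
    rw [div_eq_iff h0] at h
    simp [P]; linarith
  · apply h1
    unfold QRep.rr at h
    rw [div_eq_iff h0] at h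
    simp [P]; linarith

/-- **Theorem 1.6 (parametric form of density regularity of Pythagorean pairs).**
If `Λ` has positive upper multiplicative density with respect to `Φ`, then for all
`ℓ, ℓ' ∈ ℕ`: (1) there are `m > n` with `ℓ(m² − n²) ≠ ℓ' m n` and
`d̄_Φ((ℓ(m² − n²))⁻¹Λ ∩ (ℓ' m n)⁻¹Λ) > 0`; (2) there are `m, n` with
`ℓ(m² + n²) ≠ ℓ' m n` and `d̄_Φ((ℓ(m² + n²))⁻¹Λ ∩ (ℓ' m n)⁻¹Λ) > 0`. -/
theorem pythagorean_pairs_density_parametric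
    (Λ : Set ℕ) (hΛpos : ∀ n ∈ Λ, 0 < n)
    (Φ : ℕ → Finset ℕ) (hΦ : IsMulFolner Φ) (hdens : 0 < upMulDens Φ Λ)
    (ℓ ℓ' : ℕ) (hℓ : 0 < ℓ) (hℓ' : 0 < ℓ') :
    (∃ m n : ℕ, 0 < n ∧ n < m ∧ ℓ * (m ^ 2 - n ^ 2) ≠ ℓ' * (m * n) ∧
      0 < upMulDens Φ ({x : ℕ | ℓ * (m ^ 2 - n ^ 2) * x ∈ Λ} ∩
        {x : ℕ | ℓ' * (m * n) * x ∈ Λ})) ∧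
    (∃ m n : ℕ, 0 < m ∧ 0 < n ∧ ℓ * (m ^ 2 + n ^ 2) ≠ ℓ' * (m * n) ∧
      0 < upMulDens Φ ({x : ℕ | ℓ * (m ^ 2 + n ^ 2) * x ∈ Λ} ∩
        {x : ℕ | ℓ' * (m * n) * x ∈ Λ})) := by
  have hl : (0:ℚ) < ℓ := by exact_mod_cast hℓ
  have hl' : (0:ℚ) < ℓ' := by exact_mod_cast hℓ'
  have hc : (ℓ:ℚ) / ℓ' ≠ 0 := by positivity
  have rep : ∀ t : ℚ, t ≠ 0 → ∃ p q : ℕ, 0 < p ∧ 0 < q ∧ |t| = p / q := by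
    intro t ht
    refine ⟨t.num.natAbs, t.den, Int.natAbs_pos.2 (Rat.num_ne_zero.2 ht), t.den_pos, ?_⟩
    conv_lhs => rw [← Rat.num_div_den t]
    rw [abs_div, Nat.abs_cast]
    congr 1
    rw [← Int.cast_abs, Int.abs_eq_natAbs]; simp
  constructor
  · obtain ⟨S, s0, s1, s2, hS⟩ := bad_fin (e := -1) hc
    obtain ⟨t, ht, h⟩ := transfer Λ Φ hΦ hdens (e := -1) (Or.inr rfl) hc S
    have t0 : t ≠ 0 := fun h => ht (h ▸ s0)
    have t1 : t ≠ 1 := fun h => ht (h ▸ s1)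
    have t2 : t ≠ -1 := fun h => ht (h ▸ s2)
    obtain ⟨p, q, hp, hq, hpq⟩ := rep t t0
    have hp' : (0:ℚ) < p := by exact_mod_cast hp
    have hq' : (0:ℚ) < q := by exact_mod_cast hq
    have hne : p ≠ q := by
      rintro rfl
      rw [div_self hp'.ne'] at hpq
      rcases (abs_eq zero_le_one).1 hpq with h | h
      · exact t1 h
      · exact t2 h
    have habs : |QRep.rr (-1) (ℓ / ℓ') t| = ℓ * |(p:ℚ)^2 - q^2| / (ℓ' * (p * q)) := by
      unfold QRep.rr
      rw [abs_div, abs_mul, abs_of_pos (by positivity : (0:ℚ) < ℓ / ℓ'), ← sq_abs, hpq]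
      have : ((p:ℚ)/q)^2 + -1 = (p^2 - q^2) / q^2 := by field_simp; ring
      rw [this, abs_div, abs_of_pos (by positivity : (0:ℚ) < (q:ℚ)^2)]
      field_simp
    have fin : ∀ m n : ℕ, 0 < n → n < m →
        |QRep.rr (-1) (ℓ / ℓ') t| = ((ℓ * (m^2 - n^2) : ℕ) : ℚ) / ((ℓ' * (m * n) : ℕ) : ℚ) →
        (∃ m n : ℕ, 0 < n ∧ n < m ∧ ℓ * (m ^ 2 - n ^ 2) ≠ ℓ' * (m * n) ∧
      0 < upMulDens Φ ({x : ℕ | ℓ * (m ^ 2 - n ^ 2) * x ∈ Λ} ∩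
        {x : ℕ | ℓ' * (m * n) * x ∈ Λ})) := by
      intro m n hn hnm hr
      have hm : 0 < m := hn.trans hnm
      have hsub : 0 < m^2 - n^2 := Nat.sub_pos_of_lt (Nat.pow_lt_pow_left hnm two_ne_zero)
      refine ⟨m, n, hn, hnm, fun heq => ?_, h _ _ (by positivity) (by positivity) hr⟩
      apply hS t ht
      rw [hr, heq, div_self]
      have : 0 < ℓ' * (m * n) := by positivity
      exact_mod_cast this.ne'
    rcases lt_or_gt_of_ne hne with hlt | hlt
    · refine fin q p hp hlt ?_
      have : p^2 ≤ q^2 := Nat.pow_le_pow_left hlt.le 2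
      rw [habs, abs_sub_comm, abs_of_nonneg (by
        rw [sub_nonneg]; exact_mod_cast this)]
      push_cast [Nat.cast_sub this]
      rw [mul_comm (p:ℚ) q]
    · refine fin p q hq hlt ?_
      have : q^2 ≤ p^2 := Nat.pow_le_pow_left hlt.le 2
      rw [habs, abs_of_nonneg (by
        rw [sub_nonneg]; exact_mod_cast this)]
      push_cast [Nat.cast_sub this]
      rfl
  · obtain ⟨S, s0, s1, s2, hS⟩ := bad_fin (e := 1) hc
    obtain ⟨t, ht, h⟩ := transfer Λ Φ hΦ hdens (e := 1) (Or.inl rfl) hc S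
    have t0 : t ≠ 0 := fun h => ht (h ▸ s0)
    obtain ⟨p, q, hp, hq, hpq⟩ := rep t t0
    have hp' : (0:ℚ) < p := by exact_mod_cast hp
    have hq' : (0:ℚ) < q := by exact_mod_cast hq
    have hr : |QRep.rr 1 (ℓ / ℓ') t| = ((ℓ * (p^2 + q^2) : ℕ) : ℚ) / ((ℓ' * (p * q) : ℕ) : ℚ) := by
      unfold QRep.rr
      rw [abs_div, abs_mul, abs_of_pos (by positivity : (0:ℚ) < ℓ / ℓ'),
        abs_of_pos (by positivity : (0:ℚ) < t^2 + 1), ← sq_abs, hpq]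
      push_cast
      field_simp
    refine ⟨p, q, hp, hq, fun heq => ?_, h _ _ (by positivity) (by positivity) hr⟩
    apply hS t ht
    rw [hr, heq, div_self]
    have : 0 < ℓ' * (p * q) := by positivity
    exact_mod_cast this.ne'
end
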